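/- For every integer k ≥ 2 and every real p > p̄_k, where p̄_k is the smallest even integer that is greater than or equal to q_k, there exists a constant C = C(k,p) < ∞ such that ‖E_k f‖_{L^p(ℝ^N)} ≤ C · ‖f‖_{L^∞([0,1]²)} for every f ∈ L^∞([0,1]²). -/

import Mathlib

open MeasureTheory Real Set
open scoped ENNReal

noncomputable section

/-- Index set for multi-indices `β = (β₁, β₂) ∈ ℕ²` with `1 ≤ β₁ + β₂ ≤ k`;
its cardinality is `N = (k+1)(k+2)/2 − 1`. -/
def Idx (k : ℕ) : Type :=
  {β : Fin (k + 1) × Fin (k + 1) // 1 ≤ (β.1 : ℕ) + (β.2 : ℕ) ∧ (β.1 : ℕ) + (β.2 : ℕ) ≤ k}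

instance (k : ℕ) : Fintype (Idx k) := by unfold Idx; infer_instance

/-- The phase polynomial `P(ξ; x) = ∑_{1 ≤ |β| ≤ k} x_β ξ₁^{β₁} ξ₂^{β₂}`. -/
def Pphase (k : ℕ) (x : Idx k → ℝ) (ξ : Fin 2 → ℝ) : ℝ :=
  ∑ β : Idx k, x β * ξ 0 ^ (β.1.1 : ℕ) * ξ 1 ^ (β.1.2 : ℕ)

/-- `E_k1(x) = ∫_{[0,1]²} e(P(ξ; x)) dξ` with `e(t) = exp(2πit)`. -/
def Eone (k : ℕ) (x : Idx k → ℝ) : ℂ :=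
  ∫ ξ in Icc (0 : Fin 2 → ℝ) 1, Complex.exp (2 * Real.pi * Complex.I * (Pphase k x ξ))

/-- The Fourier extension operator `E_k f(x) = ∫_{[0,1]²} f(ξ) e(P(ξ; x)) dξ`. -/
def Eext (k : ℕ) (f : (Fin 2 → ℝ) → ℂ) (x : Idx k → ℝ) : ℂ :=
  ∫ ξ in Icc (0 : Fin 2 → ℝ) 1, f ξ * Complex.exp (2 * Real.pi * Complex.I * (Pphase k x ξ))

/-!
The power `(E_k f)^s` is the oscillatory integral, over families of `s` points of the unit square,
whose phase is the sum of the moment vectors of the points. On the families of weight at least `κ`,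
the weight being the largest determinant of the monomials of degree less than `k` at points of the
family times the largest Vandermonde determinant of `k` first coordinates, Plancherel's inequality
(proved with a Gaussian regularisation) reduces the mean square of this integral to a change of
variables bound for the map sending two families to the difference of their sums of moment vectors.
This map is of bounded multiplicity in suitably chosen coordinates, each of them being algebraic
over the values of the map, and an exchange argument makes the two maximal determinants share their
points, so that the Jacobian is bounded below by the weight. It is then enough to integrate negative
powers of the weight over the remaining coordinates. For the monomial determinant this integrability
is dual to the integrability in `c` of powers of the volume of the set `{|P_c| ≤ 1}` for the
polynomials `P_c` of degree less than `k`, proved by induction on the degree; the exponent needed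
there is what `q_k` accounts for.

Families of weight less than `κ` have volume at most `C κ ^ c`, while the others contribute at most
`D κ ^ (-η)` to the mean square with `η` arbitrarily small. Summing over dyadic values of the
integral gives a finite integral of `|E_k f| ^ p` for all `p > 2 s`.
-/

/-! ### Negative powers of polynomials -/

section NegativePowers

lemma ennreal_rpow_neg_le_rpow_neg {a b : ℝ≥0∞} {τ : ℝ} (hτ : 0 ≤ τ) (hab : a ≤ b) :
    b ^ (-τ) ≤ a ^ (-τ) := by
  simpa only [ENNReal.rpow_neg, ENNReal.inv_le_inv] using ENNReal.rpow_le_rpow hab hτ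

lemma lintegral_enorm_rpow_ne_top {b : ℝ} (hb : b < 1) {K : Set ℝ} (hK : IsCompact K) :
    ∫⁻ t in K, ‖t‖ₑ ^ (-b) ≠ ⊤ := by
  have hloc : LocallyIntegrable (fun t : ℝ ↦ ‖t‖ ^ (-b)) :=
    locallyIntegrable_of_norm_le_rpow (C := 1) (by simp) (by simpa using hb)
      (ae_of_all _ fun t ↦ by
        rw [one_mul, Real.norm_of_nonneg (Real.rpow_nonneg (norm_nonneg t) _)])
      (measurable_norm.pow_const _).aestronglyMeasurable
  have hne : ∀ᵐ t : ℝ ∂volume.restrict K, t ≠ 0 := ae_restrict_of_ae (Measure.ae_ne volume 0)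
  have heq : ∫⁻ t in K, ‖t‖ₑ ^ (-b) = ∫⁻ t in K, ‖‖t‖ ^ (-b)‖ₑ := by
    refine lintegral_congr_ae ?_
    filter_upwards [hne] with t ht
    rw [Real.enorm_eq_ofReal (Real.rpow_nonneg (norm_nonneg t) _),
      ← ENNReal.ofReal_rpow_of_pos (norm_pos_iff.2 ht), ofReal_norm]
  exact heq ▸ ((hloc.integrableOn_isCompact hK).2).ne

lemma exists_lintegral_enorm_sub_rpow_le {b : ℝ} (hb0 : 0 ≤ b) (hb : b < 1) :
    ∃ B : ℝ≥0∞, B ≠ ⊤ ∧ ∀ x : ℝ, ∫⁻ t in Icc (0 : ℝ) 1, ‖t - x‖ₑ ^ (-b) ≤ B := by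
  set g : ℝ → ℝ≥0∞ := (Icc (-1 : ℝ) 1).indicator fun t ↦ ‖t‖ₑ ^ (-b) with hg
  have hpoint : ∀ t, ‖t‖ₑ ^ (-b) ≤ 1 + g t := by
    intro t
    by_cases ht : t ∈ Icc (-1 : ℝ) 1
    · simp [hg, ht]
    have hle : 1 ≤ ‖t‖ₑ := by
      rw [Real.enorm_eq_ofReal_abs, ENNReal.one_le_ofReal]
      exact (not_le.1 fun h ↦ ht (abs_le.1 h)).le
    calc ‖t‖ₑ ^ (-b) ≤ 1 ^ (-b) := ennreal_rpow_neg_le_rpow_neg hb0 hle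
      _ ≤ 1 + g t := by simp
  refine ⟨1 + ∫⁻ t, g t, ?_, fun x ↦ ?_⟩
  · rw [hg, lintegral_indicator measurableSet_Icc]
    exact ENNReal.add_ne_top.2 ⟨by simp, lintegral_enorm_rpow_ne_top hb isCompact_Icc⟩
  · calc ∫⁻ t in Icc (0 : ℝ) 1, ‖t - x‖ₑ ^ (-b)
        ≤ ∫⁻ t in Icc (0 : ℝ) 1, (1 + g (t - x)) := lintegral_mono fun t ↦ hpoint (t - x)
      _ = 1 + ∫⁻ t in Icc (0 : ℝ) 1, g (t - x) := by
          rw [lintegral_add_left measurable_const]; simp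
      _ ≤ 1 + ∫⁻ t, g (t - x) := by gcongr; exact Measure.restrict_le_self
      _ = 1 + ∫⁻ t, g t := by rw [lintegral_sub_right_eq_self g x]

lemma exists_lintegral_enorm_sub_div_rpow_le {b : ℝ} (hb0 : 0 ≤ b) (hb : b < 1) :
    ∃ B : ℝ≥0∞, B ≠ ⊤ ∧ ∀ z : ℂ, ∀ t₀ ∈ Icc (0 : ℝ) 1,
      ∫⁻ t in Icc (0 : ℝ) 1, (‖(t₀ : ℂ) - z‖ₑ / ‖(t : ℂ) - z‖ₑ) ^ b ≤ B := by
  obtain ⟨B, hB, hBx⟩ := exists_lintegral_enorm_sub_rpow_le hb0 hb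
  refine ⟨B + 1, by finiteness, fun z t₀ ht₀ ↦ ?_⟩
  have hpoint : ∀ t ∈ Icc (0 : ℝ) 1,
      (‖(t₀ : ℂ) - z‖ₑ / ‖(t : ℂ) - z‖ₑ) ^ b ≤ ‖t - z.re‖ₑ ^ (-b) + 1 := by
    intro t ht
    have hnum : ‖(t₀ : ℂ) - z‖ₑ ≤ 1 + ‖(t : ℂ) - z‖ₑ := by
      have hsub : ‖((t₀ - t : ℝ) : ℂ)‖ₑ ≤ 1 := by
        rw [← ofReal_norm, Complex.norm_real, ENNReal.ofReal_le_one, Real.norm_eq_abs, abs_le]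
        constructor <;> linarith [ht₀.1, ht₀.2, ht.1, ht.2]
      calc ‖(t₀ : ℂ) - z‖ₑ = ‖((t₀ - t : ℝ) : ℂ) + ((t : ℂ) - z)‖ₑ := by push_cast; congr 1; ring
        _ ≤ 1 + ‖(t : ℂ) - z‖ₑ := (enorm_add_le _ _).trans (by gcongr)
    have hden : ‖t - z.re‖ₑ ≤ ‖(t : ℂ) - z‖ₑ := by
      rw [Real.enorm_eq_ofReal_abs, ← ofReal_norm]
      exact ENNReal.ofReal_le_ofReal (by simpa using Complex.abs_re_le_norm ((t : ℂ) - z))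
    calc (‖(t₀ : ℂ) - z‖ₑ / ‖(t : ℂ) - z‖ₑ) ^ b
        ≤ ((1 + ‖(t : ℂ) - z‖ₑ) / ‖(t : ℂ) - z‖ₑ) ^ b := by gcongr
      _ ≤ (‖t - z.re‖ₑ⁻¹ + 1) ^ b := by
          rw [ENNReal.add_div, one_div]
          gcongr
          exact ENNReal.div_self_le_one
      _ ≤ ‖t - z.re‖ₑ⁻¹ ^ b + 1 ^ b := ENNReal.rpow_add_le_add_rpow _ _ hb0 hb.le
      _ = ‖t - z.re‖ₑ ^ (-b) + 1 := by rw [ENNReal.inv_rpow, ← ENNReal.rpow_neg, ENNReal.one_rpow]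
  calc ∫⁻ t in Icc (0 : ℝ) 1, (‖(t₀ : ℂ) - z‖ₑ / ‖(t : ℂ) - z‖ₑ) ^ b
      ≤ ∫⁻ t in Icc (0 : ℝ) 1, (‖t - z.re‖ₑ ^ (-b) + 1) :=
        setLIntegral_mono' measurableSet_Icc hpoint
    _ = (∫⁻ t in Icc (0 : ℝ) 1, ‖t - z.re‖ₑ ^ (-b)) + 1 := by
        rw [lintegral_add_right _ measurable_const]; simp
    _ ≤ B + 1 := by gcongr; exact hBx z.re

lemma multiset_prod_rpow_le_one_add_sum (s : Multiset ℝ≥0∞) {d : ℕ} (hs : s.card ≤ d) {c : ℝ}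
    (hc : 0 ≤ c) : s.prod ^ c ≤ 1 + (s.map fun a ↦ a ^ (c * d)).sum := by
  by_cases hle : ∀ a ∈ s, a ≤ 1
  · calc s.prod ^ c ≤ 1 ^ c := by
          gcongr; simpa using Multiset.prod_le_pow_card s 1 hle
      _ ≤ 1 + (s.map fun a ↦ a ^ (c * d)).sum := by simp
  push Not at hle
  obtain ⟨b, hb, hb1⟩ := hle
  obtain ⟨a, ha, hmax⟩ := s.toFinset.exists_max_image id ⟨b, by simpa using hb⟩
  simp only [Multiset.mem_toFinset, id] at ha hmax
  calc s.prod ^ c ≤ (a ^ d) ^ c := by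
        gcongr
        exact (Multiset.prod_le_pow_card s a hmax).trans
          (pow_le_pow_right₀ (hb1.le.trans (hmax b hb)) hs)
    _ = a ^ (c * d) := by rw [← ENNReal.rpow_natCast, ← ENNReal.rpow_mul, mul_comm]
    _ ≤ (s.map fun a ↦ a ^ (c * d)).sum :=
        Multiset.le_sum_of_mem (Multiset.mem_map_of_mem (fun a ↦ a ^ (c * d)) ha)
    _ ≤ 1 + (s.map fun a ↦ a ^ (c * d)).sum := le_add_self

lemma multiset_prod_map_ne_top {α : Type*} (s : Multiset α) {f : α → ℝ≥0∞} (hf : ∀ a, f a ≠ ⊤) :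
    (s.map f).prod ≠ ⊤ := by
  induction s using Multiset.induction_on with
  | empty => simp
  | cons a s ih => simpa using ENNReal.mul_ne_top (hf a) ih

lemma multiset_prod_map_div {α : Type*} (s : Multiset α) (f : α → ℝ≥0∞) {g : α → ℝ≥0∞}
    (hg : ∀ a, g a ≠ ⊤) :
    (s.map fun a ↦ f a / g a).prod = (s.map f).prod / (s.map g).prod := by
  induction s using Multiset.induction_on with
  | empty => simp
  | cons a s ih =>
    rw [Multiset.map_cons, Multiset.prod_cons, ih]
    simp only [Multiset.map_cons, Multiset.prod_cons, div_eq_mul_inv,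
      ENNReal.mul_inv (Or.inr (multiset_prod_map_ne_top s hg)) (Or.inl (hg a))]
    ring

lemma enorm_eval_eq_leadingCoeff_mul_prod_roots (p : Polynomial ℝ) (t : ℝ) :
    ‖p.eval t‖ₑ = ‖p.leadingCoeff‖ₑ *
      ((p.map Complex.ofRealHom).roots.map fun z ↦ ‖(t : ℂ) - z‖ₑ).prod := by
  have hprod (s : Multiset ℂ) : ‖s.prod‖ₑ = (s.map enorm).prod := by
    induction s using Multiset.induction_on with
    | empty => simp
    | cons a s ih => simp [enorm_mul, ih]
  have hreal (x : ℝ) : ‖x‖ₑ = ‖(x : ℂ)‖ₑ := by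
    rw [← ofReal_norm, ← ofReal_norm, Complex.norm_real]
  have heval : (p.map Complex.ofRealHom).eval (t : ℂ) = (p.eval t : ℝ) := by
    rw [Polynomial.eval_map]
    exact Polynomial.eval₂_at_apply Complex.ofRealHom t
  rw [hreal, ← heval, (IsAlgClosed.splits _).eval_eq_prod_roots, enorm_mul, hprod,
    Multiset.map_map, Polynomial.leadingCoeff_map, hreal]
  rfl

lemma enorm_eval_inv_eq {p : Polynomial ℝ} {t₀ : ℝ} (ht₀ : p.eval t₀ ≠ 0) (t : ℝ) :
    ‖p.eval t‖ₑ⁻¹ = ‖p.eval t₀‖ₑ⁻¹ * ((p.map Complex.ofRealHom).roots.map fun z ↦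
      ‖(t₀ : ℂ) - z‖ₑ / ‖(t : ℂ) - z‖ₑ).prod := by
  have hnum : ‖p.eval t₀‖ₑ ≠ 0 := by simpa using ht₀
  rw [multiset_prod_map_div _ _ fun z ↦ enorm_ne_top,
    enorm_eval_eq_leadingCoeff_mul_prod_roots p t]
  rw [enorm_eval_eq_leadingCoeff_mul_prod_roots p t₀] at hnum ⊢
  obtain ⟨hlead, hroots⟩ := mul_ne_zero_iff.1 hnum
  rw [ENNReal.mul_inv (Or.inl hlead) (Or.inl enorm_ne_top),
    ENNReal.mul_inv (Or.inl hlead) (Or.inl enorm_ne_top), mul_assoc, ← mul_div_assoc,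
    ENNReal.inv_mul_cancel hroots (multiset_prod_map_ne_top _ fun z ↦ enorm_ne_top), one_div]

/- After normalising at a point `t₀`, the integrand is a product of the ratios
`‖t₀ - z‖ / ‖t - z‖` over the complex roots `z`, and only the largest ratio matters. -/
lemma exists_lintegral_enorm_polynomial_eval_rpow_le (d : ℕ) {c : ℝ} (hc : 0 < c)
    (hcd : c * d < 1) :
    ∃ C : ℝ≥0∞, C ≠ ⊤ ∧ ∀ p : Polynomial ℝ, p.natDegree ≤ d → ∀ t₀ ∈ Icc (0 : ℝ) 1,
      ∫⁻ t in Icc (0 : ℝ) 1, ‖p.eval t‖ₑ ^ (-c) ≤ C * ‖p.eval t₀‖ₑ ^ (-c) := by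
  obtain ⟨B, hB, hBz⟩ := exists_lintegral_enorm_sub_div_rpow_le (b := c * d) (by positivity) hcd
  refine ⟨1 + d * B, by finiteness, fun p hp t₀ ht₀ ↦ ?_⟩
  by_cases h0 : p.eval t₀ = 0
  · simp [h0, ENNReal.zero_rpow_of_neg (neg_lt_zero.2 hc), ENNReal.mul_top]
  set Z := (p.map Complex.ofRealHom).roots
  set r : ℝ → ℂ → ℝ≥0∞ := fun t z ↦ ‖(t₀ : ℂ) - z‖ₑ / ‖(t : ℂ) - z‖ₑ
  have hr_meas : ∀ z, Measurable fun t ↦ r t z ^ (c * d) := fun z ↦ by fun_prop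
  have hcard : Z.card ≤ d := (Polynomial.card_roots' _).trans (Polynomial.natDegree_map_le.trans hp)
  have hpoint : ∀ t, ‖p.eval t‖ₑ ^ (-c) ≤
      ‖p.eval t₀‖ₑ ^ (-c) * (1 + (Z.map fun z ↦ r t z ^ (c * d)).sum) := by
    intro t
    rw [ENNReal.rpow_neg, ← ENNReal.inv_rpow, enorm_eval_inv_eq h0, ENNReal.mul_rpow_of_nonneg _ _
      hc.le, ENNReal.inv_rpow, ← ENNReal.rpow_neg]
    gcongr
    simpa only [Multiset.map_map, Function.comp_def] using
      multiset_prod_rpow_le_one_add_sum (Z.map (r t)) (by simpa using hcard) hc.le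
  have hsum (s : Multiset ℂ) :
      ∫⁻ t in Icc (0 : ℝ) 1, (s.map fun z ↦ r t z ^ (c * d)).sum ≤ s.card * B := by
    induction s using Multiset.induction_on with
    | empty => simp
    | cons z s ih =>
      simp only [Multiset.map_cons, Multiset.sum_cons, Multiset.card_cons]
      rw [lintegral_add_left (hr_meas z), Nat.cast_add_one, add_mul, one_mul, add_comm]
      exact add_le_add ih (hBz z t₀ ht₀)
  calc ∫⁻ t in Icc (0 : ℝ) 1, ‖p.eval t‖ₑ ^ (-c)
      ≤ ∫⁻ t in Icc (0 : ℝ) 1,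
          ‖p.eval t₀‖ₑ ^ (-c) * (1 + (Z.map fun z ↦ r t z ^ (c * d)).sum) := lintegral_mono hpoint
    _ = ‖p.eval t₀‖ₑ ^ (-c) *
          (1 + ∫⁻ t in Icc (0 : ℝ) 1, (Z.map fun z ↦ r t z ^ (c * d)).sum) := by
        rw [lintegral_const_mul' _ _ (ENNReal.rpow_ne_top_of_ne_zero (by simpa using h0)
          enorm_ne_top), lintegral_add_left measurable_const]
        simp
    _ ≤ ‖p.eval t₀‖ₑ ^ (-c) * (1 + d * B) := by
        gcongr
        exact (hsum Z).trans (by gcongr)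
    _ = (1 + d * B) * ‖p.eval t₀‖ₑ ^ (-c) := mul_comm _ _

lemma exists_eval_update_eq_eval {δ : Type*} [DecidableEq δ] (P : MvPolynomial δ ℝ)
    (x : δ → ℝ) (i : δ) :
    ∃ p : Polynomial ℝ, p.natDegree ≤ P.totalDegree ∧
      ∀ t, MvPolynomial.eval (Function.update x i t) P = p.eval t := by
  refine ⟨MvPolynomial.aeval (Function.update (fun j ↦ Polynomial.C (x j)) i Polynomial.X) P,
    ?_, fun t ↦ ?_⟩
  · refine (MvPolynomial.aeval_natDegree_le P le_rfl (n := 1) _ fun j ↦ ?_).trans (by simp)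
    obtain rfl | hj := eq_or_ne j i <;> simp [*]
  · rw [← Polynomial.coe_evalRingHom, MvPolynomial.aeval_def, MvPolynomial.hom_eval₂,
      ← MvPolynomial.eval₂_id]
    congr 1
    · ext; simp
    · ext j
      obtain rfl | hj := eq_or_ne j i <;> simp [*]

lemma lintegral_pi_le_pow_mul {δ X : Type*} [Fintype δ] [DecidableEq δ] [MeasurableSpace X]
    {μ : Measure X} [SigmaFinite μ] {S : Set X} (hS : ∀ᵐ t ∂μ, t ∈ S) {g : (δ → X) → ℝ≥0∞}
    (hg : Measurable g) {C : ℝ≥0∞}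
    (hC : ∀ x : δ → X, (∀ j, x j ∈ S) → ∀ i, ∫⁻ t, g (Function.update x i t) ∂μ ≤ C * g x)
    {x : δ → X} (hx : ∀ j, x j ∈ S) :
    ∫⁻ y, g y ∂Measure.pi (fun _ ↦ μ) ≤ C ^ Fintype.card δ * g x := by
  have hmarginal : ∀ (s : Finset δ) (x : δ → X), (∀ j, x j ∈ S) →
      (∫⋯∫⁻_s, g ∂fun _ ↦ μ) x ≤ C ^ s.card * g x := by
    intro s
    induction s using Finset.induction_on with
    | empty => intro x _; simp
    | insert i s hi ih =>
      intro x hx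
      have hupdate : ∀ᵐ t ∂μ, ∀ j, Function.update x i t j ∈ S := by
        filter_upwards [hS] with t ht j
        obtain rfl | hj := eq_or_ne j i <;> simp [*]
      rw [lmarginal_insert _ hg hi, Finset.card_insert_of_notMem hi, pow_succ, mul_assoc]
      calc ∫⁻ t, (∫⋯∫⁻_s, g ∂fun _ ↦ μ) (Function.update x i t) ∂μ
          ≤ ∫⁻ t, C ^ s.card * g (Function.update x i t) ∂μ :=
            lintegral_mono_ae (hupdate.mono fun t ht ↦ ih _ ht)
        _ = C ^ s.card * ∫⁻ t, g (Function.update x i t) ∂μ :=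
            lintegral_const_mul _ (hg.comp (measurable_update x))
        _ ≤ C ^ s.card * (C * g x) := by gcongr; exact hC x hx i
  simpa only [← lintegral_eq_lmarginal_univ, Finset.card_univ] using hmarginal Finset.univ x hx

lemma ae_mvPolynomial_eval_ne_zero {δ : Type*} [Fintype δ] {P : MvPolynomial δ ℝ} (hP : P ≠ 0) :
    ∀ᵐ x : δ → ℝ, MvPolynomial.eval x P ≠ 0 := by
  classical
  obtain ⟨x₀, hx₀⟩ : ∃ x₀ : δ → ℝ, MvPolynomial.eval x₀ P ≠ 0 := by
    by_contra! h
    exact hP (MvPolynomial.funext (by simpa using h))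
  set S : Set (δ → ℝ) := {x | MvPolynomial.eval x P = 0} with hS
  have hSm : MeasurableSet S :=
    (isClosed_eq (MvPolynomial.continuous_eval P) continuous_const).measurableSet
  have hline : ∀ x : δ → ℝ, ∀ i,
      ∫⁻ t, S.indicator 1 (Function.update x i t) ≤ ⊤ * S.indicator 1 x := by
    intro x i
    by_cases hx : x ∈ S
    · simp [hx]
    obtain ⟨p, -, hp⟩ := exists_eval_update_eq_eval P x i
    have hp0 : p ≠ 0 := by
      rintro rfl
      exact hx (by simpa [hS] using hp (x i))
    refine le_of_eq_of_le (lintegral_eq_zero_of_ae_eq_zero ?_) zero_le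
    filter_upwards [(p.roots.toFinset.countable_toSet).ae_notMem volume] with t ht
    have hp_t : p.eval t ≠ 0 := by simpa [hp0] using ht
    simp [hS, hp, hp_t]
  have hint : ∫⁻ x, S.indicator 1 x = (0 : ℝ≥0∞) := by
    have := lintegral_pi_le_pow_mul (μ := volume) (S := univ) (by simp)
      (measurable_one.indicator hSm) (C := ⊤) (fun x _ i ↦ hline x i) (x := x₀) (by simp)
    simpa [hS, hx₀, volume_pi] using this
  rw [lintegral_indicator_one hSm] at hint
  exact measure_eq_zero_iff_ae_notMem.1 hint

lemma volume_restrict_Icc_pi {ι : Type*} [Fintype ι] :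
    (volume : Measure (ι → ℝ)).restrict (Icc 0 1) =
      Measure.pi fun _ : ι ↦ volume.restrict (Icc (0 : ℝ) 1) := by
  rw [← Measure.restrict_pi_pi, ← Set.pi_univ_Icc, volume_pi]
  rfl

lemma exists_lintegral_enorm_mvPolynomial_eval_rpow_le {δ : Type*} [Fintype δ]
    (P : MvPolynomial δ ℝ) {c : ℝ} (hc : 0 < c) (hcd : c * P.totalDegree < 1) :
    ∃ C : ℝ≥0∞, C ≠ ⊤ ∧ ∀ x₀ ∈ Icc (0 : δ → ℝ) 1,
      ∫⁻ x in Icc (0 : δ → ℝ) 1, ‖MvPolynomial.eval x P‖ₑ ^ (-c) ≤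
        C * ‖MvPolynomial.eval x₀ P‖ₑ ^ (-c) := by
  classical
  obtain ⟨C, hC, hCp⟩ := exists_lintegral_enorm_polynomial_eval_rpow_le P.totalDegree hc hcd
  refine ⟨C ^ Fintype.card δ, by finiteness, fun x₀ hx₀ ↦ ?_⟩
  have hcont : Continuous fun x : δ → ℝ ↦ MvPolynomial.eval x P := MvPolynomial.continuous_eval P
  have hmeas : Measurable fun x : δ → ℝ ↦ ‖MvPolynomial.eval x P‖ₑ ^ (-c) :=
    hcont.enorm.measurable.pow_const _
  rw [volume_restrict_Icc_pi]
  refine lintegral_pi_le_pow_mul (ae_restrict_mem measurableSet_Icc) hmeas (fun x hx i ↦ ?_)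
    fun j ↦ ⟨hx₀.1 j, hx₀.2 j⟩
  obtain ⟨p, hpd, hp⟩ := exists_eval_update_eq_eval P x i
  have hpx : MvPolynomial.eval x P = p.eval (x i) := by rw [← hp, Function.update_eq_self]
  simpa only [hp, hpx] using hCp p hpd (x i) (hx i)

lemma exists_volume_sublevel_mvPolynomial_le {δ : Type*} [Fintype δ]
    {P : MvPolynomial δ ℝ} (hP : P ≠ 0) :
    ∃ c > 0, ∃ C : ℝ≥0∞, C ≠ ⊤ ∧ ∀ κ : ℝ, 0 < κ →
      volume ({x | |MvPolynomial.eval x P| ≤ κ} ∩ Icc (0 : δ → ℝ) 1) ≤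
        C * ENNReal.ofReal κ ^ (c : ℝ) := by
  obtain ⟨c, hc, hcd⟩ : ∃ c : ℝ, 0 < c ∧ c * P.totalDegree < 1 := by
    refine ⟨1 / (P.totalDegree + 1), by positivity, ?_⟩
    rw [div_mul_eq_mul_div, one_mul, div_lt_one (by positivity)]
    linarith
  obtain ⟨C, hC, hCP⟩ := exists_lintegral_enorm_mvPolynomial_eval_rpow_le P hc hcd
  obtain ⟨x₀, hx₀, hx₀P⟩ : ∃ x₀ ∈ Icc (0 : δ → ℝ) 1, MvPolynomial.eval x₀ P ≠ 0 := by
    by_contra! h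
    refine hP (MvPolynomial.funext_set (fun _ ↦ Icc (0 : ℝ) 1)
      (fun _ ↦ Set.Icc_infinite zero_lt_one) fun x hx ↦ ?_)
    rw [Set.pi_univ_Icc] at hx
    simpa using h x hx
  have hx₀e : ‖MvPolynomial.eval x₀ P‖ₑ ≠ 0 := by simpa using hx₀P
  refine ⟨c, hc, C * ‖MvPolynomial.eval x₀ P‖ₑ ^ (-c),
    ENNReal.mul_ne_top hC (ENNReal.rpow_ne_top_of_ne_zero hx₀e enorm_ne_top), fun κ hκ ↦ ?_⟩
  have hκ0 : ENNReal.ofReal κ ^ c ≠ 0 := by simp [hκ]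
  have hκtop : ENNReal.ofReal κ ^ c ≠ ⊤ := by finiteness
  have hcont : Continuous fun x : δ → ℝ ↦ MvPolynomial.eval x P := MvPolynomial.continuous_eval P
  have hmarkov := meas_ge_le_lintegral_div (μ := volume.restrict (Icc (0 : δ → ℝ) 1))
    (f := fun x ↦ ‖MvPolynomial.eval x P‖ₑ ^ (-c)) (by fun_prop)
    (ε := ENNReal.ofReal κ ^ (-c)) (by simp [ENNReal.rpow_neg, hκtop])
    (by simp [ENNReal.rpow_neg, hκ0])
  rw [Measure.restrict_apply' measurableSet_Icc, ENNReal.rpow_neg _ c, ENNReal.div_eq_inv_mul,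
    inv_inv] at hmarkov
  calc volume ({x | |MvPolynomial.eval x P| ≤ κ} ∩ Icc (0 : δ → ℝ) 1)
      ≤ ENNReal.ofReal κ ^ c *
          ∫⁻ x in Icc (0 : δ → ℝ) 1, ‖MvPolynomial.eval x P‖ₑ ^ (-c) := by
        refine (measure_mono (inter_subset_inter_left _ fun x hx ↦ ?_)).trans hmarkov
        rw [mem_ofPred_eq, ← ENNReal.rpow_neg]
        refine ennreal_rpow_neg_le_rpow_neg hc.le ?_
        rw [Real.enorm_eq_ofReal_abs]
        exact ENNReal.ofReal_le_ofReal hx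
    _ ≤ ENNReal.ofReal κ ^ c * (C * ‖MvPolynomial.eval x₀ P‖ₑ ^ (-c)) := by
        gcongr
        exact hCP x₀ hx₀
    _ = C * ‖MvPolynomial.eval x₀ P‖ₑ ^ (-c) * ENNReal.ofReal κ ^ c := mul_comm _ _

end NegativePowers

/-! ### Change of variables with bounded multiplicity -/

section BoundedMultiplicity

lemma exists_ne_zero_aeval_optionElim_eq_zero {κ : Type*} [Finite κ] (Ψ : κ → MvPolynomial κ ℝ)
    (c : κ) :
    ∃ G : MvPolynomial (Option κ) ℝ, G ≠ 0 ∧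
      MvPolynomial.aeval (fun o : Option κ ↦ o.elim (MvPolynomial.X c) Ψ) G = 0 := by
  have := Fintype.ofFinite κ
  have hdep : ¬ AlgebraicIndependent ℝ fun o : Option κ ↦ o.elim (MvPolynomial.X c) Ψ := by
    intro hindep
    have hcard := hindep.lift_cardinalMk_le_trdeg
    rw [MvPolynomial.trdeg_of_isDomain] at hcard
    simp only [Cardinal.mk_fintype, Cardinal.lift_natCast, Fintype.card_option,
      Nat.cast_le] at hcard
    omega
  rw [algebraicIndependent_iff] at hdep
  push Not at hdep
  obtain ⟨G, hGΨ, hG⟩ := hdep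
  exact ⟨G, hG, hGΨ⟩

/- Each coordinate of a point of the fibre over `z` is a root of a polynomial whose coefficients
are evaluated at `z`, and for almost every `z` this polynomial does not vanish identically. -/
lemma exists_ae_encard_fiber_le {κ : Type*} [Fintype κ] (Ψ : κ → MvPolynomial κ ℝ) :
    ∃ K : ℕ, ∀ᵐ z : κ → ℝ, ((fun y c ↦ MvPolynomial.eval y (Ψ c)) ⁻¹' {z}).encard ≤ K := by
  classical
  choose G hG0 hG using exists_ne_zero_aeval_optionElim_eq_zero Ψ
  set H : κ → Polynomial (MvPolynomial κ ℝ) := fun c ↦ MvPolynomial.optionEquivLeft ℝ κ (G c)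
  have hlead : ∀ᵐ z : κ → ℝ, ∀ c, MvPolynomial.eval z (H c).leadingCoeff ≠ 0 :=
    ae_all_iff.2 fun c ↦ ae_mvPolynomial_eval_ne_zero (by simpa [H] using hG0 c)
  refine ⟨∏ c, (H c).natDegree, hlead.mono fun z hz ↦ ?_⟩
  set R : κ → Finset ℝ := fun c ↦ ((H c).map (MvPolynomial.eval z)).roots.toFinset
  have hR : ∀ c, (R c).card ≤ (H c).natDegree := fun c ↦
    (Multiset.toFinset_card_le _).trans
      ((Polynomial.card_roots' _).trans Polynomial.natDegree_map_le)
  have hfiber : (fun y c ↦ MvPolynomial.eval y (Ψ c)) ⁻¹' {z} ⊆ Fintype.piFinset R := by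
    intro y (hy : (fun c ↦ MvPolynomial.eval y (Ψ c)) = z)
    rw [Finset.mem_coe, Fintype.mem_piFinset]
    intro c
    have hne : (H c).map (MvPolynomial.eval z) ≠ 0 := fun h ↦
      hz c (by simpa using congrArg (Polynomial.coeff · (H c).natDegree) h)
    have hroot := congrArg (MvPolynomial.eval y) (hG c)
    rw [map_zero, MvPolynomial.aeval_def, ← MvPolynomial.coe_eval₂Hom] at hroot
    rw [Multiset.mem_toFinset, Polynomial.mem_roots hne, Polynomial.IsRoot.def,
      ← MvPolynomial.optionEquivLeft_elim_eval, ← hroot, ← RingHom.comp_apply, ← hy]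
    congr 1
    refine MvPolynomial.ringHom_ext (fun r ↦ by simp) fun o ↦ ?_
    cases o <;> simp
  calc _ ≤ (Fintype.piFinset R : Set (κ → ℝ)).encard := encard_le_encard hfiber
    _ ≤ (∏ c, (H c).natDegree : ℕ) := by
      rw [encard_coe_eq_coe_finsetCard, Fintype.card_piFinset]
      exact_mod_cast Finset.prod_le_prod' fun c _ ↦ hR c

section AreaFormula

variable {E : Type*} [NormedAddCommGroup E] [NormedSpace ℝ E] [FiniteDimensional ℝ E]

lemma exists_injOn_of_approximatesLinearOn {A : E →L[ℝ] E} (hA : A.det ≠ 0) :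
    ∃ r : NNReal, r ≠ 0 ∧ ∀ (f : E → E) (s : Set E), ApproximatesLinearOn f A s r → InjOn f s := by
  set B : E ≃L[ℝ] E := A.toContinuousLinearEquivOfDetNeZero hA
  obtain _ | _ := subsingleton_or_nontrivial E
  · exact ⟨1, one_ne_zero, fun f s _ ↦ injOn_of_subsingleton f s⟩
  have hpos : 0 < ‖(B.symm : E →L[ℝ] E)‖₊⁻¹ := inv_pos.2 B.nnnorm_symm_pos
  refine ⟨‖(B.symm : E →L[ℝ] E)‖₊⁻¹ / 2, (half_pos hpos).ne', fun f s hf ↦ ?_⟩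
  exact ApproximatesLinearOn.injOn (f' := B) (by simpa [B] using hf) (Or.inr (half_lt_self hpos))

variable [MeasurableSpace E] [BorelSpace E]

lemma exists_partition_injOn_of_det_ne_zero {f : E → E} {f' : E → E →L[ℝ] E} {s : Set E}
    (hf : ∀ x ∈ s, HasFDerivWithinAt f (f' x) s x) (hdet : ∀ x ∈ s, (f' x).det ≠ 0) :
    ∃ t : ℕ → Set E, Pairwise (Function.onFun Disjoint t) ∧ (∀ n, MeasurableSet (t n)) ∧
      s ⊆ ⋃ n, t n ∧ ∀ n, InjOn f (s ∩ t n) := by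
  classical
  choose! r hr0 hr using fun (A : E →L[ℝ] E) (hA : A.det ≠ 0) ↦
    exists_injOn_of_approximatesLinearOn hA
  obtain ⟨t, A, ht, htm, hst, happrox, hA⟩ :=
    exists_partition_approximatesLinearOn_of_hasFDerivWithinAt f s f' hf
      (fun A ↦ if A.det ≠ 0 then r A else 1) fun A ↦ by split_ifs with h <;> simp [hr0, h]
  refine ⟨t, ht, htm, hst, fun n x hx ↦ ?_⟩
  obtain ⟨y, hy, hAy⟩ := hA ⟨x, hx.1⟩ n
  have hAn : (A n).det ≠ 0 := hAy ▸ hdet y hy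
  exact hr (A n) hAn f _ (by simpa [hAn] using happrox n) hx

lemma tsum_indicator_image_le {α β : Type*} {t : ℕ → Set α}
    (ht : Pairwise (Function.onFun Disjoint t)) {f : α → β} {z : β} {K : ℕ}
    (hK : (f ⁻¹' {z}).encard ≤ K) (h : β → ℝ≥0∞) :
    ∑' n, (f '' t n).indicator h z ≤ K * h z := by
  set N : Set ℕ := {n | z ∈ f '' t n}
  have hN : N.encard ≤ K := by
    choose y hyt hyz using fun n (hn : n ∈ N) ↦ hn
    have hinj : Function.Injective fun n : N ↦ (⟨y n n.2, hyz n n.2⟩ : f ⁻¹' {z}) := by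
      intro m n hmn
      have heq : y m m.2 = y n n.2 := congrArg Subtype.val hmn
      by_contra hne
      exact Set.disjoint_left.1 (ht (Subtype.coe_ne_coe.2 hne)) (hyt m m.2) (heq ▸ hyt n n.2)
    exact (Function.Embedding.encard_le ⟨_, hinj⟩).trans hK
  calc ∑' n, (f '' t n).indicator h z = ∑' n, N.indicator (fun _ ↦ h z) n := rfl
    _ = N.encard * h z := by rw [← tsum_subtype, ENNReal.tsum_set_const]
    _ ≤ K * h z := by gcongr; exact_mod_cast ENat.toENNReal_le.2 hN

lemma lintegral_abs_det_fderiv_mul_comp_le (μ : Measure E) [μ.IsAddHaarMeasure] {f : E → E}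
    (hf : Differentiable ℝ f) {K : ℕ} (hK : ∀ᵐ z ∂μ, (f ⁻¹' {z}).encard ≤ K) {h : E → ℝ≥0∞}
    (hh : Measurable h) :
    ∫⁻ y, ENNReal.ofReal |(fderiv ℝ f y).det| * h (f y) ∂μ ≤ K * ∫⁻ z, h z ∂μ := by
  set U : Set E := {y | (fderiv ℝ f y).det ≠ 0}
  have hUm : MeasurableSet U :=
    (ContinuousLinearMap.continuous_det.measurable.comp (measurable_fderiv ℝ f))
      (measurableSet_singleton 0).compl
  obtain ⟨t, ht, htm, hUt, hinj⟩ := exists_partition_injOn_of_det_ne_zero (s := U)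
    (fun x _ ↦ (hf x).hasFDerivAt.hasFDerivWithinAt) fun x hx ↦ hx
  set A : ℕ → Set E := fun n ↦ U ∩ t n
  have hAm : ∀ n, MeasurableSet (A n) := fun n ↦ hUm.inter (htm n)
  have hAd : Pairwise (Function.onFun Disjoint A) :=
    ht.mono fun m n hmn ↦ hmn.mono inter_subset_right inter_subset_right
  have hAU : ⋃ n, A n = U := by rw [← inter_iUnion, inter_eq_left.2 hUt]
  have hderiv : ∀ n, ∀ x ∈ A n, HasFDerivWithinAt f (fderiv ℝ f x) (A n) x :=
    fun n x _ ↦ (hf x).hasFDerivAt.hasFDerivWithinAt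
  have himage : ∀ n, MeasurableSet (f '' A n) := fun n ↦
    measurable_image_of_fderivWithin (hAm n) (hderiv n) (hinj n)
  calc ∫⁻ y, ENNReal.ofReal |(fderiv ℝ f y).det| * h (f y) ∂μ
      = ∫⁻ y in ⋃ n, A n, ENNReal.ofReal |(fderiv ℝ f y).det| * h (f y) ∂μ := by
        rw [hAU]
        refine (setLIntegral_eq_of_support_subset fun y hy hdet ↦ ?_).symm
        simp [hdet] at hy
    _ = ∑' n, ∫⁻ y in A n, ENNReal.ofReal |(fderiv ℝ f y).det| * h (f y) ∂μ :=
        lintegral_iUnion hAm hAd _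
    _ = ∑' n, ∫⁻ z, (f '' A n).indicator h z ∂μ := by
        refine tsum_congr fun n ↦ ?_
        rw [lintegral_indicator (himage n),
          lintegral_image_eq_lintegral_abs_det_fderiv_mul μ (hAm n) (hderiv n) (hinj n)]
    _ = ∫⁻ z, ∑' n, (f '' A n).indicator h z ∂μ :=
        (lintegral_tsum fun n ↦ (hh.indicator (himage n)).aemeasurable).symm
    _ ≤ ∫⁻ z, K * h z ∂μ :=
        lintegral_mono_ae (hK.mono fun z hz ↦ tsum_indicator_image_le hAd hz h)
    _ = K * ∫⁻ z, h z ∂μ := lintegral_const_mul _ hh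

end AreaFormula

lemma ofReal_mul_volume_abs_polynomial_le_one_lt_abs_derivative_le (p : Polynomial ℝ) (L : ℝ) :
    ENNReal.ofReal L * volume {t : ℝ | |p.eval t| ≤ 1 ∧ L < |p.derivative.eval t|} ≤
      2 * p.natDegree := by
  have hdet : ∀ t, (fderiv ℝ (fun t ↦ p.eval t) t).det = p.derivative.eval t := fun t ↦ by
    simp [((p.hasDerivAt t).hasFDerivAt).fderiv]
  have hfiber : ∀ᵐ z : ℝ, ((fun t ↦ p.eval t) ⁻¹' {z}).encard ≤ p.natDegree := by
    filter_upwards [Measure.ae_ne volume (p.coeff 0)] with z hz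
    have hne : p - Polynomial.C z ≠ 0 := fun h ↦
      hz (by simpa [eq_comm] using congrArg (Polynomial.coeff · 0) (sub_eq_zero.1 h))
    have hroots : (fun t ↦ p.eval t) ⁻¹' {z} ⊆ (p - Polynomial.C z).roots.toFinset := by
      intro t ht
      simpa [hne, sub_eq_zero] using ht
    refine (encard_le_encard hroots).trans ?_
    rw [encard_coe_eq_coe_finsetCard, ← Polynomial.natDegree_sub_C (a := z)]
    exact_mod_cast (Multiset.toFinset_card_le _).trans (Polynomial.card_roots' _)
  have harea := lintegral_abs_det_fderiv_mul_comp_le volume p.differentiable hfiber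
    (measurable_one.indicator (measurableSet_Icc (a := (-1 : ℝ)) (b := 1)))
  rw [lintegral_indicator_one measurableSet_Icc, Real.volume_Icc] at harea
  simp only [hdet] at harea
  have hmeas : MeasurableSet {t : ℝ | |p.eval t| ≤ 1 ∧ L < |p.derivative.eval t|} :=
    (measurableSet_le p.continuous.abs.measurable measurable_const).inter
      (measurableSet_lt measurable_const p.derivative.continuous.abs.measurable)
  calc ENNReal.ofReal L * volume {t : ℝ | |p.eval t| ≤ 1 ∧ L < |p.derivative.eval t|}
      = ∫⁻ _ in {t : ℝ | |p.eval t| ≤ 1 ∧ L < |p.derivative.eval t|}, ENNReal.ofReal L :=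
        (setLIntegral_const _ _).symm
    _ ≤ ∫⁻ t in {t : ℝ | |p.eval t| ≤ 1 ∧ L < |p.derivative.eval t|},
          ENNReal.ofReal |p.derivative.eval t| * (Icc (-1) 1).indicator 1 (p.eval t) := by
        refine setLIntegral_mono' hmeas fun t ht ↦ ?_
        rw [indicator_of_mem (mem_Icc.2 (abs_le.1 ht.1)), Pi.one_apply, mul_one]
        exact ENNReal.ofReal_le_ofReal ht.2.le
    _ ≤ p.natDegree * ENNReal.ofReal (1 - -1) := (setLIntegral_le_lintegral _ _).trans harea
    _ = 2 * p.natDegree := by norm_num [mul_comm]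

section Jacobian

variable {κ : Type*} [Fintype κ]

lemma hasFDerivAt_mvPolynomial_eval (P : MvPolynomial κ ℝ) (y : κ → ℝ) :
    HasFDerivAt (fun y ↦ MvPolynomial.eval y P)
      (∑ j, MvPolynomial.eval y (MvPolynomial.pderiv j P) •
        ContinuousLinearMap.proj (R := ℝ) (φ := fun _ : κ ↦ ℝ) j) y := by
  classical
  induction P using MvPolynomial.induction_on with
  | C a => simpa using hasFDerivAt_const a y
  | add p q hp hq =>
    simp only [map_add, add_smul, Finset.sum_add_distrib]
    exact hp.add hq
  | mul_X p i hp =>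
    simp only [map_mul, MvPolynomial.eval_X]
    refine (hp.mul (hasFDerivAt_apply i y)).congr_fderiv ?_
    simp [MvPolynomial.pderiv_X, Pi.single_apply, apply_ite, ite_smul, add_smul,
      Finset.sum_add_distrib, Finset.smul_sum, smul_smul]

lemma det_fderiv_mvPolynomial_eval [DecidableEq κ] (Ψ : κ → MvPolynomial κ ℝ) (y : κ → ℝ) :
    (fderiv ℝ (fun y c ↦ MvPolynomial.eval y (Ψ c)) y).det =
      (Matrix.of fun c c' ↦ MvPolynomial.eval y (MvPolynomial.pderiv c' (Ψ c))).det := by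
  have hderiv := (hasFDerivAt_pi (𝕜 := ℝ)).2 fun c ↦ hasFDerivAt_mvPolynomial_eval (Ψ c) y
  rw [hderiv.fderiv, ContinuousLinearMap.det, ← LinearMap.det_toMatrix']
  congr 1
  ext c c'
  simp [LinearMap.toMatrix'_apply, Pi.single_apply]

variable {I R : Type*} [Fintype I] [Fintype R]

lemma measurePreserving_pi_comp_sum (e : I ⊕ R ≃ κ) :
    MeasurePreserving fun z : κ → ℝ ↦
      ((fun i ↦ z (e (.inl i)), fun r ↦ z (e (.inr r))) : (I → ℝ) × (R → ℝ)) :=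
  (volume_measurePreserving_sumPiEquivProdPi fun _ : I ⊕ R ↦ ℝ).comp
    (volume_measurePreserving_piCongrLeft (fun _ : κ ↦ ℝ) e).symm

lemma lintegral_pi_mul (e : I ⊕ R ≃ κ) {h : (I → ℝ) → ℝ≥0∞} {g : (R → ℝ) → ℝ≥0∞}
    (hh : Measurable h) (hg : Measurable g) :
    ∫⁻ z : κ → ℝ, h (fun i ↦ z (e (.inl i))) * g (fun r ↦ z (e (.inr r))) =
      (∫⁻ z, h z) * ∫⁻ z, g z := by
  have hcomp := (measurePreserving_pi_comp_sum e).lintegral_comp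
    (f := fun x : (I → ℝ) × (R → ℝ) ↦ h x.1 * g x.2) (by fun_prop)
  exact hcomp.trans (lintegral_prod_mul hh.aemeasurable hg.aemeasurable)

/- The polynomials `P i` are completed by the coordinates outside `I` to a polynomial map of
`κ → ℝ` to itself with the same Jacobian determinant. -/
lemma exists_lintegral_det_pderiv_mul_le [DecidableEq I] (e : I ⊕ R ≃ κ)
    (P : I → MvPolynomial κ ℝ) :
    ∃ K : ℕ, ∀ (h : (I → ℝ) → ℝ≥0∞) (g : (R → ℝ) → ℝ≥0∞), Measurable h → Measurable g →
      ∫⁻ y : κ → ℝ, ‖(Matrix.of fun i i' ↦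
          MvPolynomial.eval y (MvPolynomial.pderiv (e (.inl i')) (P i))).det‖ₑ *
        (h (fun i ↦ MvPolynomial.eval y (P i)) * g (fun r ↦ y (e (.inr r)))) ≤
      K * ((∫⁻ z, h z) * ∫⁻ z, g z) := by
  classical
  set Ψ : κ → MvPolynomial κ ℝ :=
    fun c ↦ Sum.elim P (fun r ↦ MvPolynomial.X (e (.inr r))) (e.symm c) with hΨ
  have hΨ_inl (i) : Ψ (e (.inl i)) = P i := by simp [hΨ]
  have hΨ_inr (r) : Ψ (e (.inr r)) = MvPolynomial.X (e (.inr r)) := by simp [hΨ]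
  have hdet (y : κ → ℝ) : (fderiv ℝ (fun y c ↦ MvPolynomial.eval y (Ψ c)) y).det =
      (Matrix.of fun i i' ↦
        MvPolynomial.eval y (MvPolynomial.pderiv (e (.inl i')) (P i))).det := by
    have hblocks : (Matrix.of fun c c' ↦
          MvPolynomial.eval y (MvPolynomial.pderiv c' (Ψ c))).submatrix e e =
        Matrix.fromBlocks
          (Matrix.of fun i i' ↦ MvPolynomial.eval y (MvPolynomial.pderiv (e (.inl i')) (P i)))
          (Matrix.of fun i r ↦ MvPolynomial.eval y (MvPolynomial.pderiv (e (.inr r)) (P i)))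
          0 (1 : Matrix R R ℝ) := by
      ext (i | r) (i' | r') <;>
        simp [hΨ_inl, hΨ_inr, MvPolynomial.pderiv_X, Pi.single_apply, Matrix.one_apply]
    rw [det_fderiv_mvPolynomial_eval, ← Matrix.det_submatrix_equiv_self e, hblocks,
      Matrix.det_fromBlocks_zero₂₁, Matrix.det_one, mul_one]
  obtain ⟨K, hK⟩ := exists_ae_encard_fiber_le Ψ
  refine ⟨K, fun h g hh hg ↦ ?_⟩
  have harea := lintegral_abs_det_fderiv_mul_comp_le volume
    (differentiable_pi.2 fun c y ↦ (hasFDerivAt_mvPolynomial_eval (Ψ c) y).differentiableAt) hK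
    (h := fun z ↦ h (fun i ↦ z (e (.inl i))) * g (fun r ↦ z (e (.inr r)))) (by fun_prop)
  simpa only [lintegral_pi_mul e hh hg, hdet, hΨ_inl, hΨ_inr, MvPolynomial.eval_X,
    Real.enorm_eq_ofReal_abs] using harea

end Jacobian

end BoundedMultiplicity

/-! ### Determinants: an exchange lemma and Vandermonde estimates -/

section Exchange

variable {ι M K : Type*}

lemma of_comp_update {N : Type*} [DecidableEq M] (E : ι → N → ℝ) (a : M → ι) (γ : M) (i : ι) :
    (Matrix.of fun γ' ↦ E (Function.update a γ i γ')) =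
      (Matrix.of fun γ' ↦ E (a γ')).updateRow γ (E i) := by
  ext γ' m
  by_cases h : γ' = γ
  · subst h; simp
  · simp [h, Matrix.updateRow_ne]

lemma sum_cramer_transpose_mul [Fintype M] [DecidableEq M] (D : Matrix M M ℝ) (v : M → ℝ)
    (L : (M → ℝ) →ₗ[ℝ] ℝ) :
    ∑ γ, D.transpose.cramer v γ * L (D γ) = D.det * L v := by
  have hcramer : ∑ γ, D.transpose.cramer v γ • D γ = D.det • v := by
    simpa [Matrix.mulVec_eq_sum] using Matrix.mulVec_cramer D.transpose v
  simpa using congrArg L hcramer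

lemma exists_abs_le_card_mul_abs_of_sum_mul_eq [Fintype M] {x y : M → ℝ} {d β : ℝ}
    (hsum : ∑ γ, x γ * y γ = d * β) (hy : ∀ γ, |y γ| ≤ |β|) (hd : d ≠ 0) (hβ : β ≠ 0) :
    ∃ γ, y γ ≠ 0 ∧ |d| ≤ Fintype.card M * |x γ| := by
  have hM : (Finset.univ : Finset M).Nonempty := by
    refine Finset.nonempty_of_sum_ne_zero (f := fun γ ↦ x γ * y γ) ?_
    rw [hsum]
    exact mul_ne_zero hd hβ
  have hsum_le : ∑ _γ : M, |d * β| / Fintype.card M ≤ ∑ γ, |x γ * y γ| := by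
    have hcard : (Fintype.card M : ℝ) ≠ 0 := by
      exact_mod_cast (Finset.card_pos.2 hM).ne'
    calc ∑ _γ : M, |d * β| / Fintype.card M = |d * β| := by
          rw [Finset.sum_const, Finset.card_univ, nsmul_eq_mul, mul_div_cancel₀ _ hcard]
      _ ≤ ∑ γ, |x γ * y γ| := hsum ▸ Finset.abs_sum_le_sum_abs _ _
  obtain ⟨γ, -, hγ⟩ := Finset.exists_le_of_sum_le hM hsum_le
  have hcard : (0 : ℝ) < Fintype.card M := by exact_mod_cast Fintype.card_pos_iff.2 ⟨γ⟩
  rw [div_le_iff₀ hcard, abs_mul, abs_mul] at hγ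
  have hβ' : 0 < |β| := abs_pos.2 hβ
  have hdβ : 0 < |d| * |β| := mul_pos (abs_pos.2 hd) hβ'
  refine ⟨γ, fun h ↦ ?_, le_of_mul_le_mul_right ?_ hβ'⟩
  · rw [h, abs_zero, mul_zero, zero_mul] at hγ
    exact hγ.not_gt hdβ
  · calc |d| * |β| ≤ |x γ| * |y γ| * Fintype.card M := hγ
      _ ≤ |x γ| * |β| * Fintype.card M := by gcongr |x γ| * ?_ * _; exact hy γ
      _ = Fintype.card M * |x γ| * |β| := by ring

variable [Fintype M] [DecidableEq M] [Fintype K] [DecidableEq K]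

/- Cramer's rule expands `E (b r)` in the rows `E (a γ)`; the functional `L`, which replaces row `r`
of the maximal minor, is at most that minor on every row and vanishes at `E (b s)` for `s ≠ r`. -/
lemma exists_update_abs_det_le (E : ι → M → ℝ) (j : K → M) {a : M → ι} {b : K → ι}
    (ha : (Matrix.of fun γ ↦ E (a γ)).det ≠ 0)
    (hb : (Matrix.of fun l l' ↦ E (b l) (j l')).det ≠ 0)
    (hmax : ∀ b' : K → ι, |(Matrix.of fun l l' ↦ E (b' l) (j l')).det| ≤
      |(Matrix.of fun l l' ↦ E (b l) (j l')).det|) (r : K) :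
    ∃ γ, (∀ s ≠ r, a γ ≠ b s) ∧ |(Matrix.of fun γ ↦ E (a γ)).det| ≤
      Fintype.card M * |(Matrix.of fun γ' ↦ E (Function.update a γ (b r) γ')).det| := by
  set B : Matrix K K ℝ := Matrix.of fun l l' ↦ E (b l) (j l') with hB
  set D : Matrix M M ℝ := Matrix.of fun γ ↦ E (a γ) with hD
  let L : (M → ℝ) →ₗ[ℝ] ℝ :=
    LinearMap.proj r ∘ₗ B.transpose.cramer ∘ₗ LinearMap.funLeft ℝ ℝ j
  have hL (i : ι) : L (E i) = (Matrix.of fun l l' ↦ E (Function.update b r i l) (j l')).det := by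
    rw [of_comp_update (fun i l' ↦ E i (j l')), ← hB, ← Matrix.cramer_transpose_apply]
    rfl
  have hL_le (i : ι) : |L (E i)| ≤ |B.det| := hL i ▸ hmax _
  have hLr : L (E (b r)) = B.det := by rw [hL, Function.update_eq_self]
  have hLs (s : K) (hs : s ≠ r) : L (E (b s)) = 0 := by
    rw [hL]
    exact Matrix.det_zero_of_row_eq hs (by ext l'; simp [hs])
  have hexp := sum_cramer_transpose_mul D (E (b r)) L
  rw [hLr] at hexp
  obtain ⟨γ, hγ, hle⟩ :=
    exists_abs_le_card_mul_abs_of_sum_mul_eq hexp (fun γ ↦ hL_le (a γ)) ha hb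
  refine ⟨γ, fun s hs h ↦ hγ ?_, ?_⟩
  · rw [← hLs s hs, ← h]
    rfl
  · rwa [of_comp_update, ← hD, ← Matrix.cramer_transpose_apply]

lemma exists_rows_subset_abs_det_le [Finite ι] (E : ι → M → ℝ) (j : K → M) {b : K → ι}
    (hE : ∃ a₀ : M → ι, (Matrix.of fun γ ↦ E (a₀ γ)).det ≠ 0)
    (hb : (Matrix.of fun l l' ↦ E (b l) (j l')).det ≠ 0)
    (hmax : ∀ b' : K → ι, |(Matrix.of fun l l' ↦ E (b' l) (j l')).det| ≤
      |(Matrix.of fun l l' ↦ E (b l) (j l')).det|) (R : Finset K) :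
    ∃ a : M → ι, (∀ r ∈ R, ∃ γ, a γ = b r) ∧ (Matrix.of fun γ ↦ E (a γ)).det ≠ 0 ∧
      ∀ a' : M → ι, |(Matrix.of fun γ ↦ E (a' γ)).det| ≤
        (Fintype.card M : ℝ) ^ R.card * |(Matrix.of fun γ ↦ E (a γ)).det| := by
  induction R using Finset.induction_on with
  | empty =>
    obtain ⟨a₀, ha₀⟩ := hE
    have : Nonempty (M → ι) := ⟨a₀⟩
    obtain ⟨a, ha⟩ := Finite.exists_max fun a : M → ι ↦ |(Matrix.of fun γ ↦ E (a γ)).det|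
    exact ⟨a, by simp, abs_pos.1 ((abs_pos.2 ha₀).trans_le (ha a₀)), by simpa using ha⟩
  | insert r R hr ih =>
    obtain ⟨a, hRa, ha, hamax⟩ := ih
    obtain ⟨γ, hγ, hle⟩ := exists_update_abs_det_le E j ha hb hmax r
    refine ⟨Function.update a γ (b r), fun s hs ↦ ?_, fun h ↦ ?_, fun a' ↦ ?_⟩
    · rcases Finset.mem_insert.1 hs with rfl | hs
      · exact ⟨γ, by simp⟩
      · obtain ⟨γ', hγ'⟩ := hRa s hs
        have hne : γ' ≠ γ := by
          rintro rfl
          exact hγ s (fun h ↦ hr (h ▸ hs)) hγ'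
        exact ⟨γ', by rw [Function.update_of_ne hne, hγ']⟩
    · rw [h, abs_zero, mul_zero] at hle
      exact ha (abs_nonpos_iff.1 hle)
    · refine (hamax a').trans ?_
      rw [Finset.card_insert_of_notMem hr, pow_succ, mul_assoc]
      gcongr

lemma exists_maximal_det_comp [Finite ι] (E : ι → M → ℝ) (j : K → M)
    (hM : ∃ a₀ : M → ι, (Matrix.of fun γ ↦ E (a₀ γ)).det ≠ 0)
    (hK : ∃ b₀ : K → ι, (Matrix.of fun l l' ↦ E (b₀ l) (j l')).det ≠ 0) :
    ∃ (a : M → ι) (σ : K → M),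
      (∀ a' : M → ι, |(Matrix.of fun γ ↦ E (a' γ)).det| ≤
        (Fintype.card M : ℝ) ^ Fintype.card K * |(Matrix.of fun γ ↦ E (a γ)).det|) ∧
      (∀ b' : K → ι, |(Matrix.of fun l l' ↦ E (b' l) (j l')).det| ≤
        |(Matrix.of fun l l' ↦ E (a (σ l)) (j l')).det|) ∧
      (Matrix.of fun γ ↦ E (a γ)).det ≠ 0 ∧
      (Matrix.of fun l l' ↦ E (a (σ l)) (j l')).det ≠ 0 := by
  obtain ⟨b₀, hb₀⟩ := hK
  have : Nonempty (K → ι) := ⟨b₀⟩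
  obtain ⟨b, hmax⟩ :=
    Finite.exists_max fun b : K → ι ↦ |(Matrix.of fun l l' ↦ E (b l) (j l')).det|
  have hb : (Matrix.of fun l l' ↦ E (b l) (j l')).det ≠ 0 :=
    abs_pos.1 ((abs_pos.2 hb₀).trans_le (hmax b₀))
  obtain ⟨a, hab, ha, hamax⟩ := exists_rows_subset_abs_det_le E j hM hb hmax Finset.univ
  choose σ hσ using fun r ↦ hab r (Finset.mem_univ r)
  exact ⟨a, σ, hamax, by simpa only [hσ] using hmax, ha, by simpa only [hσ] using hb⟩

end Exchange

section Vandermonde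

variable {P : Type*} [Fintype P] [DecidableEq P]

lemma prod_perm_apply_pair_eq {R : Type*} [CommMonoid R] (f : P → P → R) {i j i' j' : P}
    (hij : i ≠ j) (hij' : i' ≠ j') :
    ∏ τ : Equiv.Perm P, f (τ i) (τ j) = ∏ τ : Equiv.Perm P, f (τ i') (τ j') := by
  obtain ⟨ρ, hi, hj⟩ : ∃ ρ : Equiv.Perm P, ρ • i = i' ∧ ρ • j = j' :=
    MulAction.is_two_pretransitive_iff.1 (Equiv.Perm.isMultiplyPretransitive P 2) hij hij'
  rw [Equiv.Perm.smul_def] at hi hj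
  rw [← Equiv.prod_comp (Equiv.mulRight ρ) fun τ : Equiv.Perm P ↦ f (τ i) (τ j)]
  simp [hi, hj]

lemma exists_prod_perm_abs_sub_eq (t : P → ℝ) :
    ∃ X : ℝ, 0 ≤ X ∧ ∀ i j : P, i ≠ j → ∏ τ : Equiv.Perm P, |t (τ j) - t (τ i)| = X := by
  rcases subsingleton_or_nontrivial P with hP | hP
  · exact ⟨0, le_rfl, fun i j hij ↦ absurd (Subsingleton.elim i j) hij⟩
  · obtain ⟨i, j, hij⟩ := exists_pair_ne P
    exact ⟨∏ τ : Equiv.Perm P, |t (τ j) - t (τ i)|, Finset.prod_nonneg fun _ _ ↦ abs_nonneg _,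
      fun i' j' hij' ↦ prod_perm_apply_pair_eq (fun x y ↦ |t y - t x|) hij' hij⟩

lemma prod_perm_abs_det_vandermonde {t : P → ℝ} {X : ℝ}
    (hX : ∀ i j : P, i ≠ j → ∏ τ : Equiv.Perm P, |t (τ j) - t (τ i)| = X) {n : ℕ}
    (e : Fin n ↪ P) :
    ∏ τ : Equiv.Perm P, |(Matrix.vandermonde fun l ↦ t (τ (e l))).det| = X ^ n.choose 2 := by
  have hrow (i : Fin n) :
      ∏ τ : Equiv.Perm P, ∏ j ∈ Finset.Ioi i, |t (τ (e j)) - t (τ (e i))| =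
        X ^ (Finset.Ioi i).card := by
    rw [Finset.prod_comm, ← Finset.prod_const]
    exact Finset.prod_congr rfl fun j hj ↦ hX _ _ (e.injective.ne (Finset.mem_Ioi.1 hj).ne)
  simp_rw [Matrix.det_vandermonde, Finset.abs_prod]
  rw [Finset.prod_comm, Finset.prod_congr rfl fun i _ ↦ hrow i, Finset.prod_pow_eq_pow_sum]
  simp only [Fin.card_Ioi]
  rw [Fin.sum_univ_eq_sum_range (fun i ↦ n - 1 - i), Finset.sum_range_reflect (fun i ↦ i),
    Finset.sum_range_id, Nat.choose_two_right]

lemma prod_prod_erase_abs_sub_pow {t : P → ℝ} {X : ℝ}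
    (hX : ∀ i j : P, i ≠ j → ∏ τ : Equiv.Perm P, |t (τ j) - t (τ i)| = X) :
    (∏ c : P, ∏ i ∈ Finset.univ.erase c, |t i - t c|) ^ Fintype.card (Equiv.Perm P) =
      (X ^ (Fintype.card P - 1)) ^ Fintype.card P := by
  have hperm (τ : Equiv.Perm P) : ∏ c : P, ∏ i ∈ Finset.univ.erase c, |t i - t c| =
      ∏ c : P, ∏ i ∈ Finset.univ.erase c, |t (τ i) - t (τ c)| := by
    rw [← Equiv.prod_comp τ]
    refine Finset.prod_congr rfl fun c _ ↦ ?_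
    exact (Finset.prod_equiv τ (by simp) fun _ _ ↦ rfl).symm
  have hstar (c : P) :
      ∏ τ : Equiv.Perm P, ∏ i ∈ Finset.univ.erase c, |t (τ i) - t (τ c)| =
        X ^ (Fintype.card P - 1) := by
    rw [Finset.prod_comm,
      Finset.prod_congr rfl fun i hi ↦ hX c i (Finset.ne_of_mem_erase hi).symm,
      Finset.prod_const, Finset.card_erase_of_mem (Finset.mem_univ _), Finset.card_univ]
  rw [← Finset.card_univ, ← Finset.prod_const, Finset.prod_congr rfl fun τ _ ↦ hperm τ,
    Finset.prod_comm, Finset.prod_congr rfl fun c _ ↦ hstar c, Finset.prod_const, Finset.card_univ]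

/- Averaged geometrically over all permutations of `P`, every difference `|t j - t i|` has the same
mean, so a star and a Vandermonde determinant, both made of `n.choose 2` differences, compare. -/
lemma exists_prod_abs_sub_le_abs_det_vandermonde (n : ℕ)
    (hP : Fintype.card P = n.choose 2 + 1) (t : P → ℝ) :
    ∃ (c : P) (b : Fin n → P), ∏ i ∈ Finset.univ.erase c, |t i - t c| ≤
      |(Matrix.vandermonde fun l ↦ t (b l)).det| := by
  have hnP : n ≤ Fintype.card P := by
    rw [hP]
    cases n with
    | zero => simp
    | succ n =>
      rw [Nat.choose_succ_succ' n 1, Nat.choose_one_right]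
      omega
  obtain ⟨e⟩ : Nonempty (Fin n ↪ P) :=
    Function.Embedding.nonempty_of_card_le (by simpa using hnP)
  have : Nonempty P := Fintype.card_pos_iff.1 (by omega)
  obtain ⟨X, hX0, hX⟩ := exists_prod_perm_abs_sub_eq t
  obtain ⟨ρ, hρ⟩ := Finite.exists_max fun ρ : Equiv.Perm P ↦
    |(Matrix.vandermonde fun l ↦ t (ρ (e l))).det|
  obtain ⟨c, hc⟩ := Finite.exists_min fun c : P ↦ ∏ i ∈ Finset.univ.erase c, |t i - t c|
  refine ⟨c, fun l ↦ ρ (e l), ?_⟩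
  set v := |(Matrix.vandermonde fun l ↦ t (ρ (e l))).det|
  set μ := ∏ i ∈ Finset.univ.erase c, |t i - t c|
  set N := Fintype.card (Equiv.Perm P)
  have hμ0 : 0 ≤ μ := Finset.prod_nonneg fun _ _ ↦ abs_nonneg _
  have hXv : X ^ n.choose 2 ≤ v ^ N := by
    rw [← prod_perm_abs_det_vandermonde hX e, show v ^ N = ∏ _τ : Equiv.Perm P, v by simp [N]]
    exact Finset.prod_le_prod (fun _ _ ↦ abs_nonneg _) fun τ _ ↦ hρ τ
  have hμ : μ ^ Fintype.card P ≤ ∏ c : P, ∏ i ∈ Finset.univ.erase c, |t i - t c| := by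
    rw [← Finset.card_univ, ← Finset.prod_const]
    exact Finset.prod_le_prod (fun _ _ ↦ hμ0) fun c _ ↦ hc c
  refine le_of_pow_le_pow_left₀ (n := N * Fintype.card P)
    (mul_pos Fintype.card_pos Fintype.card_pos).ne' (abs_nonneg _) ?_
  calc μ ^ (N * Fintype.card P) = (μ ^ Fintype.card P) ^ N := by rw [mul_comm, pow_mul]
    _ ≤ (∏ c : P, ∏ i ∈ Finset.univ.erase c, |t i - t c|) ^ N := by gcongr
    _ = (X ^ n.choose 2) ^ Fintype.card P := by
      rw [prod_prod_erase_abs_sub_pow hX, hP, Nat.add_sub_cancel]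
    _ ≤ (v ^ N) ^ Fintype.card P := by gcongr
    _ = v ^ (N * Fintype.card P) := (pow_mul _ _ _).symm

lemma measurable_enorm_det_vandermonde {X : Type*} [MeasurableSpace X] {φ : X → ℝ}
    (hφ : Measurable φ) (r : ℕ) :
    Measurable fun x : Fin r → X ↦ ‖(Matrix.vandermonde fun i ↦ φ (x i)).det‖ₑ := by
  simp_rw [Matrix.det_vandermonde]
  fun_prop

lemma enorm_det_vandermonde_cons {r : ℕ} (t₀ : ℝ) (t : Fin r → ℝ) :
    ‖(Matrix.vandermonde (Fin.cons t₀ t : Fin (r + 1) → ℝ)).det‖ₑ =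
      (∏ j, ‖t j - t₀‖ₑ) * ‖(Matrix.vandermonde t).det‖ₑ := by
  rw [Matrix.det_vandermonde, Matrix.det_vandermonde, Fin.prod_univ_succ, Fin.prod_Ioi_zero]
  simp only [Fin.prod_Ioi_succ, Fin.cons_zero, Fin.cons_succ, enorm_mul]
  simp only [Real.enorm_eq_ofReal_abs, Finset.abs_prod,
    ENNReal.ofReal_prod_of_nonneg fun _ _ ↦ abs_nonneg _]

lemma le_lintegral_prod_enorm_sub {X : Type*} [MeasurableSpace X] {ρ : Measure X} {φ : X → ℝ}
    (hφ : Measurable φ) {A δ : ℝ≥0∞} {r : ℕ} (t : Fin r → ℝ)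
    (h : ∀ F : Finset ℝ, F.card ≤ r → A ≤ ρ {x | ∀ s ∈ F, δ ≤ ‖s - φ x‖ₑ}) :
    δ ^ r * A ≤ ∫⁻ x, ∏ j, ‖t j - φ x‖ₑ ∂ρ := by
  calc δ ^ r * A ≤ δ ^ r * ρ {x | δ ^ r ≤ ∏ j, ‖t j - φ x‖ₑ} := by
        gcongr
        refine (h (Finset.univ.image t) (Finset.card_image_le.trans_eq (by simp))).trans
          (measure_mono fun x hx ↦ ?_)
        calc δ ^ r = ∏ _j : Fin r, δ := by simp
          _ ≤ ∏ j, ‖t j - φ x‖ₑ := Finset.prod_le_prod' fun j _ ↦ hx _ (by simp)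
    _ ≤ ∫⁻ x, ∏ j, ‖t j - φ x‖ₑ ∂ρ := mul_meas_ge_le_lintegral₀ (by fun_prop) _

lemma le_lintegral_enorm_det_vandermonde {X : Type*} [MeasurableSpace X] (ρ : Measure X)
    [SigmaFinite ρ] {φ : X → ℝ} (hφ : Measurable φ) {A δ : ℝ≥0∞} (r : ℕ)
    (h : ∀ F : Finset ℝ, F.card < r → A ≤ ρ {x | ∀ t ∈ F, δ ≤ ‖t - φ x‖ₑ}) :
    A ^ r * δ ^ r.choose 2 ≤
      ∫⁻ x : Fin r → X, ‖(Matrix.vandermonde fun i ↦ φ (x i)).det‖ₑ ∂Measure.pi fun _ ↦ ρ := by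
  induction r with
  | zero => simp
  | succ r ih =>
    have hmp := (measurePreserving_piFinSuccAbove (fun _ : Fin (r + 1) ↦ ρ) 0).symm
    have hcons (x₀ : X) (y : Fin r → X) :
        (fun i ↦ φ ((MeasurableEquiv.piFinSuccAbove (fun _ : Fin (r + 1) ↦ X) 0).symm (x₀, y) i)) =
          Fin.cons (φ x₀) fun i ↦ φ (y i) := by
      ext i
      cases i using Fin.cases <;> simp [MeasurableEquiv.piFinSuccAbove, Fin.insertNthEquiv]
    have hmeas := (measurable_enorm_det_vandermonde hφ (r + 1)).comp hmp.measurable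
    rw [← hmp.lintegral_comp (measurable_enorm_det_vandermonde hφ _),
      lintegral_prod_symm _ (by exact hmeas.aemeasurable)]
    simp only [hcons, enorm_det_vandermonde_cons]
    calc A ^ (r + 1) * δ ^ (r + 1).choose 2
        = (δ ^ r * A) * (A ^ r * δ ^ r.choose 2) := by
          rw [Nat.choose_succ_succ' r 1, Nat.choose_one_right]
          ring
      _ ≤ (δ ^ r * A) * ∫⁻ x : Fin r → X, ‖(Matrix.vandermonde fun i ↦ φ (x i)).det‖ₑ
            ∂Measure.pi fun _ ↦ ρ := by
          gcongr
          exact ih fun F hF ↦ h F (by omega)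
      _ = ∫⁻ x : Fin r → X, (δ ^ r * A) * ‖(Matrix.vandermonde fun i ↦ φ (x i)).det‖ₑ
            ∂Measure.pi fun _ ↦ ρ :=
          (lintegral_const_mul _ (measurable_enorm_det_vandermonde hφ _)).symm
      _ ≤ _ := by
          refine lintegral_mono fun y ↦ ?_
          rw [lintegral_mul_const _ (by fun_prop)]
          gcongr
          exact le_lintegral_prod_enorm_sub hφ _ fun F hF ↦ h F (by omega)

end Vandermonde

section LinearSublevel

variable {n : Type*} [Fintype n] [DecidableEq n]

lemma volume_abs_mulVec_add {A : Matrix n n ℝ} (hA : A.det ≠ 0) (w : n → ℝ) (r : ℝ) :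
    volume {q : n → ℝ | ∀ i, |A.mulVec q i + w i| ≤ r} * ‖A.det‖ₑ =
      ENNReal.ofReal (2 * r) ^ Fintype.card n := by
  have hdet : LinearMap.det (Matrix.toLin' A) ≠ 0 := by simpa using hA
  have hset : {q : n → ℝ | ∀ i, |A.mulVec q i + w i| ≤ r} =
      Matrix.toLin' A ⁻¹' Icc (fun i ↦ -r - w i) (fun i ↦ r - w i) := by
    ext q
    simp only [mem_ofPred_eq, mem_preimage, mem_Icc, Pi.le_def, Matrix.toLin'_apply, abs_le,
      ← forall_and, sub_le_iff_le_add, le_sub_iff_add_le]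
  have hwidth (i : n) : r - w i - (-r - w i) = 2 * r := by ring
  rw [hset, Measure.addHaar_preimage_linearMap volume hdet, Real.volume_Icc_pi,
    LinearMap.det_toLin', Real.enorm_eq_ofReal_abs, mul_right_comm,
    ← ENNReal.ofReal_mul (abs_nonneg _), ← abs_mul, inv_mul_cancel₀ hA]
  simp [hwidth]

lemma volume_abs_mulVec_add_le (A : Matrix n n ℝ) (w : n → ℝ) (r : ℝ) :
    volume {q : n → ℝ | ∀ i, |A.mulVec q i + w i| ≤ r} * ‖A.det‖ₑ ≤
      ENNReal.ofReal (2 * r) ^ Fintype.card n := by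
  by_cases hA : A.det = 0
  · simp [hA]
  · exact (volume_abs_mulVec_add hA w r).le

end LinearSublevel

/-! ### Sublevel sets of plane polynomials -/

/-- Index set of the monomials `u ^ i * v ^ j` with `i + j < n`. The recursion separates the powers
of `u` from the monomials divisible by `v`, which the derivative in `v` maps onto `TriIndex n`. -/
def TriIndex : ℕ → Type
  | 0 => Empty
  | n + 1 => Fin (n + 1) ⊕ TriIndex n

namespace TriIndex

instance instFintype : ∀ n, Fintype (TriIndex n)
  | 0 => inferInstanceAs (Fintype Empty)
  | n + 1 => @instFintypeSum (Fin (n + 1)) (TriIndex n) _ (instFintype n)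

instance instDecidableEq : ∀ n, DecidableEq (TriIndex n)
  | 0 => inferInstanceAs (DecidableEq Empty)
  | n + 1 => @instDecidableEqSum (Fin (n + 1)) (TriIndex n) _ (instDecidableEq n)

/-- The pair of exponents of the monomial with a given index. -/
def exp : ∀ {n}, TriIndex n → ℕ × ℕ
  | _ + 1, .inl i => (i, 0)
  | _ + 1, .inr t => ((exp t).1, (exp t).2 + 1)

/-- The monomial `u ^ i * v ^ j / j!`, normalised so that differentiation in `v` sends basis
monomials to basis monomials. -/
def mono {n : ℕ} (t : TriIndex n) (u v : ℝ) : ℝ :=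
  u ^ t.exp.1 * (v ^ t.exp.2 / (t.exp.2.factorial : ℝ))

lemma sum_succ {n : ℕ} {α : Type*} [AddCommMonoid α] (f : TriIndex (n + 1) → α) :
    ∑ t, f t = ∑ i : Fin (n + 1), f (.inl i) + ∑ t : TriIndex n, f (.inr t) :=
  Fintype.sum_sum_type f

lemma card_succ (n : ℕ) :
    Fintype.card (TriIndex (n + 1)) = n + 1 + Fintype.card (TriIndex n) := by
  change Fintype.card (Fin (n + 1) ⊕ TriIndex n) = _
  rw [Fintype.card_sum, Fintype.card_fin]

lemma card_eq_choose (n : ℕ) : Fintype.card (TriIndex n) = (n + 1).choose 2 := by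
  induction n with
  | zero => rfl
  | succ n ih => rw [card_succ, ih, Nat.choose_succ_succ' (n + 1) 1, Nat.choose_one_right]

lemma le_card (n : ℕ) : n ≤ Fintype.card (TriIndex n) := by
  cases n with
  | zero => exact Nat.zero_le _
  | succ n => rw [card_succ]; exact Nat.le_add_right _ _

lemma exp_add_lt : ∀ {n : ℕ} (t : TriIndex n), t.exp.1 + t.exp.2 < n
  | _ + 1, .inl i => i.2
  | _ + 1, .inr t => by
    have := exp_add_lt t
    simp only [exp]
    omega

lemma mono_inl {n : ℕ} (i : Fin (n + 1)) (u v : ℝ) :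
    mono (n := n + 1) (.inl i) u v = u ^ (i : ℕ) := by
  simp [mono, exp]

/-- Joins the coefficients of the powers of `u` with those of the monomials divisible by `v`. -/
def cons {n : ℕ} (q : Fin (n + 1) → ℝ) (c : TriIndex n → ℝ) : TriIndex (n + 1) → ℝ := Sum.elim q c

@[simp]
lemma cons_inr {n : ℕ} (q : Fin (n + 1) → ℝ) (c : TriIndex n → ℝ) (t : TriIndex n) :
    cons q c (.inr t) = c t := rfl

end TriIndex

/-- The value at `(u, v)` of the polynomial with coefficients `c` in the basis `TriIndex.mono`. -/
def triEval {n : ℕ} (c : TriIndex n → ℝ) (u v : ℝ) : ℝ := ∑ t, c t * t.mono u v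

/-- `triEval c u` as a polynomial in the second variable. -/
def triPoly {n : ℕ} (c : TriIndex n → ℝ) (u : ℝ) : Polynomial ℝ :=
  ∑ t : TriIndex n,
    Polynomial.C (c t * u ^ t.exp.1 / (t.exp.2.factorial : ℝ)) * Polynomial.X ^ t.exp.2

section Polynomials

variable {n : ℕ}

lemma eval_triPoly (c : TriIndex n → ℝ) (u v : ℝ) : (triPoly c u).eval v = triEval c u v := by
  simp only [triPoly, triEval, TriIndex.mono, Polynomial.eval_finsetSum, Polynomial.eval_mul,
    Polynomial.eval_C, Polynomial.eval_pow, Polynomial.eval_X]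
  exact Finset.sum_congr rfl fun t _ ↦ by ring

lemma natDegree_triPoly_le (c : TriIndex n → ℝ) (u : ℝ) : (triPoly c u).natDegree ≤ n := by
  refine Polynomial.natDegree_sum_le_of_forall_le _ _ fun t _ ↦ ?_
  refine (Polynomial.natDegree_C_mul_X_pow_le _ _).trans ?_
  have := t.exp_add_lt
  omega

lemma derivative_triPoly (c : TriIndex (n + 1) → ℝ) (u : ℝ) :
    (triPoly c u).derivative = triPoly (fun t : TriIndex n ↦ c (.inr t)) u := by
  unfold triPoly
  rw [TriIndex.sum_succ, Polynomial.derivative_add, Polynomial.derivative_sum,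
    Polynomial.derivative_sum, Finset.sum_eq_zero, zero_add]
  · refine Finset.sum_congr rfl fun t _ ↦ ?_
    have hexp : TriIndex.exp (n := n + 1) (.inr t) = (t.exp.1, t.exp.2 + 1) := rfl
    rw [Polynomial.derivative_C_mul_X_pow, hexp]
    simp only [Nat.add_sub_cancel]
    congr 2
    have hfac : (t.exp.2.factorial : ℝ) ≠ 0 := by positivity
    have hsucc : (t.exp.2 : ℝ) + 1 ≠ 0 := by positivity
    rw [Nat.factorial_succ]
    push_cast
    field_simp
  · intro i _
    have hexp : TriIndex.exp (n := n + 1) (.inl i) = ((i : ℕ), 0) := rfl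
    rw [Polynomial.derivative_C_mul_X_pow, hexp]
    simp

lemma triEval_cons (q : Fin (n + 1) → ℝ) (c : TriIndex n → ℝ) (u v : ℝ) :
    triEval (TriIndex.cons q c) u v =
      ∑ i, q i * u ^ (i : ℕ) + ∑ t : TriIndex n, c t * TriIndex.mono (n := n + 1) (.inr t) u v := by
  rw [triEval, TriIndex.sum_succ]
  simp only [TriIndex.mono_inl]
  rfl

lemma continuous_triEval :
    Continuous fun x : (TriIndex n → ℝ) × (ℝ × ℝ) ↦ triEval x.1 x.2.1 x.2.2 := by
  unfold triEval TriIndex.mono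
  fun_prop

lemma triEval_smul (r : ℝ) (c : TriIndex n → ℝ) (u v : ℝ) :
    triEval (r • c) u v = r * triEval c u v := by
  simp only [triEval, Finset.mul_sum, Pi.smul_apply, smul_eq_mul, mul_assoc]

end Polynomials

/-- The part of the unit square where the polynomial `triEval c` is at most one in modulus. -/
def triSublevel {n : ℕ} (c : TriIndex n → ℝ) : Set (ℝ × ℝ) :=
  {x | x ∈ Icc (0 : ℝ × ℝ) 1 ∧ |triEval c x.1 x.2| ≤ 1}

/-- The points of `triSublevel c` where the derivative in the second variable is at most
`4 * (n + 1) / μ` in modulus. -/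
def tameSublevel {n : ℕ} (μ : ℝ) (c : TriIndex (n + 1) → ℝ) : Set (ℝ × ℝ) :=
  {x | x ∈ triSublevel c ∧
    x ∈ triSublevel ((μ / (4 * (n + 1))) • fun t : TriIndex n ↦ c (.inr t))}

/-- The abscissae over which `triSublevel c` has a vertical slice of length at least `μ`. -/
def longFibers {n : ℕ} (μ : ℝ) (c : TriIndex n → ℝ) : Set ℝ :=
  {u | ENNReal.ofReal μ ≤ volume {v | (u, v) ∈ triSublevel c}}

section Sublevel

variable {n : ℕ}

lemma isClosed_triSublevel_prod (n : ℕ) :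
    IsClosed {y : (TriIndex n → ℝ) × (ℝ × ℝ) | y.2 ∈ triSublevel y.1} :=
  (isClosed_Icc.preimage continuous_snd).inter (isClosed_le continuous_triEval.abs continuous_const)

lemma measurableSet_triSublevel (c : TriIndex n → ℝ) : MeasurableSet (triSublevel c) :=
  measurable_prodMk_left (isClosed_triSublevel_prod n).measurableSet

lemma measurable_volume_triSublevel (n : ℕ) :
    Measurable fun c : TriIndex n → ℝ ↦ volume (triSublevel c) :=
  measurable_measure_prodMk_left (isClosed_triSublevel_prod n).measurableSet

lemma volume_triSublevel_le_one (c : TriIndex n → ℝ) : volume (triSublevel c) ≤ 1 := by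
  calc volume (triSublevel c) ≤ volume (Icc (0 : ℝ) 1 ×ˢ Icc (0 : ℝ) 1) :=
        measure_mono fun x hx ↦ by
          rw [Icc_prod_Icc]
          exact hx.1
    _ = 1 := by
        rw [Measure.volume_eq_prod, Measure.prod_prod]
        simp

lemma measurableSet_tameSublevel (μ : ℝ) (c : TriIndex (n + 1) → ℝ) :
    MeasurableSet (tameSublevel μ c) :=
  (measurableSet_triSublevel _).inter (measurableSet_triSublevel _)

lemma volume_tameSublevel_le (μ : ℝ) (c : TriIndex (n + 1) → ℝ) :
    volume (tameSublevel μ c) ≤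
      volume (triSublevel ((μ / (4 * (n + 1))) • fun t : TriIndex n ↦ c (.inr t))) :=
  measure_mono fun _ hx ↦ hx.2

lemma longFibers_subset {μ : ℝ} (hμ : 0 < μ) (c : TriIndex n → ℝ) : longFibers μ c ⊆ Icc 0 1 := by
  intro u hu
  by_contra h
  have hempty : {v | (u, v) ∈ triSublevel c} = ∅ :=
    eq_empty_of_forall_notMem fun v hv ↦ h ⟨hv.1.1.1, hv.1.2.1⟩
  rw [longFibers, mem_ofPred_eq, hempty, measure_empty, nonpos_iff_eq_zero,
    ENNReal.ofReal_eq_zero] at hu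
  exact hμ.not_ge hu

lemma volume_longFibers_le_one {μ : ℝ} (hμ : 0 < μ) (c : TriIndex n → ℝ) :
    volume (longFibers μ c) ≤ 1 :=
  (measure_mono (longFibers_subset hμ c)).trans_eq (by simp)

lemma measurableSet_longFibers_prod (μ : ℝ) :
    MeasurableSet {y : (TriIndex n → ℝ) × ℝ | y.2 ∈ longFibers μ y.1} := by
  have hassoc : Continuous fun y : ((TriIndex n → ℝ) × ℝ) × ℝ ↦ (y.1.1, (y.1.2, y.2)) := by
    fun_prop
  exact measurableSet_le measurable_const (measurable_measure_prodMk_left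
    ((isClosed_triSublevel_prod n).preimage hassoc).measurableSet)

lemma measurableSet_longFibers (μ : ℝ) (c : TriIndex n → ℝ) : MeasurableSet (longFibers μ c) :=
  measurable_prodMk_left (measurableSet_longFibers_prod μ)

lemma measurable_volume_longFibers (n : ℕ) (μ : ℝ) :
    Measurable fun c : TriIndex n → ℝ ↦ volume (longFibers μ c) :=
  measurable_measure_prodMk_left (measurableSet_longFibers_prod μ)

lemma half_le_volume_slice_tameSublevel {μ : ℝ} (hμ : 0 < μ) (c : TriIndex (n + 1) → ℝ) {u : ℝ}
    (hu : u ∈ longFibers μ c) :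
    ENNReal.ofReal (μ / 2) ≤ volume {v | (u, v) ∈ tameSublevel μ c} := by
  set D : ℝ := 4 * (n + 1) with hD
  have hD0 : 0 < D := by positivity
  set steep : Set ℝ :=
    {v | |(triPoly c u).eval v| ≤ 1 ∧ D / μ < |(triPoly c u).derivative.eval v|} with hsteep
  have hsteep_le : volume steep ≤ ENNReal.ofReal (μ / 2) := by
    have hL : ENNReal.ofReal (D / μ) ≠ 0 := by simpa using div_pos hD0 hμ
    rw [← ENNReal.mul_le_mul_iff_right hL ENNReal.ofReal_ne_top]
    calc ENNReal.ofReal (D / μ) * volume steep ≤ 2 * (triPoly c u).natDegree :=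
          ofReal_mul_volume_abs_polynomial_le_one_lt_abs_derivative_le _ _
      _ ≤ 2 * (n + 1 : ℕ) := by gcongr; exact natDegree_triPoly_le c u
      _ = ENNReal.ofReal (D / μ * (μ / 2)) := by
          have hDμ : D / μ * (μ / 2) = ((2 * (n + 1) : ℕ) : ℝ) := by
            rw [hD]
            push_cast
            field_simp
            ring
          rw [hDμ, ENNReal.ofReal_natCast]
          push_cast
          ring
      _ = ENNReal.ofReal (D / μ) * ENNReal.ofReal (μ / 2) := ENNReal.ofReal_mul (by positivity)
  have hcover : {v | (u, v) ∈ triSublevel c} ⊆ {v | (u, v) ∈ tameSublevel μ c} ∪ steep := by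
    refine fun v hv ↦ or_iff_not_imp_right.2 fun h ↦ ⟨hv, hv.1, ?_⟩
    simp only [hsteep, mem_ofPred_eq, not_and, not_lt, derivative_triPoly, eval_triPoly] at h
    rw [triEval_smul, abs_mul, abs_of_pos (by positivity)]
    calc μ / D * _ ≤ μ / D * (D / μ) := by gcongr; exact h hv.2
      _ = 1 := by field_simp
  refine ENNReal.le_of_add_le_add_right (a := ENNReal.ofReal (μ / 2)) ENNReal.ofReal_ne_top ?_
  rw [← ENNReal.ofReal_add (by positivity) (by positivity), add_halves]
  calc ENNReal.ofReal μ ≤ volume {v | (u, v) ∈ triSublevel c} := hu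
    _ ≤ volume {v | (u, v) ∈ tameSublevel μ c} + volume steep :=
        (measure_mono hcover).trans (measure_union_le _ _)
    _ ≤ volume {v | (u, v) ∈ tameSublevel μ c} + ENNReal.ofReal (μ / 2) := by gcongr

lemma mul_volume_le_volume_tameSublevel {μ : ℝ} (hμ : 0 < μ) (c : TriIndex (n + 1) → ℝ) {E : Set ℝ}
    (hE : E ⊆ longFibers μ c) (hEm : MeasurableSet E) :
    ENNReal.ofReal (μ / 2) * volume E ≤ volume (tameSublevel μ c ∩ Prod.fst ⁻¹' E) := by
  rw [Measure.volume_eq_prod, ← setLIntegral_const, Measure.prod_apply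
    ((measurableSet_tameSublevel μ c).inter (measurable_fst hEm))]
  refine (setLIntegral_mono' hEm fun u hu ↦ ?_).trans (setLIntegral_le_lintegral E _)
  exact (half_le_volume_slice_tameSublevel hμ c (hE hu)).trans (measure_mono fun v hv ↦ ⟨hv, hu⟩)

lemma ofReal_mul_volume_longFibers_le {μ : ℝ} (hμ : 0 < μ) (c : TriIndex (n + 1) → ℝ) :
    ENNReal.ofReal μ * volume (longFibers μ c) ≤
      2 * volume (triSublevel ((μ / (4 * (n + 1))) • fun t : TriIndex n ↦ c (.inr t))) := by
  have hhalf := (mul_volume_le_volume_tameSublevel hμ c le_rfl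
    (measurableSet_longFibers μ c)).trans (measure_mono inter_subset_left)
  calc ENNReal.ofReal μ * volume (longFibers μ c)
      = 2 * (ENNReal.ofReal (μ / 2) * volume (longFibers μ c)) := by
        rw [← mul_assoc, ← ENNReal.ofReal_ofNat 2, ← ENNReal.ofReal_mul zero_le_two,
          mul_div_cancel₀ _ two_ne_zero]
    _ ≤ _ := by gcongr; exact hhalf.trans (volume_tameSublevel_le μ c)

end Sublevel

/-- The integral over `S ^ r` of the Vandermonde determinant of the abscissae of `r` points. -/
def vandermondeEnergy (r : ℕ) (S : Set (ℝ × ℝ)) : ℝ≥0∞ :=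
  ∫⁻ x : Fin r → ℝ × ℝ, ‖(Matrix.vandermonde fun i ↦ (x i).1).det‖ₑ
    ∂Measure.pi fun _ ↦ volume.restrict S

section VandermondeEnergy

variable {n : ℕ}

lemma half_volume_le_volume_diff_eball {s : Set ℝ} (hs : volume s ≠ ⊤) {F : Finset ℝ} {δ : ℝ≥0∞}
    (hδ : F.card * (2 * δ) ≤ volume s / 2) :
    volume s / 2 ≤ volume (s \ ⋃ t ∈ F, Metric.eball t δ) := by
  have hballs : volume (⋃ t ∈ F, Metric.eball t δ) ≤ volume s / 2 := by
    refine (measure_biUnion_finset_le _ _).trans ?_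
    simpa only [Real.volume_eball, Finset.sum_const, nsmul_eq_mul] using hδ
  refine ENNReal.le_of_add_le_add_right (a := volume s / 2) (by finiteness) ?_
  calc volume s / 2 + volume s / 2 = volume s := ENNReal.add_halves _
    _ ≤ volume (s \ ⋃ t ∈ F, Metric.eball t δ) + volume (⋃ t ∈ F, Metric.eball t δ) :=
        (measure_le_inter_add_sdiff _ _ _).trans <| by
          rw [add_comm]
          gcongr
          exact inter_subset_right
    _ ≤ volume (s \ ⋃ t ∈ F, Metric.eball t δ) + volume s / 2 := by gcongr

lemma natCast_mul_two_mul_div_le {r : ℕ} (hr : r ≤ n) (ν : ℝ≥0∞) :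
    (r : ℝ≥0∞) * (2 * (ν / (4 * (n + 1)))) ≤ ν / 2 := by
  have hn : ((n : ℝ≥0∞) + 1) * ((n : ℝ≥0∞) + 1)⁻¹ = 1 :=
    ENNReal.mul_inv_cancel (by simp) (by finiteness)
  have h2 : (2 : ℝ≥0∞) * 2⁻¹ = 1 := ENNReal.mul_inv_cancel (by simp) (by simp)
  have hr' : (r : ℝ≥0∞) ≤ n + 1 := by exact_mod_cast hr.trans n.le_succ
  have h4 : (4 : ℝ≥0∞)⁻¹ = 2⁻¹ * 2⁻¹ := by
    rw [← ENNReal.mul_inv (by simp) (by simp)]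
    norm_num
  calc (r : ℝ≥0∞) * (2 * (ν / (4 * (n + 1)))) ≤ (n + 1) * (2 * (ν / (4 * (n + 1)))) := by gcongr
    _ = ((n + 1) * ((n : ℝ≥0∞) + 1)⁻¹) * (2 * 2⁻¹) * (ν * 2⁻¹) := by
        rw [ENNReal.div_eq_inv_mul, ENNReal.mul_inv (by simp) (by simp), h4]
        ring
    _ = ν / 2 := by rw [hn, h2, one_mul, one_mul, div_eq_mul_inv]

lemma le_vandermondeEnergy_tameSublevel {μ : ℝ} (hμ : 0 < μ) (c : TriIndex (n + 1) → ℝ) :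
    (ENNReal.ofReal (μ / 2) * (volume (longFibers μ c) / 2)) ^ (n + 1) *
      (volume (longFibers μ c) / (4 * (n + 1))) ^ Fintype.card (TriIndex n) ≤
    vandermondeEnergy (n + 1) (tameSublevel μ c) := by
  set ν := volume (longFibers μ c)
  have hν_top : ν ≠ ⊤ := ((volume_longFibers_le_one hμ c).trans_lt ENNReal.one_lt_top).ne
  rw [TriIndex.card_eq_choose]
  refine le_lintegral_enorm_det_vandermonde _ (φ := Prod.fst) measurable_fst _ fun F hF ↦ ?_
  set δ := ν / (4 * (n + 1))
  set far := longFibers μ c \ ⋃ t ∈ F, Metric.eball t δ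
  have hfar : MeasurableSet far := (measurableSet_longFibers μ c).diff
    (Finset.measurableSet_biUnion _ fun t _ ↦ Metric.isOpen_eball.measurableSet)
  calc ENNReal.ofReal (μ / 2) * (ν / 2) ≤ ENNReal.ofReal (μ / 2) * volume far := by
        gcongr
        exact half_volume_le_volume_diff_eball hν_top
          (natCast_mul_two_mul_div_le (Nat.lt_succ_iff.1 hF) ν)
    _ ≤ volume (tameSublevel μ c ∩ Prod.fst ⁻¹' far) :=
        mul_volume_le_volume_tameSublevel hμ c sdiff_subset hfar
    _ ≤ _ := by
      rw [Measure.restrict_apply' (measurableSet_tameSublevel μ c), inter_comm]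
      refine measure_mono (inter_subset_inter_left _ fun x hx t ht ↦ ?_)
      have hball : x.1 ∉ Metric.eball t δ := fun h ↦ hx.2 (mem_biUnion ht h)
      rwa [Metric.mem_eball, not_lt, edist_comm, edist_eq_enorm_sub] at hball

lemma ofReal_mul_volume_longFibers_pow_le {μ : ℝ} (hμ : 0 < μ) (c : TriIndex (n + 1) → ℝ) :
    (ENNReal.ofReal μ * volume (longFibers μ c)) ^ (n + 1 + Fintype.card (TriIndex n)) ≤
      4 ^ (n + 1) * (4 * (n + 1)) ^ Fintype.card (TriIndex n) *
        ENNReal.ofReal μ ^ Fintype.card (TriIndex n) *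
          vandermondeEnergy (n + 1) (tameSublevel μ c) := by
  set m := ENNReal.ofReal μ
  set ν := volume (longFibers μ c)
  set M := Fintype.card (TriIndex n)
  set D : ℝ≥0∞ := 4 * (n + 1) with hD
  have h2 : (2 : ℝ≥0∞) * 2⁻¹ = 1 := ENNReal.mul_inv_cancel (by simp) (by simp)
  have hDinv : D * D⁻¹ = 1 := ENNReal.mul_inv_cancel (by simp [hD]) (by rw [hD]; finiteness)
  have hhalf : ENNReal.ofReal (μ / 2) = m * 2⁻¹ := by
    rw [ENNReal.ofReal_div_of_pos two_pos, ENNReal.ofReal_ofNat, div_eq_mul_inv]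
  calc (m * ν) ^ (n + 1 + M)
      = (2 * 2⁻¹ * (2 * 2⁻¹) * (m * ν)) ^ (n + 1) * (D * D⁻¹ * m * ν) ^ M := by
        rw [h2, hDinv]
        ring
    _ = (2 * 2) ^ (n + 1) * D ^ M * m ^ M *
          ((ENNReal.ofReal (μ / 2) * (ν / 2)) ^ (n + 1) * (ν / D) ^ M) := by
        rw [hhalf]
        simp only [div_eq_mul_inv, mul_pow]
        ring
    _ ≤ 4 ^ (n + 1) * D ^ M * m ^ M * vandermondeEnergy (n + 1) (tameSublevel μ c) := by
        norm_num only
        gcongr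
        exact le_vandermondeEnergy_tameSublevel hμ c

/- For fixed `x` the factor `‖det (A x)‖` cancels the volume of the set of `q` with
`|A x q + w x| ≤ 1`. -/
lemma lintegral_lintegral_enorm_det_le {X n : Type*} [MeasurableSpace X] [Fintype n]
    [DecidableEq n] (ρ : Measure X) [SFinite ρ] {A : X → Matrix n n ℝ} {w : X → n → ℝ}
    (hA : ∀ i j, Measurable fun x ↦ A x i j) (hw : ∀ i, Measurable fun x ↦ w x i) :
    ∫⁻ q : n → ℝ, ∫⁻ x in {x | ∀ i, |(A x).mulVec q i + w x i| ≤ 1}, ‖(A x).det‖ₑ ∂ρ ≤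
      2 ^ Fintype.card n * ρ univ := by
  set Z : Set ((n → ℝ) × X) := {y | ∀ i, |(A y.2).mulVec y.1 i + w y.2 i| ≤ 1} with hZ
  have hdet : Measurable fun x ↦ ‖(A x).det‖ₑ := by
    simp_rw [Matrix.det_apply]
    fun_prop
  have hZm : MeasurableSet Z := by
    rw [hZ, ofPred_forall]
    refine MeasurableSet.iInter fun i ↦ measurableSet_le ?_ measurable_const
    simp only [Matrix.mulVec, dotProduct]
    fun_prop
  have hslice (q : n → ℝ) : ∫⁻ x in {x | ∀ i, |(A x).mulVec q i + w x i| ≤ 1}, ‖(A x).det‖ₑ ∂ρ =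
      ∫⁻ x, ‖(A x).det‖ₑ * Z.indicator 1 (q, x) ∂ρ := by
    have hqZ : MeasurableSet {x | ∀ i, |(A x).mulVec q i + w x i| ≤ 1} :=
      measurable_prodMk_left hZm
    rw [← lintegral_indicator hqZ]
    congr 1 with x
    simp [indicator, hZ]
  simp_rw [hslice]
  rw [lintegral_lintegral_swap
    ((hdet.comp measurable_snd).mul (measurable_one.indicator hZm)).aemeasurable]
  calc ∫⁻ x, (∫⁻ q : n → ℝ, ‖(A x).det‖ₑ * Z.indicator 1 (q, x)) ∂ρ
      ≤ ∫⁻ _, 2 ^ Fintype.card n ∂ρ := by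
        refine lintegral_mono fun x ↦ ?_
        have hvol := volume_abs_mulVec_add_le (A x) (w x) 1
        rw [mul_one, ENNReal.ofReal_ofNat] at hvol
        refine le_of_eq_of_le ?_ hvol
        rw [lintegral_const_mul' _ _ (by finiteness), mul_comm]
        congr 1
        exact lintegral_indicator_one (measurable_prodMk_right hZm)
    _ = 2 ^ Fintype.card n * ρ univ := lintegral_const _

lemma lintegral_vandermondeEnergy_cons_le (μ : ℝ) (c : TriIndex n → ℝ) :
    ∫⁻ q : Fin (n + 1) → ℝ, vandermondeEnergy (n + 1) (tameSublevel μ (TriIndex.cons q c)) ≤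
      2 ^ (n + 1) * volume (triSublevel ((μ / (4 * (n + 1))) • c)) ^ (n + 1) := by
  set T := triSublevel ((μ / (4 * (n + 1))) • c)
  set V : (Fin (n + 1) → ℝ × ℝ) → Matrix (Fin (n + 1)) (Fin (n + 1)) ℝ :=
    fun x ↦ Matrix.vandermonde fun i ↦ (x i).1
  set w : (Fin (n + 1) → ℝ × ℝ) → Fin (n + 1) → ℝ :=
    fun x l ↦ ∑ t : TriIndex n, c t * TriIndex.mono (n := n + 1) (.inr t) (x l).1 (x l).2
  have heval (q : Fin (n + 1) → ℝ) (x : Fin (n + 1) → ℝ × ℝ) (l : Fin (n + 1)) :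
      triEval (TriIndex.cons q c) (x l).1 (x l).2 = (V x).mulVec q l + w x l := by
    rw [triEval_cons]
    simp only [V, w, Matrix.mulVec, dotProduct, Matrix.vandermonde_apply, mul_comm (q _)]
  have henergy (q : Fin (n + 1) → ℝ) :
      vandermondeEnergy (n + 1) (tameSublevel μ (TriIndex.cons q c)) ≤
        ∫⁻ x in {x | ∀ l, |(V x).mulVec q l + w x l| ≤ 1}, ‖(V x).det‖ₑ
          ∂Measure.pi fun _ ↦ volume.restrict T := by
    rw [vandermondeEnergy, ← Measure.restrict_pi_pi, ← Measure.restrict_pi_pi,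
      Measure.restrict_restrict' (MeasurableSet.univ_pi fun _ ↦ measurableSet_triSublevel _)]
    refine lintegral_mono_set fun x hx ↦ ⟨fun l ↦ ?_, fun l hl ↦ ?_⟩
    · rw [← heval]
      exact (hx l (mem_univ l)).1.2
    · exact (hx l hl).2
  refine (lintegral_mono henergy).trans ((lintegral_lintegral_enorm_det_le _ ?_ ?_).trans_eq ?_)
  · intro i j
    simp only [V, Matrix.vandermonde_apply]
    fun_prop
  · intro l
    simp only [w, TriIndex.mono]
    fun_prop
  · rw [Measure.pi_univ]
    simp

lemma lintegral_triIndex_succ_le (f : (TriIndex (n + 1) → ℝ) → ℝ≥0∞) :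
    ∫⁻ c, f c ≤ ∫⁻ c : TriIndex n → ℝ, ∫⁻ q : Fin (n + 1) → ℝ, f (TriIndex.cons q c) := by
  have hsplit := (volume_measurePreserving_sumPiEquivProdPi_symm
    fun _ : Fin (n + 1) ⊕ TriIndex n ↦ ℝ).lintegral_comp_emb
      (MeasurableEquiv.measurableEmbedding _) f
  refine hsplit.symm.le.trans ?_
  rw [Measure.volume_eq_prod, ← lintegral_prod_swap]
  exact lintegral_prod_le _

lemma lintegral_pi_comp_smul {ι : Type*} [Fintype ι] {r : ℝ} (hr : r ≠ 0) {f : (ι → ℝ) → ℝ≥0∞}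
    (hf : Measurable f) :
    ∫⁻ x, f (r • x) = ENNReal.ofReal |(r ^ Fintype.card ι)⁻¹| * ∫⁻ x, f x := by
  rw [← lintegral_map hf (by fun_prop), Measure.map_addHaar_smul volume hr,
    lintegral_smul_measure, Module.finrank_fintype_fun_eq_card, smul_eq_mul]

end VandermondeEnergy

section LongFibers

variable {n : ℕ} {μ β ε : ℝ}

lemma ofReal_mul_volume_longFibers_rpow_le (hμ : 0 < μ) (hβ : n + 1 ≤ β) (hε : 0 ≤ ε)
    (c : TriIndex (n + 1) → ℝ) :
    (ENNReal.ofReal μ * volume (longFibers μ c)) ^ (β + Fintype.card (TriIndex n) + ε) ≤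
      4 ^ (n + 1) * (4 * (n + 1)) ^ Fintype.card (TriIndex n) * 2 ^ (β - (n + 1)) *
          ENNReal.ofReal μ ^ Fintype.card (TriIndex n) * ENNReal.ofReal μ ^ ε *
        (vandermondeEnergy (n + 1) (tameSublevel μ c) *
          volume (triSublevel ((μ / (4 * (n + 1))) • fun t : TriIndex n ↦ c (.inr t))) ^
            (β - (n + 1))) := by
  set M := Fintype.card (TriIndex n)
  set m := ENNReal.ofReal μ
  set ν := volume (longFibers μ c)
  set T := volume (triSublevel ((μ / (4 * (n + 1))) • fun t : TriIndex n ↦ c (.inr t)))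
  have hβ' : 0 ≤ β - (n + 1) := sub_nonneg.2 hβ
  have hexp : β + M + ε = ((n + 1 + M : ℕ) : ℝ) + (β - (n + 1)) + ε := by
    push_cast
    ring
  calc (m * ν) ^ (β + M + ε)
      = (m * ν) ^ (n + 1 + M) * (m * ν) ^ (β - (n + 1)) * (m * ν) ^ ε := by
        rw [hexp, ENNReal.rpow_add_of_nonneg _ _ (by positivity) hε,
          ENNReal.rpow_add_of_nonneg _ _ (by positivity) hβ', ENNReal.rpow_natCast]
    _ ≤ (4 ^ (n + 1) * (4 * (n + 1)) ^ M * m ^ M *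
          vandermondeEnergy (n + 1) (tameSublevel μ c)) * (2 * T) ^ (β - (n + 1)) * m ^ ε := by
        gcongr ?_ * ?_ ^ _ * ?_ ^ _
        · exact ofReal_mul_volume_longFibers_pow_le hμ c
        · exact ofReal_mul_volume_longFibers_le hμ c
        · exact mul_le_of_le_one_right' (volume_longFibers_le_one hμ c)
    _ = _ := by
        rw [ENNReal.mul_rpow_of_nonneg _ _ hβ']
        ring

lemma lintegral_vandermondeEnergy_mul_le (μ : ℝ) (hβ : n + 1 ≤ β) :
    ∫⁻ c : TriIndex (n + 1) → ℝ, vandermondeEnergy (n + 1) (tameSublevel μ c) *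
        volume (triSublevel ((μ / (4 * (n + 1))) • fun t : TriIndex n ↦ c (.inr t))) ^
          (β - (n + 1)) ≤
      2 ^ (n + 1) * ∫⁻ c : TriIndex n → ℝ, volume (triSublevel ((μ / (4 * (n + 1))) • c)) ^ β := by
  refine (lintegral_triIndex_succ_le _).trans ?_
  rw [← lintegral_const_mul' _ _ (by finiteness)]
  refine lintegral_mono fun c ↦ ?_
  simp only [TriIndex.cons_inr]
  set T := volume (triSublevel ((μ / (4 * (n + 1))) • c))
  have hT_top : T ≠ ⊤ := ((volume_triSublevel_le_one _).trans_lt ENNReal.one_lt_top).ne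
  have hβ' : 0 ≤ β - (n + 1) := sub_nonneg.2 hβ
  calc ∫⁻ q, vandermondeEnergy (n + 1) (tameSublevel μ (TriIndex.cons q c)) * T ^ (β - (n + 1))
      ≤ 2 ^ (n + 1) * T ^ (n + 1) * T ^ (β - (n + 1)) := by
        rw [lintegral_mul_const' _ _ (ENNReal.rpow_ne_top_of_nonneg hβ' hT_top)]
        gcongr
        exact lintegral_vandermondeEnergy_cons_le μ c
    _ = 2 ^ (n + 1) * T ^ β := by
        rw [mul_assoc, ← ENNReal.rpow_natCast T,
          ← ENNReal.rpow_add_of_nonneg _ _ (by positivity) hβ']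
        push_cast
        rw [add_sub_cancel]

lemma ofReal_pow_mul_lintegral_volume_triSublevel_smul (hμ : 0 < μ) (β : ℝ) :
    ENNReal.ofReal μ ^ Fintype.card (TriIndex n) *
        ∫⁻ c : TriIndex n → ℝ, volume (triSublevel ((μ / (4 * (n + 1))) • c)) ^ β =
      (4 * (n + 1)) ^ Fintype.card (TriIndex n) *
        ∫⁻ c : TriIndex n → ℝ, volume (triSublevel c) ^ β := by
  have hD : (4 * (n + 1) : ℝ≥0∞) = ENNReal.ofReal (4 * (n + 1)) := by
    rw [ENNReal.ofReal_mul zero_le_four, ENNReal.ofReal_add (by positivity) zero_le_one]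
    simp
  rw [lintegral_pi_comp_smul (by positivity) ((measurable_volume_triSublevel n).pow_const β),
    ← mul_assoc, hD, ← ENNReal.ofReal_pow hμ.le, ← ENNReal.ofReal_pow (by positivity),
    ← ENNReal.ofReal_mul (by positivity), abs_of_pos (by positivity)]
  congr 2
  rw [div_pow]
  field_simp

lemma exists_lintegral_longFibers_rpow_le (hβ : n + 1 ≤ β)
    (hK : ∫⁻ c : TriIndex n → ℝ, volume (triSublevel c) ^ β ≠ ⊤) (hε : 0 ≤ ε) :
    ∃ C : ℝ≥0∞, C ≠ ⊤ ∧ ∀ μ : ℝ, 0 < μ →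
      ∫⁻ c : TriIndex (n + 1) → ℝ, (ENNReal.ofReal μ * volume (longFibers μ c)) ^
        (β + Fintype.card (TriIndex n) + ε) ≤ C * ENNReal.ofReal μ ^ ε := by
  set M := Fintype.card (TriIndex n)
  set K := ∫⁻ c : TriIndex n → ℝ, volume (triSublevel c) ^ β
  set B : ℝ≥0∞ := 4 ^ (n + 1) * (4 * (n + 1)) ^ M * 2 ^ (β - (n + 1))
  have hB : B ≠ ⊤ := by finiteness
  refine ⟨B * 2 ^ (n + 1) * (4 * (n + 1)) ^ M * K, by finiteness, fun μ hμ ↦ ?_⟩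
  set m := ENNReal.ofReal μ
  have hm : m ≠ 0 := by simpa [m] using hμ
  calc ∫⁻ c : TriIndex (n + 1) → ℝ, (m * volume (longFibers μ c)) ^ (β + M + ε)
      ≤ B * m ^ M * m ^ ε * ∫⁻ c : TriIndex (n + 1) → ℝ,
          vandermondeEnergy (n + 1) (tameSublevel μ c) * volume (triSublevel
            ((μ / (4 * (n + 1))) • fun t : TriIndex n ↦ c (.inr t))) ^ (β - (n + 1)) := by
        rw [← lintegral_const_mul' _ _ (by finiteness)]
        exact lintegral_mono (ofReal_mul_volume_longFibers_rpow_le hμ hβ hε)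
    _ ≤ B * m ^ M * m ^ ε * (2 ^ (n + 1) * ∫⁻ c : TriIndex n → ℝ,
          volume (triSublevel ((μ / (4 * (n + 1))) • c)) ^ β) := by
        gcongr
        exact lintegral_vandermondeEnergy_mul_le μ hβ
    _ = B * 2 ^ (n + 1) * m ^ ε * (m ^ M * ∫⁻ c : TriIndex n → ℝ,
          volume (triSublevel ((μ / (4 * (n + 1))) • c)) ^ β) := by ring
    _ = B * 2 ^ (n + 1) * (4 * (n + 1)) ^ M * K * m ^ ε := by
        rw [ofReal_pow_mul_lintegral_volume_triSublevel_smul hμ]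
        ring

end LongFibers

lemma tsum_two_rpow_neg_pow_ne_top {δ : ℝ} (hδ : 0 < δ) :
    ∑' j : ℕ, ((2 : ℝ≥0∞) ^ (-δ)) ^ j ≠ ⊤ := by
  have hlt : (2 : ℝ≥0∞) ^ (-δ) < 1 :=
    ENNReal.rpow_lt_one_of_one_lt_of_neg ENNReal.one_lt_two (neg_lt_zero.2 hδ)
  rw [ENNReal.tsum_geometric]
  exact ENNReal.inv_ne_top.2 (tsub_pos_of_lt hlt).ne'

lemma exists_tsum_rpow_le_mul_tsum {θ δ : ℝ} (hθ : 0 < θ) (hδ : 0 < δ) :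
    ∃ C : ℝ≥0∞, C ≠ ⊤ ∧ ∀ a : ℕ → ℝ≥0∞,
      (∑' j, a j) ^ θ ≤ C * ∑' j : ℕ, (2 : ℝ≥0∞) ^ (j * δ) * a j ^ θ := by
  have hw := tsum_two_rpow_neg_pow_ne_top (div_pos hδ hθ)
  set w : ℕ → ℝ≥0∞ := fun j ↦ ((2 : ℝ≥0∞) ^ (-(δ / θ))) ^ j
  refine ⟨(∑' j, w j) ^ θ, ENNReal.rpow_ne_top_of_nonneg hθ.le hw, fun a ↦ ?_⟩
  set S := ∑' j : ℕ, (2 : ℝ≥0∞) ^ (j * δ) * a j ^ θ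
  have hle (j : ℕ) : a j ≤ w j * S ^ (1 / θ) := by
    have hterm : (2 : ℝ≥0∞) ^ (j * (δ / θ)) * a j ≤ S ^ (1 / θ) := by
      rw [one_div, ENNReal.le_rpow_inv_iff hθ, ENNReal.mul_rpow_of_nonneg _ _ hθ.le,
        ← ENNReal.rpow_mul, mul_assoc, div_mul_cancel₀ _ hθ.ne']
      exact ENNReal.le_tsum (f := fun j : ℕ ↦ (2 : ℝ≥0∞) ^ (j * δ) * a j ^ θ) j
    calc a j = w j * ((2 : ℝ≥0∞) ^ (j * (δ / θ)) * a j) := by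
          simp only [w]
          rw [← ENNReal.rpow_natCast, ← ENNReal.rpow_mul, ← mul_assoc,
            ← ENNReal.rpow_add _ _ two_ne_zero ENNReal.ofNat_ne_top, neg_mul,
            mul_comm (δ / θ), neg_add_cancel, ENNReal.rpow_zero, one_mul]
      _ ≤ w j * S ^ (1 / θ) := by gcongr
  calc (∑' j, a j) ^ θ ≤ (∑' j, w j * S ^ (1 / θ)) ^ θ := by
        gcongr with j
        exact hle j
    _ = (∑' j, w j) ^ θ * S := by
        rw [ENNReal.tsum_mul_right, ENNReal.mul_rpow_of_nonneg _ _ hθ.le, ← ENNReal.rpow_mul,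
          one_div_mul_cancel hθ.ne', ENNReal.rpow_one]

section Integrability

variable {n : ℕ}

lemma le_tsum_indicator_dyadic {s : ℝ≥0∞} (hs : s ≤ 1) :
    s ≤ ∑' j : ℕ, {t | ENNReal.ofReal ((1 / 2) ^ (j + 1)) ≤ t}.indicator
      (fun _ ↦ 2 * ENNReal.ofReal ((1 / 2) ^ (j + 1))) s := by
  rcases eq_or_ne s 0 with rfl | h0
  · exact zero_le
  have hs_top : s ≠ ⊤ := (hs.trans_lt ENNReal.one_lt_top).ne
  obtain ⟨j, hj, hj'⟩ := exists_nat_pow_near_of_lt_one (y := (1 / 2 : ℝ))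
    (ENNReal.toReal_pos h0 hs_top) (ENNReal.toReal_le_of_le_ofReal zero_le_one (by simpa using hs))
    (by norm_num) (by norm_num)
  have hmem : s ∈ {t | ENNReal.ofReal ((1 / 2) ^ (j + 1)) ≤ t} :=
    (ENNReal.ofReal_le_iff_le_toReal hs_top).2 hj.le
  refine le_trans ?_ (ENNReal.le_tsum j)
  rw [indicator_of_mem hmem, ← ENNReal.ofReal_toReal hs_top, ← ENNReal.ofReal_ofNat 2,
    ← ENNReal.ofReal_mul zero_le_two]
  refine ENNReal.ofReal_le_ofReal (hj'.trans_eq ?_)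
  ring

lemma volume_triSublevel_le_tsum (c : TriIndex n → ℝ) :
    volume (triSublevel c) ≤ ∑' j : ℕ, 2 * (ENNReal.ofReal ((1 / 2) ^ (j + 1)) *
      volume (longFibers ((1 / 2) ^ (j + 1)) c)) := by
  have hslice (u : ℝ) : volume {v | (u, v) ∈ triSublevel c} ≤ 1 :=
    (measure_mono fun v hv ↦ ⟨hv.1.1.2, hv.1.2.2⟩ : _ ≤ volume (Icc (0 : ℝ) 1)).trans_eq (by simp)
  calc volume (triSublevel c) = ∫⁻ u, volume {v | (u, v) ∈ triSublevel c} := by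
        rw [Measure.volume_eq_prod, Measure.prod_apply (measurableSet_triSublevel c)]
        rfl
    _ ≤ ∫⁻ u, ∑' j : ℕ, (longFibers ((1 / 2) ^ (j + 1)) c).indicator
          (fun _ ↦ 2 * ENNReal.ofReal ((1 / 2) ^ (j + 1))) u :=
        lintegral_mono fun u ↦ le_tsum_indicator_dyadic (hslice u)
    _ = _ := by
        rw [lintegral_tsum fun j ↦
          (measurable_const.indicator (measurableSet_longFibers _ c)).aemeasurable]
        refine tsum_congr fun j ↦ ?_
        rw [lintegral_indicator_const (measurableSet_longFibers _ c), mul_assoc]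

lemma two_rpow_mul_ofReal_half_pow_rpow (j : ℕ) (ε : ℝ) :
    (2 : ℝ≥0∞) ^ (j * (ε / 2)) * ENNReal.ofReal ((1 / 2) ^ (j + 1)) ^ ε =
      2 ^ (-ε) * ((2 : ℝ≥0∞) ^ (-(ε / 2))) ^ j := by
  rw [ENNReal.ofReal_pow one_half_pos.le, one_div, ENNReal.ofReal_inv_of_pos two_pos,
    ENNReal.ofReal_ofNat, ← ENNReal.rpow_neg_one, ← ENNReal.rpow_natCast, ← ENNReal.rpow_natCast,
    ← ENNReal.rpow_mul, ← ENNReal.rpow_mul, ← ENNReal.rpow_mul,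
    ← ENNReal.rpow_add _ _ two_ne_zero ENNReal.ofNat_ne_top,
    ← ENNReal.rpow_add _ _ two_ne_zero ENNReal.ofNat_ne_top]
  congr 1
  push_cast
  ring

lemma lintegral_volume_triSublevel_succ_rpow_ne_top {β ε : ℝ} (hβ : n + 1 ≤ β)
    (hK : ∫⁻ c : TriIndex n → ℝ, volume (triSublevel c) ^ β ≠ ⊤) (hε : 0 < ε) :
    ∫⁻ c : TriIndex (n + 1) → ℝ,
      volume (triSublevel c) ^ (β + Fintype.card (TriIndex n) + ε) ≠ ⊤ := by
  set θ : ℝ := β + Fintype.card (TriIndex n) + ε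
  have hβ0 : 0 < β := lt_of_lt_of_le (by positivity) hβ
  have hθ : 0 < θ := by positivity
  obtain ⟨C, hC, hlong⟩ := exists_lintegral_longFibers_rpow_le hβ hK hε.le
  obtain ⟨B, hB, htsum⟩ := exists_tsum_rpow_le_mul_tsum hθ (half_pos hε)
  set m : ℕ → ℝ≥0∞ := fun j ↦ ENNReal.ofReal ((1 / 2) ^ (j + 1))
  have hmeas (j : ℕ) : Measurable fun c : TriIndex (n + 1) → ℝ ↦
      (m j * volume (longFibers ((1 / 2) ^ (j + 1)) c)) ^ θ :=
    ((measurable_volume_longFibers _ _).const_mul _).pow_const _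
  have hterm (j : ℕ) : ∫⁻ c : TriIndex (n + 1) → ℝ, 2 ^ (j * (ε / 2)) *
      (2 * (m j * volume (longFibers ((1 / 2) ^ (j + 1)) c))) ^ θ ≤
        2 ^ θ * C * 2 ^ (-ε) * ((2 : ℝ≥0∞) ^ (-(ε / 2))) ^ j := by
    simp only [ENNReal.mul_rpow_of_nonneg 2 _ hθ.le]
    rw [lintegral_const_mul _ ((hmeas j).const_mul _), lintegral_const_mul _ (hmeas j)]
    calc _ ≤ (2 : ℝ≥0∞) ^ (j * (ε / 2)) * (2 ^ θ * (C * m j ^ ε)) := by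
          gcongr
          exact hlong _ (by positivity)
      _ = 2 ^ θ * C * ((2 : ℝ≥0∞) ^ (j * (ε / 2)) * m j ^ ε) := by ring
      _ = _ := by rw [two_rpow_mul_ofReal_half_pow_rpow, mul_assoc _ (2 ^ (-ε))]
  refine ne_top_of_le_ne_top ?_ (lintegral_mono fun c ↦
    (ENNReal.rpow_le_rpow (volume_triSublevel_le_tsum c) hθ.le).trans (htsum _))
  rw [lintegral_const_mul' _ _ hB, lintegral_tsum fun j ↦ by
    simp only [ENNReal.mul_rpow_of_nonneg 2 _ hθ.le]
    exact (((hmeas j).const_mul _).const_mul _).aemeasurable]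
  refine ENNReal.mul_ne_top hB (ne_top_of_le_ne_top ?_ (ENNReal.tsum_le_tsum hterm))
  rw [ENNReal.tsum_mul_left]
  exact ENNReal.mul_ne_top (by finiteness) (tsum_two_rpow_neg_pow_ne_top (half_pos hε))

/-- Sublevel volumes of polynomials of degree less than `n` are integrable in the coefficients to
every power above this one, which gains the number of coefficients in degree less than `n` at the
step from `n` to `n + 1`. -/
def critExponent (n : ℕ) : ℕ := (n + 1).choose 3 + 2

lemma critExponent_succ (n : ℕ) :
    critExponent (n + 1) = critExponent n + Fintype.card (TriIndex n) := by
  rw [critExponent, critExponent, TriIndex.card_eq_choose, Nat.choose_succ_succ' (n + 1) 2]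
  ring

lemma succ_le_critExponent (n : ℕ) : n + 1 ≤ critExponent n := by
  induction n with
  | zero => decide
  | succ n ih =>
    rw [critExponent_succ, TriIndex.card_eq_choose]
    rcases n.eq_zero_or_pos with rfl | hn
    · decide
    · exact Nat.add_le_add ih (Nat.choose_pos (Nat.succ_le_succ hn))

lemma lintegral_volume_triSublevel_rpow_ne_top (n : ℕ) {θ : ℝ} (hθ : critExponent n < θ) :
    ∫⁻ c : TriIndex n → ℝ, volume (triSublevel c) ^ θ ≠ ⊤ := by
  induction n generalizing θ with
  | zero =>
    have : IsEmpty (TriIndex 0) := inferInstanceAs (IsEmpty Empty)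
    have hθ0 : 0 ≤ θ := (Nat.cast_nonneg _).trans hθ.le
    refine ne_top_of_le_ne_top ?_ (lintegral_mono fun c ↦
      ENNReal.rpow_le_rpow (volume_triSublevel_le_one c) hθ0)
    rw [lintegral_const, volume_pi, Measure.pi_univ]
    simp
  | succ n ih =>
    have hcrit : ((n + 1 : ℕ) : ℝ) ≤ critExponent n := by exact_mod_cast succ_le_critExponent n
    rw [critExponent_succ] at hθ
    push_cast at hθ hcrit
    set ε := (θ - critExponent n - Fintype.card (TriIndex n)) / 2 with hε
    have hε0 : 0 < ε := by linarith
    have hsucc := lintegral_volume_triSublevel_succ_rpow_ne_top (β := critExponent n + ε)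
      (by linarith) (ih (by linarith)) hε0
    convert hsucc using 4
    linarith

end Integrability

/-! ### Largest monomial determinants -/

section Matrices

variable {M : Type*} [Fintype M]

lemma abs_dotProduct_le_of_card_mul_le_one {x y : M → ℝ} {X r : ℝ} (hX : 0 ≤ X)
    (hr : Fintype.card M * r ≤ 1) (hx : ∀ γ, |x γ| ≤ X) (hy : ∀ γ, |y γ| ≤ r) :
    |x ⬝ᵥ y| ≤ X := by
  calc |x ⬝ᵥ y| ≤ ∑ γ, |x γ * y γ| := Finset.abs_sum_le_sum_abs _ _
    _ ≤ ∑ _γ : M, X * r := Finset.sum_le_sum fun γ _ ↦ by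
        rw [abs_mul]
        exact mul_le_mul (hx γ) (hy γ) (abs_nonneg _) hX
    _ = X * (Fintype.card M * r) := by rw [Finset.sum_const, Finset.card_univ, nsmul_eq_mul]; ring
    _ ≤ X := mul_le_of_le_one_right hX hr

variable [DecidableEq M]

lemma abs_dotProduct_le_one_of_maximal {ι : Type*} {E : ι → M → ℝ} {a : M → ι}
    (hmax : ∀ a' : M → ι, |(Matrix.of fun γ ↦ E (a' γ)).det| ≤ |(Matrix.of fun γ ↦ E (a γ)).det|)
    (hdet : (Matrix.of fun γ ↦ E (a γ)).det ≠ 0) {r : ℝ} (hr : Fintype.card M * r ≤ 1)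
    {c : M → ℝ} (hc : ∀ γ, |E (a γ) ⬝ᵥ c| ≤ r) (i : ι) : |E i ⬝ᵥ c| ≤ 1 := by
  have hcramer : (fun γ ↦ (Matrix.of fun γ ↦ E (a γ)).transpose.cramer (E i) γ) ⬝ᵥ
      (fun γ ↦ E (a γ) ⬝ᵥ c) = (Matrix.of fun γ ↦ E (a γ)).det * (E i ⬝ᵥ c) :=
    sum_cramer_transpose_mul _ (E i) ((dotProductBilin ℝ ℝ).flip c)
  have hle : |(Matrix.of fun γ ↦ E (a γ)).det * (E i ⬝ᵥ c)| ≤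
      |(Matrix.of fun γ ↦ E (a γ)).det| := by
    rw [← hcramer]
    refine abs_dotProduct_le_of_card_mul_le_one (abs_nonneg _) hr (fun γ ↦ ?_) hc
    rw [Matrix.cramer_transpose_apply, ← of_comp_update]
    exact hmax _
  rw [abs_mul] at hle
  exact le_of_mul_le_mul_left (hle.trans_eq (mul_one _).symm) (abs_pos.2 hdet)

lemma abs_det_le_factorial {A : Matrix M M ℝ} (hA : ∀ i j, |A i j| ≤ 1) :
    |A.det| ≤ (Fintype.card M).factorial := by
  simpa using Matrix.det_le (A := A) (abv := AbsoluteValue.abs) (x := (1 : ℝ)) hA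

lemma abs_adjugate_le_factorial {A : Matrix M M ℝ} (hA : ∀ i j, |A i j| ≤ 1) (i j : M) :
    |A.adjugate i j| ≤ (Fintype.card M).factorial := by
  rw [Matrix.adjugate_apply]
  refine abs_det_le_factorial fun i' j' ↦ ?_
  rw [Matrix.updateRow_apply]
  split_ifs
  · rw [Pi.single_apply]
    split_ifs <;> simp
  · exact hA _ _

lemma abs_det_mul_norm_le {A : Matrix M M ℝ} (hA : ∀ i j, |A i j| ≤ 1) {r : ℝ}
    (hr : Fintype.card M * r ≤ 1) {c : M → ℝ} (hc : ∀ γ, |A.mulVec c γ| ≤ r) :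
    |A.det| * ‖c‖ ≤ (Fintype.card M).factorial := by
  rw [← Real.norm_eq_abs, ← norm_smul, pi_norm_le_iff_of_nonneg (by positivity)]
  intro m
  have hsmul : A.det • c = A.adjugate.mulVec (A.mulVec c) := by
    rw [Matrix.mulVec_mulVec, Matrix.adjugate_mul, Matrix.smul_mulVec, Matrix.one_mulVec]
  rw [hsmul]
  exact abs_dotProduct_le_of_card_mul_le_one (by positivity) hr
    (fun γ ↦ abs_adjugate_le_factorial hA m γ) hc

lemma abs_det_div_rpow_le_one_add_norm_rpow_neg {A : Matrix M M ℝ} (hA : ∀ i j, |A i j| ≤ 1)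
    (hdet : A.det ≠ 0) {r σ : ℝ} (hr : Fintype.card M * r ≤ 1) (hσ : 0 ≤ σ) {c : M → ℝ}
    (hc : ∀ γ, |A.mulVec c γ| ≤ r) :
    (|A.det| / (2 * (Fintype.card M).factorial)) ^ σ ≤ (1 + ‖c‖) ^ (-σ) := by
  have : 0 < |A.det| := abs_pos.2 hdet
  rw [Real.rpow_neg (by positivity), ← Real.inv_rpow (by positivity)]
  refine Real.rpow_le_rpow (by positivity) ?_ hσ
  rw [div_le_iff₀ (by positivity), ← div_eq_inv_mul, le_div_iff₀ (by positivity)]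
  linarith [abs_det_le_factorial hA, abs_det_mul_norm_le hA hr hc]

lemma enorm_det_rpow_neg_le_mul_lintegral {A : Matrix M M ℝ} (hA : ∀ i j, |A i j| ≤ 1)
    (hdet : A.det ≠ 0) {r τ : ℝ} (hr0 : 0 < r) (hr : Fintype.card M * r ≤ 1) (hτ : τ ≤ 1) :
    ‖A.det‖ₑ ^ (-τ) ≤ ENNReal.ofReal ((2 * (Fintype.card M).factorial) ^ (1 - τ)) *
      (ENNReal.ofReal (2 * r) ^ Fintype.card M)⁻¹ *
      ∫⁻ c in {c | ∀ γ, |A.mulVec c γ| ≤ r}, ENNReal.ofReal ((1 + ‖c‖) ^ (-(1 - τ))) := by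
  set B : ℝ := 2 * (Fintype.card M).factorial
  set W := ENNReal.ofReal (2 * r) ^ Fintype.card M
  have hB0 : 0 < B := by positivity
  have hW0 : W ≠ 0 := pow_ne_zero _ (by simp [hr0])
  have hd0 : ‖A.det‖ₑ ≠ 0 := by simpa using hdet
  set K := {c : M → ℝ | ∀ γ, |A.mulVec c γ| ≤ r} with hK
  have hKm : MeasurableSet K := by
    simp only [hK, ofPred_forall, Matrix.mulVec, dotProduct]
    exact MeasurableSet.iInter fun γ ↦ measurableSet_le (by fun_prop) measurable_const
  have hvol : volume K = W * ‖A.det‖ₑ⁻¹ := by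
    refine (ENNReal.eq_div_iff hd0 enorm_ne_top).2 ?_
    rw [mul_comm]
    simpa only [hK, Pi.zero_apply, add_zero] using volume_abs_mulVec_add hdet 0 r
  have hlower : ENNReal.ofReal ((|A.det| / B) ^ (1 - τ)) * volume K ≤
      ∫⁻ c in K, ENNReal.ofReal ((1 + ‖c‖) ^ (-(1 - τ))) := by
    rw [← setLIntegral_const]
    exact setLIntegral_mono' hKm fun c hc ↦ ENNReal.ofReal_le_ofReal
      (abs_det_div_rpow_le_one_add_norm_rpow_neg hA hdet hr (by linarith) hc)
  have hpow : ENNReal.ofReal (B ^ (1 - τ)) * ENNReal.ofReal ((|A.det| / B) ^ (1 - τ)) =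
      ‖A.det‖ₑ ^ (1 - τ) := by
    rw [← ENNReal.ofReal_mul (by positivity), ← Real.mul_rpow hB0.le (by positivity),
      mul_div_cancel₀ _ hB0.ne', Real.enorm_eq_ofReal_abs,
      ENNReal.ofReal_rpow_of_pos (abs_pos.2 hdet)]
  calc ‖A.det‖ₑ ^ (-τ) = ‖A.det‖ₑ ^ (1 - τ) * ‖A.det‖ₑ⁻¹ := by
        rw [← ENNReal.rpow_neg_one, ← ENNReal.rpow_add _ _ hd0 enorm_ne_top]
        congr 1
        ring
    _ = ‖A.det‖ₑ ^ (1 - τ) * (W⁻¹ * volume K) := by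
        rw [hvol, ← mul_assoc W⁻¹, ENNReal.inv_mul_cancel hW0 (by finiteness), one_mul]
    _ = ENNReal.ofReal (B ^ (1 - τ)) * W⁻¹ *
        (ENNReal.ofReal ((|A.det| / B) ^ (1 - τ)) * volume K) := by
        rw [← hpow]
        ring
    _ ≤ _ := by gcongr

end Matrices

/-- The determinant of the monomials of degree less than `n` at the points with coordinates
`(X (pu γ), X (pv γ))`, as a polynomial in the variables `X`. -/
def monoDetPoly {n : ℕ} {κ : Type*} (pu pv : TriIndex n → κ) : MvPolynomial κ ℝ :=
  (Matrix.of fun γ γ' : TriIndex n ↦ MvPolynomial.X (pu γ) ^ γ'.exp.1 *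
    (MvPolynomial.C ((γ'.exp.2.factorial : ℝ)⁻¹) * MvPolynomial.X (pv γ) ^ γ'.exp.2)).det

section Nonvanishing

variable {n : ℕ} {κ : Type*}

lemma eval_monoDetPoly (pu pv : TriIndex n → κ) (y : κ → ℝ) :
    MvPolynomial.eval y (monoDetPoly pu pv) =
      (Matrix.of fun γ γ' : TriIndex n ↦ γ'.mono (y (pu γ)) (y (pv γ))).det := by
  rw [monoDetPoly, RingHom.map_det]
  congr 1
  ext γ γ'
  simp [TriIndex.mono, div_eq_inv_mul]

lemma monoDetPoly_ne_zero_of_exists {pu pv : TriIndex n → κ}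
    (hinj : Function.Injective (Sum.elim pu pv))
    (h : ∃ u v : TriIndex n → ℝ,
      (Matrix.of fun γ γ' : TriIndex n ↦ γ'.mono (u γ) (v γ)).det ≠ 0) :
    monoDetPoly pu pv ≠ 0 := by
  obtain ⟨u, v, huv⟩ := h
  intro h0
  have heval := eval_monoDetPoly pu pv (Function.extend (Sum.elim pu pv) (Sum.elim u v) 0)
  have hpu (γ) : Function.extend (Sum.elim pu pv) (Sum.elim u v) 0 (pu γ) = u γ :=
    hinj.extend_apply (Sum.elim u v) 0 (.inl γ)
  have hpv (γ) : Function.extend (Sum.elim pu pv) (Sum.elim u v) 0 (pv γ) = v γ :=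
    hinj.extend_apply (Sum.elim u v) 0 (.inr γ)
  rw [h0, map_zero] at heval
  simp only [hpu, hpv] at heval
  exact huv heval.symm

namespace TriIndex

lemma mono_inr (t : TriIndex n) (u v : ℝ) :
    mono (n := n + 1) (.inr t) u v = v * (((t.exp.2 : ℝ) + 1)⁻¹ * t.mono u v) := by
  change u ^ t.exp.1 * (v ^ (t.exp.2 + 1) / ((t.exp.2 + 1).factorial : ℝ)) = _
  rw [mono, Nat.factorial_succ]
  push_cast
  have : (t.exp.2.factorial : ℝ) ≠ 0 := by positivity
  field_simp
  ring

lemma det_mono_sumElim (x : Fin (n + 1) → ℝ) (u v : TriIndex n → ℝ) :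
    (Matrix.of fun γ γ' : TriIndex (n + 1) ↦
      γ'.mono (Sum.elim x u γ) (Sum.elim (fun _ ↦ 0) v γ)).det =
      (Matrix.vandermonde x).det * ((∏ t, v t) * ((∏ t : TriIndex n, ((t.exp.2 : ℝ) + 1)⁻¹) *
        (Matrix.of fun t t' : TriIndex n ↦ t'.mono (u t) (v t)).det)) := by
  rw [← Matrix.det_mul_row, ← Matrix.det_mul_column]
  refine Eq.trans (congrArg Matrix.det ?_)
    (Matrix.det_fromBlocks_zero₁₂ _ (Matrix.of fun t (i : Fin (n + 1)) ↦ u t ^ (i : ℕ)) _)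
  ext (i | t) (i' | t')
  · exact mono_inl i' _ _
  · exact (mono_inr t' _ _).trans (zero_mul _)
  · exact mono_inl i' _ _
  · exact mono_inr t' _ _

end TriIndex

lemma exists_det_mono_ne_zero (n : ℕ) :
    ∃ u v : TriIndex n → ℝ, (Matrix.of fun γ γ' : TriIndex n ↦ γ'.mono (u γ) (v γ)).det ≠ 0 := by
  induction n with
  | zero =>
    have : IsEmpty (TriIndex 0) := inferInstanceAs (IsEmpty Empty)
    exact ⟨0, 0, by simp⟩
  | succ n ih =>
    have hQ : monoDetPoly (κ := TriIndex n ⊕ TriIndex n) Sum.inl Sum.inr *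
        ∏ t : TriIndex n, MvPolynomial.X (Sum.inr t) ≠ 0 := by
      refine mul_ne_zero (monoDetPoly_ne_zero_of_exists ?_ ih)
        (Finset.prod_ne_zero_iff.2 fun t _ ↦ MvPolynomial.X_ne_zero _)
      rw [Sum.elim_inl_inr]
      exact Function.injective_id
    obtain ⟨y, hy⟩ := (ae_mvPolynomial_eval_ne_zero hQ).exists
    simp only [map_mul, eval_monoDetPoly, map_prod, MvPolynomial.eval_X] at hy
    obtain ⟨hdet, hprod⟩ := mul_ne_zero_iff.1 hy
    refine ⟨Sum.elim (fun i : Fin (n + 1) ↦ (i : ℝ)) fun t ↦ y (.inl t),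
      Sum.elim (fun _ ↦ 0) fun t ↦ y (.inr t), ?_⟩
    rw [TriIndex.det_mono_sumElim]
    refine mul_ne_zero (Matrix.det_vandermonde_ne_zero_iff.2 fun i j hij ↦ ?_)
      (mul_ne_zero hprod (mul_ne_zero ?_ hdet))
    · exact Fin.ext (Nat.cast_injective hij)
    · exact Finset.prod_ne_zero_iff.2 fun t _ ↦ by positivity

lemma monoDetPoly_ne_zero {pu pv : TriIndex n → κ} (hinj : Function.Injective (Sum.elim pu pv)) :
    monoDetPoly pu pv ≠ 0 :=
  monoDetPoly_ne_zero_of_exists hinj (exists_det_mono_ne_zero n)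

end Nonvanishing

/-- The family of plane points whose abscissae and ordinates are listed in `y : F ⊕ F → ℝ`. -/
def ptsEquiv (F : Type*) : (F ⊕ F → ℝ) ≃ᵐ (F → ℝ × ℝ) :=
  (MeasurableEquiv.sumPiEquivProdPi fun _ : F ⊕ F ↦ ℝ).trans
    (MeasurableEquiv.arrowProdEquivProdArrow ℝ ℝ F).symm

/-- The values of the monomials of degree less than `n` at the `i`-th point listed in `y`. -/
def monoRow (n : ℕ) {F : Type*} (y : F ⊕ F → ℝ) (i : F) : TriIndex n → ℝ :=
  fun t ↦ t.mono (y (.inl i)) (y (.inr i))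

/-- The largest determinant, in modulus, of the monomials of degree less than `n` at points of the
family listed in `y`. It measures the distance of the family to the plane curves of degree less
than `n`. -/
def maxMonoDet (n : ℕ) {F : Type*} (y : F ⊕ F → ℝ) : ℝ≥0∞ :=
  ⨆ a : TriIndex n → F, ‖(Matrix.of fun γ ↦ monoRow n y (a γ)).det‖ₑ

section MaxMonoDet

variable {n : ℕ} {F : Type*}

lemma ptsEquiv_apply (y : F ⊕ F → ℝ) (i : F) : ptsEquiv F y i = (y (.inl i), y (.inr i)) := rfl

lemma measurePreserving_ptsEquiv (F : Type*) [Fintype F] :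
    MeasurePreserving (ptsEquiv F) volume volume :=
  (volume_measurePreserving_arrowProdEquivProdArrow ℝ ℝ F).symm.comp
    (volume_measurePreserving_sumPiEquivProdPi fun _ : F ⊕ F ↦ ℝ)

lemma monoRow_dotProduct (y : F ⊕ F → ℝ) (i : F) (c : TriIndex n → ℝ) :
    monoRow n y i ⬝ᵥ c = triEval c (y (.inl i)) (y (.inr i)) := by
  simp only [monoRow, dotProduct, triEval, mul_comm]

lemma abs_monoRow_le_one {y : F ⊕ F → ℝ} (hy : y ∈ Icc 0 1) (i : F) (t : TriIndex n) :
    |monoRow n y i t| ≤ 1 := by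
  have hnonneg (j) : 0 ≤ y j := hy.1 j
  have hpow (j) (d : ℕ) : |y j| ^ d ≤ 1 :=
    pow_le_one₀ (abs_nonneg _) ((abs_of_nonneg (hnonneg j)).trans_le (hy.2 j))
  rw [monoRow, TriIndex.mono, abs_mul, abs_div, abs_pow, abs_pow, Nat.abs_cast]
  refine mul_le_one₀ (hpow _ _) (by positivity) (div_le_one_of_le₀ ?_ (by positivity))
  exact (hpow _ _).trans (by exact_mod_cast Nat.one_le_iff_ne_zero.2 (Nat.factorial_ne_zero _))

lemma enorm_det_le_maxMonoDet (y : F ⊕ F → ℝ) (a : TriIndex n → F) :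
    ‖(Matrix.of fun γ ↦ monoRow n y (a γ)).det‖ₑ ≤ maxMonoDet n y :=
  le_iSup (fun a : TriIndex n → F ↦ ‖(Matrix.of fun γ ↦ monoRow n y (a γ)).det‖ₑ) a

lemma maxMonoDet_comp_le (n : ℕ) {ι : Type*} (y : ι ⊕ ι → ℝ) (f : F → ι) :
    maxMonoDet n (fun x : F ⊕ F ↦ y (x.map f f)) ≤ maxMonoDet n y :=
  iSup_le fun a ↦ enorm_det_le_maxMonoDet y (f ∘ a)

lemma measurable_maxMonoDet (n : ℕ) (F : Type*) [Finite F] :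
    Measurable (maxMonoDet n (F := F)) := by
  refine Measurable.iSup fun a ↦ Measurable.enorm (Continuous.measurable ?_)
  refine Continuous.matrix_det (continuous_matrix fun i j ↦ ?_)
  simp only [Matrix.of_apply, monoRow, TriIndex.mono]
  fun_prop

lemma exists_maxMonoDet_eq [Finite F] [Nonempty F] (y : F ⊕ F → ℝ) :
    ∃ a : TriIndex n → F, maxMonoDet n y = ‖(Matrix.of fun γ ↦ monoRow n y (a γ)).det‖ₑ ∧
      ∀ a' : TriIndex n → F, |(Matrix.of fun γ ↦ monoRow n y (a' γ)).det| ≤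
        |(Matrix.of fun γ ↦ monoRow n y (a γ)).det| := by
  obtain ⟨a, ha⟩ := Finite.exists_max
    fun a : TriIndex n → F ↦ |(Matrix.of fun γ ↦ monoRow n y (a γ)).det|
  refine ⟨a, le_antisymm (iSup_le fun a' ↦ ?_) (enorm_det_le_maxMonoDet y a), ha⟩
  rw [Real.enorm_eq_ofReal_abs, Real.enorm_eq_ofReal_abs]
  exact ENNReal.ofReal_le_ofReal (ha a')

lemma monoDetPoly_embedding_ne_zero (a : TriIndex n ↪ F) :
    monoDetPoly (fun γ ↦ Sum.inl (a γ)) (fun γ ↦ (Sum.inr (a γ) : F ⊕ F)) ≠ 0 :=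
  monoDetPoly_ne_zero (Function.Injective.sumElim (Sum.inl_injective.comp a.injective)
    (Sum.inr_injective.comp a.injective) (by simp))

lemma enorm_eval_monoDetPoly_le_maxMonoDet (y : F ⊕ F → ℝ) (a : TriIndex n → F) :
    ‖MvPolynomial.eval y (monoDetPoly (fun γ ↦ Sum.inl (a γ)) fun γ ↦ Sum.inr (a γ))‖ₑ ≤
      maxMonoDet n y := by
  rw [eval_monoDetPoly]
  exact enorm_det_le_maxMonoDet y a

lemma ae_maxMonoDet_ne_zero [Fintype F] (hF : Fintype.card (TriIndex n) ≤ Fintype.card F) :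
    ∀ᵐ y : F ⊕ F → ℝ, maxMonoDet n y ≠ 0 := by
  obtain ⟨a⟩ := Function.Embedding.nonempty_of_card_le hF
  filter_upwards [ae_mvPolynomial_eval_ne_zero (monoDetPoly_embedding_ne_zero a)] with y hy
  exact ((pos_of_ne_zero (enorm_ne_zero.2 hy)).trans_le
    (enorm_eval_monoDetPoly_le_maxMonoDet y a)).ne'

lemma card_triIndex_le_critExponent (n : ℕ) : Fintype.card (TriIndex n) ≤ critExponent n := by
  cases n with
  | zero => decide
  | succ n =>
    rw [TriIndex.card_succ, critExponent_succ]
    exact Nat.add_le_add_right (succ_le_critExponent n) _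

lemma exists_maxMonoDet_rpow_neg_le_lintegral (n : ℕ) {τ : ℝ} (hτ : τ ≤ 1) :
    ∃ C : ℝ≥0∞, C ≠ ⊤ ∧ ∀ {F : Type} [Finite F] [Nonempty F] {y : F ⊕ F → ℝ}, y ∈ Icc 0 1 →
      maxMonoDet n y ≠ 0 → maxMonoDet n y ^ (-τ) ≤
        C * ∫⁻ c in {c : TriIndex n → ℝ | ∀ i, ptsEquiv F y i ∈ triSublevel c},
          ENNReal.ofReal ((1 + ‖c‖) ^ (-(1 - τ))) := by
  set r : ℝ := 1 / (Fintype.card (TriIndex n) + 1)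
  have hr0 : 0 < r := by positivity
  have hr : Fintype.card (TriIndex n) * r ≤ 1 := by
    rw [mul_one_div, div_le_one (by positivity)]
    linarith
  refine ⟨ENNReal.ofReal ((2 * (Fintype.card (TriIndex n)).factorial) ^ (1 - τ)) *
    (ENNReal.ofReal (2 * r) ^ Fintype.card (TriIndex n))⁻¹, ?_, fun {F} _ _ {y} hyI hy ↦ ?_⟩
  · have : ENNReal.ofReal (2 * r) ^ Fintype.card (TriIndex n) ≠ 0 := pow_ne_zero _ (by simp [hr0])
    finiteness
  · obtain ⟨a, ha, hmax⟩ := exists_maxMonoDet_eq (n := n) y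
    rw [ha] at hy ⊢
    have hdet := enorm_ne_zero.1 hy
    refine (enorm_det_rpow_neg_le_mul_lintegral (fun _ _ ↦ abs_monoRow_le_one hyI _ _) hdet
      hr0 hr hτ).trans ?_
    refine mul_le_mul_right (lintegral_mono_set fun c hc i ↦
      ⟨⟨⟨hyI.1 _, hyI.1 _⟩, ⟨hyI.2 _, hyI.2 _⟩⟩, ?_⟩) _
    rw [ptsEquiv_apply, ← monoRow_dotProduct]
    exact abs_dotProduct_le_one_of_maximal hmax hdet hr hc i

end MaxMonoDet

section Integrability

lemma ennreal_rpow_neg_mul_rpow_le_add {q : ℝ≥0∞} (hq0 : q ≠ 0) (hq : q ≠ ⊤) (S : ℝ≥0∞)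
    (ε : ℝ) {b η : ℝ} (hb : 0 ≤ b) (hη : 0 < η) :
    q ^ (-ε) * S ^ b ≤ S ^ (b + η) + q ^ (-(ε + ε * b / η)) := by
  rcases le_total (q ^ (-ε)) (S ^ η) with h | h
  · refine le_trans ?_ le_self_add
    rw [ENNReal.rpow_add_of_nonneg _ _ hb hη.le, mul_comm]
    gcongr
  · refine le_trans ?_ le_add_self
    rw [neg_add, ENNReal.rpow_add _ _ hq0 hq]
    gcongr
    calc S ^ b = (S ^ η) ^ (b / η) := by rw [← ENNReal.rpow_mul, mul_div_cancel₀ _ hη.ne']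
      _ ≤ (q ^ (-ε)) ^ (b / η) := by gcongr
      _ = q ^ (-(ε * b / η)) := by rw [← ENNReal.rpow_mul]; congr 1; ring

lemma lintegral_mul_volume_triSublevel_pow_ne_top (n : ℕ) {N : ℕ} (hN : critExponent n ≤ N)
    {ε : ℝ} (hε : 0 < ε) :
    ∫⁻ c : TriIndex n → ℝ, ENNReal.ofReal ((1 + ‖c‖) ^ (-ε)) * volume (triSublevel c) ^ N ≠ ⊤ := by
  set M := (Fintype.card (TriIndex n) : ℝ)
  set b := (critExponent n : ℝ) with hb
  have hb0 : 0 < b := Nat.cast_pos.2 (Nat.succ_pos n |>.trans_le (succ_le_critExponent n))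
  set η : ℝ := ε * b / (M + 1) with hη
  have hη0 : 0 < η := by positivity
  have hexp : ε * b / η = M + 1 := by rw [hη]; field_simp
  have hvol := lintegral_volume_triSublevel_rpow_ne_top n (θ := b + η) (by linarith)
  have hweight : ∫⁻ c : TriIndex n → ℝ, ENNReal.ofReal ((1 + ‖c‖) ^ (-(ε + (M + 1)))) ≠ ⊤ := by
    refine (finite_integral_one_add_norm ?_).ne
    rw [Module.finrank_fintype_fun_eq_card]
    linarith
  have hle (c : TriIndex n → ℝ) :
      ENNReal.ofReal ((1 + ‖c‖) ^ (-ε)) * volume (triSublevel c) ^ N ≤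
        volume (triSublevel c) ^ (b + η) + ENNReal.ofReal ((1 + ‖c‖) ^ (-(ε + (M + 1)))) := by
    have hc : 0 < 1 + ‖c‖ := by positivity
    rw [← ENNReal.ofReal_rpow_of_pos hc, ← ENNReal.ofReal_rpow_of_pos hc, ← hexp]
    refine le_trans ?_ (ennreal_rpow_neg_mul_rpow_le_add (by simpa using hc)
      ENNReal.ofReal_ne_top _ ε hb0.le hη0)
    rw [hb, ENNReal.rpow_natCast]
    refine mul_le_mul_right ?_ _
    exact pow_le_pow_right_of_le_one' (volume_triSublevel_le_one c) hN
  refine ne_top_of_le_ne_top ?_ (lintegral_mono hle)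
  rw [lintegral_add_left ((measurable_volume_triSublevel n).pow_const _)]
  exact ENNReal.add_ne_top.2 ⟨hvol, hweight⟩

lemma lintegral_setLIntegral_forall_mem {F X Y : Type*} [Fintype F] [MeasureSpace X]
    [SigmaFinite (volume : Measure X)] [MeasureSpace Y] [SFinite (volume : Measure Y)]
    {S : Y → Set X} (hS : MeasurableSet {z : Y × X | z.2 ∈ S z.1}) {w : Y → ℝ≥0∞}
    (hw : Measurable w) :
    ∫⁻ ζ : F → X, ∫⁻ c in {c | ∀ i, ζ i ∈ S c}, w c =
      ∫⁻ c, w c * volume (S c) ^ Fintype.card F := by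
  set Z : Set ((F → X) × Y) := {x | ∀ i, x.1 i ∈ S x.2} with hZ
  have hZm : MeasurableSet Z := by
    simp only [hZ, ofPred_forall]
    exact MeasurableSet.iInter fun i ↦
      hS.preimage (f := fun x : (F → X) × Y ↦ (x.2, x.1 i)) (by fun_prop)
  calc _ = ∫⁻ ζ : F → X, ∫⁻ c, Z.indicator (fun x ↦ w x.2) (ζ, c) := lintegral_congr fun ζ ↦
        (lintegral_indicator (measurable_prodMk_left hZm) w).symm
    _ = ∫⁻ c, ∫⁻ ζ : F → X, Z.indicator (fun x ↦ w x.2) (ζ, c) := lintegral_lintegral_swap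
        ((hw.comp measurable_snd).indicator hZm).aemeasurable
    _ = ∫⁻ c, w c * volume (S c) ^ Fintype.card F := lintegral_congr fun c ↦ ?_
  have hslice : {ζ : F → X | (ζ, c) ∈ Z} = univ.pi fun _ ↦ S c := by
    ext ζ
    simp [hZ]
  refine (lintegral_indicator_const (measurable_prodMk_right hZm) (w c)).trans ?_
  change w c * volume {ζ : F → X | (ζ, c) ∈ Z} = _
  rw [hslice, volume_pi, Measure.pi_pi, Finset.prod_const, Finset.card_univ]

lemma lintegral_maxMonoDet_rpow_ne_top (n : ℕ) {F : Type} [Fintype F]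
    (hF : critExponent n ≤ Fintype.card F) {τ : ℝ} (hτ : τ < 1) :
    ∫⁻ y in Icc (0 : F ⊕ F → ℝ) 1, maxMonoDet n y ^ (-τ) ≠ ⊤ := by
  have : Nonempty F :=
    Fintype.card_pos_iff.1 ((Nat.succ_pos n).trans_le ((succ_le_critExponent n).trans hF))
  obtain ⟨C, hC, hCle⟩ := exists_maxMonoDet_rpow_neg_le_lintegral n hτ.le
  have hae := ae_maxMonoDet_ne_zero ((card_triIndex_le_critExponent n).trans hF)
  refine ne_top_of_le_ne_top ?_ (setLIntegral_mono_ae' measurableSet_Icc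
    (hae.mono fun y hy hyI ↦ hCle hyI hy))
  refine ne_top_of_le_ne_top ?_ (setLIntegral_le_lintegral _ _)
  rw [lintegral_const_mul' _ _ hC, (measurePreserving_ptsEquiv F).lintegral_comp_emb
      (MeasurableEquiv.measurableEmbedding _)
      fun ζ ↦ ∫⁻ c in {c | ∀ i, ζ i ∈ triSublevel c}, ENNReal.ofReal ((1 + ‖c‖) ^ (-(1 - τ))),
    lintegral_setLIntegral_forall_mem (isClosed_triSublevel_prod n).measurableSet
      (by fun_prop)]
  exact ENNReal.mul_ne_top hC (lintegral_mul_volume_triSublevel_pow_ne_top n hF (sub_pos.2 hτ))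

end Integrability

/-! ### Largest Vandermonde determinants -/

/-- The largest Vandermonde determinant `|det (t (b l) ^ i)|` of `n` points of the family `t`. -/
def maxVandermonde (n : ℕ) {P : Type*} (t : P → ℝ) : ℝ≥0∞ :=
  ⨆ b : Fin n → P, ‖(Matrix.vandermonde fun l ↦ t (b l)).det‖ₑ

section MaxVandermonde

lemma maxVandermonde_comp_le (n : ℕ) {P Q : Type*} (t : P → ℝ) (f : Q → P) :
    maxVandermonde n (fun q ↦ t (f q)) ≤ maxVandermonde n t :=
  iSup_le fun b ↦
    le_iSup (fun b : Fin n → P ↦ ‖(Matrix.vandermonde fun l ↦ t (b l)).det‖ₑ) fun l ↦ f (b l)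

lemma measurable_maxVandermonde (n : ℕ) (P : Type*) [Finite P] :
    Measurable (maxVandermonde n (P := P)) := by
  refine Measurable.iSup fun b ↦ Measurable.enorm (Continuous.measurable ?_)
  simp only [Matrix.det_vandermonde]
  fun_prop

lemma lintegral_pi_prod_eval {ι X : Type*} [Fintype ι] [MeasurableSpace X] (μ : Measure X)
    [IsProbabilityMeasure μ] {f : ι → X → ℝ≥0∞} (hf : ∀ i, Measurable (f i)) :
    ∫⁻ x, ∏ i, f i (x i) ∂Measure.pi (fun _ ↦ μ) = ∏ i, ∫⁻ t, f i t ∂μ := by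
  rw [ProbabilityTheory.lintegral_prod_eq_prod_lintegral_of_indepFun _ _
    (ProbabilityTheory.iIndepFun_pi fun i ↦ (hf i).aemeasurable)
    fun i ↦ (hf i).comp (measurable_pi_apply i)]
  exact Finset.prod_congr rfl fun i _ ↦
    (measurePreserving_eval (fun _ ↦ μ) i).lintegral_comp (hf i)

variable {X : Type*} [MeasurableSpace X] {μ : Measure X} [IsProbabilityMeasure μ]
  {w : X → X → ℝ≥0∞} {B : ℝ≥0∞}

lemma lintegral_prod_le_pow {ι : Type*} [Fintype ι] (hw : Measurable (Function.uncurry w))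
    (hB : ∀ x, ∫⁻ t, w t x ∂μ ≤ B) (x : X) :
    ∫⁻ u : ι → X, ∏ i, w (u i) x ∂Measure.pi (fun _ ↦ μ) ≤ B ^ Fintype.card ι := by
  rw [lintegral_pi_prod_eval μ fun _ ↦ hw.of_uncurry_right]
  exact (Finset.prod_le_prod' fun _ _ ↦ hB x).trans_eq (by simp)

lemma lintegral_mul_prod_succAbove_le_pow {n : ℕ} (hw : Measurable (Function.uncurry w))
    (hB : ∀ x, ∫⁻ t, w t x ∂μ ≤ B) (x : X) (c : Fin (n + 1)) :
    ∫⁻ u : Fin (n + 1) → X, w (u c) x * ∏ j, w (u (c.succAbove j)) (u c)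
      ∂Measure.pi (fun _ ↦ μ) ≤ B ^ (n + 1) := by
  have hwm {α : Type _} [MeasurableSpace α] {f g : α → X} (hf : Measurable f)
      (hg : Measurable g) : Measurable fun a ↦ w (f a) (g a) := hw.comp (hf.prodMk hg)
  have hstar : Measurable fun u : Fin (n + 1) → X ↦
      w (u c) x * ∏ j, w (u (c.succAbove j)) (u c) :=
    (hwm (by fun_prop) (by fun_prop)).mul
      (Finset.measurable_fun_prod _ fun _ _ ↦ hwm (by fun_prop) (by fun_prop))
  rw [← (measurePreserving_piFinSuccAbove (fun _ : Fin (n + 1) ↦ μ) c).symm.lintegral_comp hstar]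
  simp only [MeasurableEquiv.piFinSuccAbove_symm_apply, Fin.insertNthEquiv, Equiv.coe_fn_mk,
    Fin.insertNth_apply_same, Fin.insertNth_apply_succAbove]
  have hpair : Measurable fun a : X × (Fin n → X) ↦ w a.1 x * ∏ j, w (a.2 j) a.1 :=
    (hwm (by fun_prop) (by fun_prop)).mul
      (Finset.measurable_fun_prod _ fun _ _ ↦ hwm (by fun_prop) (by fun_prop))
  rw [lintegral_prod _ hpair.aemeasurable]
  calc ∫⁻ t, ∫⁻ u : Fin n → X, w t x * ∏ j, w (u j) t ∂Measure.pi (fun _ ↦ μ) ∂μ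
      ≤ ∫⁻ t, w t x * B ^ n ∂μ := by
        refine lintegral_mono fun t ↦ ?_
        rw [lintegral_const_mul _
          (Finset.measurable_fun_prod _ fun _ _ ↦ hwm (by fun_prop) (by fun_prop))]
        gcongr
        exact (lintegral_prod_le_pow hw hB t).trans_eq (by simp)
    _ ≤ B ^ (n + 1) := by
        rw [lintegral_mul_const _ (hwm (by fun_prop) (by fun_prop)), pow_succ']
        gcongr
        exact hB x

/-- The product of `w` along the star joining the point `c` to all other points of the family
`u`, enlarged by one extra point `x` at the index `none`. -/
def starProd {ι : Type*} [Fintype ι] [DecidableEq ι] (w : X → X → ℝ≥0∞) (x : X) (c : Option ι)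
    (u : ι → X) : ℝ≥0∞ :=
  ∏ i ∈ Finset.univ.erase c, w (i.elim x u) (c.elim x u)

lemma measurable_starProd {ι : Type*} [Fintype ι] [DecidableEq ι]
    (hw : Measurable (Function.uncurry w)) (x : X) (c : Option ι) :
    Measurable (starProd w x c) := by
  have helim (i : Option ι) : Measurable fun u : ι → X ↦ i.elim x u := by
    cases i with
    | none => exact measurable_const
    | some j => exact measurable_pi_apply j
  exact Finset.measurable_fun_prod _ fun i _ ↦ hw.comp ((helim i).prodMk (helim c))

lemma lintegral_starProd_le {h : ℕ} (hw : Measurable (Function.uncurry w))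
    (hsymm : ∀ s t, w s t = w t s) (hB : ∀ x, ∫⁻ t, w t x ∂μ ≤ B) (x : X) (c : Option (Fin h)) :
    ∫⁻ u, starProd w x c u ∂Measure.pi (fun _ ↦ μ) ≤ B ^ h := by
  cases c with
  | none =>
    have hstar (u : Fin h → X) : starProd w x none u = ∏ i, w (u i) x := by
      rw [starProd, ← Finset.filter_ne', Finset.prod_filter, Fintype.prod_option]
      simp
    simpa only [hstar, Fintype.card_fin] using lintegral_prod_le_pow (ι := Fin h) hw hB x
  | some c =>
    obtain ⟨n, rfl⟩ := Nat.exists_eq_add_one_of_ne_zero c.pos.ne'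
    have hstar (u : Fin (n + 1) → X) :
        starProd w x (some c) u = w (u c) x * ∏ j, w (u (c.succAbove j)) (u c) := by
      rw [starProd, ← Finset.filter_ne', Finset.prod_filter, Fintype.prod_option,
        Fin.prod_univ_succAbove _ c]
      simp [Fin.succAbove_ne, hsymm x]
    simpa only [hstar] using lintegral_mul_prod_succAbove_le_pow hw hB x c

lemma maxVandermonde_rpow_neg_le_sum_starProd (n : ℕ) {τ : ℝ} (hτ : 0 ≤ τ) (t₀ : ℝ)
    (u : Fin (n.choose 2) → ℝ) :
    maxVandermonde n (fun o : Option (Fin (n.choose 2)) ↦ o.elim t₀ u) ^ (-τ) ≤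
      ∑ c, starProd (fun s t : ℝ ↦ ‖s - t‖ₑ ^ (-τ)) t₀ c u := by
  obtain ⟨c, b, hcb⟩ := exists_prod_abs_sub_le_abs_det_vandermonde (P := Option (Fin (n.choose 2)))
    n (by simp) fun i ↦ i.elim t₀ u
  refine le_trans ?_ (Finset.single_le_sum (fun _ _ ↦ zero_le) (Finset.mem_univ c))
  have hprod : ∏ i ∈ Finset.univ.erase c, ‖i.elim t₀ u - c.elim t₀ u‖ₑ ≤
      maxVandermonde n fun o : Option (Fin (n.choose 2)) ↦ o.elim t₀ u := by
    refine le_trans ?_ (le_iSup (fun b : Fin n → Option (Fin (n.choose 2)) ↦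
      ‖(Matrix.vandermonde fun l ↦ (b l).elim t₀ u).det‖ₑ) b)
    simp only [Real.enorm_eq_ofReal_abs]
    rw [← ENNReal.ofReal_prod_of_nonneg fun _ _ ↦ abs_nonneg _]
    exact ENNReal.ofReal_le_ofReal hcb
  exact (ennreal_rpow_neg_le_rpow_neg hτ hprod).trans_eq
    (ENNReal.prod_rpow_of_ne_top (fun _ _ ↦ enorm_ne_top) _).symm

lemma exists_lintegral_maxVandermonde_rpow_le (n : ℕ) {τ : ℝ} (hτ0 : 0 ≤ τ) (hτ : τ < 1) :
    ∃ C : ℝ≥0∞, C ≠ ⊤ ∧ ∀ t₀ : ℝ, ∫⁻ u in Icc (0 : Fin (n.choose 2) → ℝ) 1,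
      maxVandermonde n (fun o : Option (Fin (n.choose 2)) ↦ o.elim t₀ u) ^ (-τ) ≤ C := by
  obtain ⟨B, hB, hBle⟩ := exists_lintegral_enorm_sub_rpow_le hτ0 hτ
  have : IsProbabilityMeasure (volume.restrict (Icc (0 : ℝ) 1)) := ⟨by simp⟩
  have hw : Measurable (Function.uncurry fun s t : ℝ ↦ ‖s - t‖ₑ ^ (-τ)) := by
    unfold Function.uncurry
    fun_prop
  refine ⟨∑ _c : Option (Fin (n.choose 2)), B ^ n.choose 2,
    ENNReal.sum_ne_top.2 fun _ _ ↦ ENNReal.pow_ne_top hB, fun t₀ ↦ ?_⟩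
  rw [volume_restrict_Icc_pi]
  refine (lintegral_mono fun u ↦ maxVandermonde_rpow_neg_le_sum_starProd n hτ0 t₀ u).trans ?_
  rw [lintegral_finsetSum _ fun c _ ↦ measurable_starProd hw t₀ c]
  exact Finset.sum_le_sum fun c _ ↦
    lintegral_starProd_le hw (fun s t ↦ by rw [enorm_sub_rev]) hBle t₀ c

end MaxVandermonde

/-! ### The change of variables given by a signed sum of moment vectors -/

section Coordinates

variable {K H M F ι : Type*}

lemma exists_equiv_sum_of_injective {α β : Type*} [Fintype α] [Fintype β] {f : α → β}
    (hf : Function.Injective f) {m : ℕ} (hm : Fintype.card α + m = Fintype.card β) :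
    ∃ e : α ⊕ Fin m ≃ β, ∀ x, e (.inl x) = f x := by
  classical
  have hcard : Fintype.card {y // ¬ y ∈ range f} = m := by
    have : Fintype.card {y // y ∈ range f} = Fintype.card α := Set.card_range_of_injective hf
    rw [Fintype.card_subtype_compl]
    omega
  exact ⟨(Equiv.sumCongr (Equiv.ofInjective f hf) (Fintype.equivFinOfCardEq hcard).symm).trans
    (Equiv.sumCompl _), fun x ↦ rfl⟩

/-- The coordinates `ι ⊕ ι` of a family of points of the plane indexed by `ι ≃ M ⊕ F`, where
`M ≃ K ⊕ H`, sorted into the first coordinates over `K` and the second coordinates over `M`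
(the variables of integration), the remaining first coordinates over `H`, and both coordinates
over `F`. -/
def coordEquiv (eH : K ⊕ H ≃ M) (eF : M ⊕ F ≃ ι) : (K ⊕ M) ⊕ (H ⊕ (F ⊕ F)) ≃ ι ⊕ ι :=
  let swap : (K ⊕ M) ⊕ H ≃ (K ⊕ H) ⊕ M := (Equiv.sumAssoc K M H).trans
    ((Equiv.sumCongr (.refl K) (.sumComm M H)).trans (Equiv.sumAssoc K H M).symm)
  (Equiv.sumAssoc (K ⊕ M) H (F ⊕ F)).symm.trans <|
    (Equiv.sumCongr (swap.trans (.sumCongr eH (.refl M))) (.refl (F ⊕ F))).trans <|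
      (Equiv.sumSumSumComm M F M F).symm.trans (.sumCongr eF eF)

variable (eH : K ⊕ H ≃ M) (eF : M ⊕ F ≃ ι)

lemma coordEquiv_inl_inl (l : K) :
    coordEquiv eH eF (.inl (.inl l)) = .inl (eF (.inl (eH (.inl l)))) := rfl

lemma coordEquiv_inl_inr (t : M) : coordEquiv eH eF (.inl (.inr t)) = .inr (eF (.inl t)) := rfl

lemma coordEquiv_inr_inr (x : F ⊕ F) :
    coordEquiv eH eF (.inr (.inr x)) = x.map (fun f ↦ eF (.inr f)) fun f ↦ eF (.inr f) := by
  cases x <;> rfl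

end Coordinates

/-- The exponents of the monomials of degree between `1` and `k`: the powers of the first variable,
and the monomials divisible by the second variable. -/
def phaseExp (k : ℕ) : Fin k ⊕ TriIndex k → ℕ × ℕ :=
  Sum.elim (fun i ↦ ((i : ℕ) + 1, 0)) fun t ↦ (t.exp.1, t.exp.2 + 1)

/-- The monomial with index `m`, summed over a family of points with signs `ε`. -/
def phasePoly (k : ℕ) {ι : Type*} [Fintype ι] (ε : ι → ℝ) (m : Fin k ⊕ TriIndex k) :
    MvPolynomial (ι ⊕ ι) ℝ :=
  ∑ i, MvPolynomial.C (ε i) * (MvPolynomial.X (.inl i) ^ (phaseExp k m).1 *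
    MvPolynomial.X (.inr i) ^ (phaseExp k m).2)

/-- The modulus of the Jacobian of the map `phasePoly k ε` in the variables selected by `e`. -/
def phaseJacobian (k : ℕ) {ι : Type*} [Fintype ι] (ε : ι → ℝ) (e : Fin k ⊕ TriIndex k → ι ⊕ ι)
    (y : ι ⊕ ι → ℝ) : ℝ≥0∞ :=
  ‖(Matrix.of fun m m' ↦ MvPolynomial.eval y (MvPolynomial.pderiv (e m') (phasePoly k ε m))).det‖ₑ

section Jacobian

variable {k : ℕ} {ι : Type*} [Fintype ι] {ε : ι → ℝ}

lemma eval_pderiv_inl_phasePoly (ε : ι → ℝ) (m : Fin k ⊕ TriIndex k) (y : ι ⊕ ι → ℝ) (i : ι) :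
    MvPolynomial.eval y (MvPolynomial.pderiv (.inl i) (phasePoly k ε m)) = ε i *
      ((phaseExp k m).1 * y (.inl i) ^ ((phaseExp k m).1 - 1) * y (.inr i) ^ (phaseExp k m).2) := by
  classical
  rw [phasePoly, map_sum, map_sum, Finset.sum_eq_single i]
  · simp only [Derivation.leibniz, MvPolynomial.pderiv_C, Derivation.leibniz_pow,
      MvPolynomial.pderiv_X, Pi.single_apply]
    simp [mul_comm]
  · intro j _ hj
    simp [MvPolynomial.pderiv_X, hj]
  · simp

lemma eval_pderiv_inr_phasePoly (ε : ι → ℝ) (m : Fin k ⊕ TriIndex k) (y : ι ⊕ ι → ℝ) (i : ι) :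
    MvPolynomial.eval y (MvPolynomial.pderiv (.inr i) (phasePoly k ε m)) = ε i *
      (y (.inl i) ^ (phaseExp k m).1 *
        ((phaseExp k m).2 * y (.inr i) ^ ((phaseExp k m).2 - 1))) := by
  classical
  rw [phasePoly, map_sum, map_sum, Finset.sum_eq_single i]
  · simp [MvPolynomial.pderiv_X]
  · intro j _ hj
    simp [MvPolynomial.pderiv_X, hj]
  · simp

lemma continuous_phaseJacobian (ε : ι → ℝ) (e : Fin k ⊕ TriIndex k → ι ⊕ ι) :
    Continuous (phaseJacobian k ε e) :=
  (Continuous.matrix_det <| continuous_matrix fun _ _ ↦ MvPolynomial.continuous_eval _).enorm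

-- The powers of the first variable do not involve the second one, so the Jacobian matrix is block
-- triangular.
lemma pderiv_phasePoly_eq_fromBlocks (ε : ι → ℝ) (y : ι ⊕ ι → ℝ) (a : TriIndex k → ι)
    (b : Fin k → ι) {e : Fin k ⊕ TriIndex k → ι ⊕ ι} (hl : ∀ l, e (.inl l) = .inl (b l))
    (hr : ∀ t, e (.inr t) = .inr (a t)) :
    (Matrix.of fun m m' ↦ MvPolynomial.eval y (MvPolynomial.pderiv (e m') (phasePoly k ε m))) =
      Matrix.fromBlocks
        (Matrix.of fun l l' : Fin k ↦ ((l : ℝ) + 1) * (Matrix.of fun l l' ↦ ε (b l') *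
          (Matrix.vandermonde fun l ↦ y (.inl (b l))).transpose l l') l l')
        0
        (Matrix.of fun (t : TriIndex k) (l : Fin k) ↦
          MvPolynomial.eval y (MvPolynomial.pderiv (e (.inl l)) (phasePoly k ε (.inr t))))
        (Matrix.of fun t t' : TriIndex k ↦ ((t.exp.2 + 1).factorial : ℝ) * (Matrix.of fun t t' ↦
          ε (a t') * (Matrix.of fun t ↦ monoRow k y (a t)).transpose t t') t t') := by
  ext (l | t) (l' | t')
  · simp only [Matrix.of_apply, Matrix.fromBlocks_apply₁₁, Matrix.transpose_apply,
      Matrix.vandermonde_apply, hl, eval_pderiv_inl_phasePoly, phaseExp, Sum.elim_inl,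
      Nat.add_sub_cancel, pow_zero, mul_one, Nat.cast_add, Nat.cast_one]
    ring
  · simp [hr, eval_pderiv_inr_phasePoly, phaseExp]
  · simp
  · simp [hr, eval_pderiv_inr_phasePoly, phaseExp, monoRow, TriIndex.mono, Nat.factorial_succ]
    field_simp

lemma one_le_prod_abs {α : Type*} [Fintype α] {f : α → ℝ} (hf : ∀ a, 1 ≤ f a) :
    1 ≤ ∏ a, |f a| :=
  Finset.prod_const_one.symm.le.trans <| Finset.prod_le_prod (fun _ _ ↦ zero_le_one)
    fun a _ ↦ (hf a).trans (le_abs_self _)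

lemma enorm_det_mul_enorm_det_le_phaseJacobian (hε : ∀ i, |ε i| = 1) (y : ι ⊕ ι → ℝ)
    (a : TriIndex k → ι) (b : Fin k → ι) {e : Fin k ⊕ TriIndex k → ι ⊕ ι}
    (hl : ∀ l, e (.inl l) = .inl (b l)) (hr : ∀ t, e (.inr t) = .inr (a t)) :
    ‖(Matrix.vandermonde fun l ↦ y (.inl (b l))).det‖ₑ *
      ‖(Matrix.of fun t ↦ monoRow k y (a t)).det‖ₑ ≤ phaseJacobian k ε e y := by
  rw [phaseJacobian, pderiv_phasePoly_eq_fromBlocks ε y a b hl hr, Matrix.det_fromBlocks_zero₁₂,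
    Matrix.det_mul_column, Matrix.det_mul_column, Matrix.det_mul_row, Matrix.det_mul_row,
    Matrix.det_transpose, Matrix.det_transpose, ← enorm_mul, Real.enorm_eq_ofReal_abs,
    Real.enorm_eq_ofReal_abs]
  refine ENNReal.ofReal_le_ofReal ?_
  simp only [abs_mul, Finset.abs_prod, hε, Finset.prod_const_one, one_mul]
  gcongr
  · exact le_mul_of_one_le_left (abs_nonneg _) (one_le_prod_abs fun l ↦ by simp)
  · exact le_mul_of_one_le_left (abs_nonneg _) (one_le_prod_abs fun t ↦ by
      exact_mod_cast (Nat.factorial_pos _))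

end Jacobian

/-- The weight dominating the inverse of the Jacobian of the change of variables, in the coordinates
`Fin (k.choose 2) ⊕ (F ⊕ F)` that are not integrated out: it is built on the points indexed by `F`,
and on `k.choose 2 + 1` first coordinates, one of which is that of the point `j`. -/
def phaseWeight (k : ℕ) {F : Type*} (τ : ℝ) (j : F) (z : Fin (k.choose 2) ⊕ (F ⊕ F) → ℝ) : ℝ≥0∞ :=
  maxMonoDet k (fun x ↦ z (.inr x)) ^ (-τ) *
    maxVandermonde k (fun o : Option (Fin (k.choose 2)) ↦
      o.elim (z (.inr (.inl j))) fun x ↦ z (.inl x)) ^ (-τ)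

section Weight

variable {k : ℕ} {τ : ℝ}

lemma measurable_maxVandermonde_elim (n : ℕ) (P : Type*) [Finite P] :
    Measurable fun x : ℝ × (P → ℝ) ↦ maxVandermonde n fun o : Option P ↦ o.elim x.1 x.2 := by
  refine (measurable_maxVandermonde n (Option P)).comp (measurable_pi_lambda _ fun o ↦ ?_)
  cases o with
  | none => exact measurable_fst
  | some i => exact (measurable_pi_apply i).comp measurable_snd

lemma measurable_phaseWeight {F : Type*} [Finite F] (j : F) : Measurable (phaseWeight k τ j) := by
  have hpair : Measurable fun z : Fin (k.choose 2) ⊕ (F ⊕ F) → ℝ ↦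
      (z (.inr (.inl j)), fun x ↦ z (.inl x)) := by fun_prop
  exact (((measurable_maxMonoDet k F).comp (by fun_prop)).pow_const _).mul
    (((measurable_maxVandermonde_elim k _).comp hpair).pow_const _)

lemma lintegral_phaseWeight_ne_top {F : Type} [Fintype F] (hF : critExponent k ≤ Fintype.card F)
    (hτ0 : 0 ≤ τ) (hτ : τ < 1) (j : F) :
    ∫⁻ z in Icc 0 1, phaseWeight k τ j z ≠ ⊤ := by
  obtain ⟨C, hC, hCle⟩ := exists_lintegral_maxVandermonde_rpow_le k hτ0 hτ
  have hm := measurable_phaseWeight (k := k) (τ := τ) j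
  have hmp := measurePreserving_sumPiEquivProdPi_symm
    fun _ : Fin (k.choose 2) ⊕ (F ⊕ F) ↦ volume.restrict (Icc (0 : ℝ) 1)
  rw [volume_restrict_Icc_pi, ← hmp.lintegral_comp hm, ← volume_restrict_Icc_pi,
    ← volume_restrict_Icc_pi, lintegral_prod_symm' _ (by exact hm.comp hmp.measurable)]
  have hinner (w : F ⊕ F → ℝ) : ∫⁻ u in Icc (0 : Fin (k.choose 2) → ℝ) 1, phaseWeight k τ j
      ((MeasurableEquiv.sumPiEquivProdPi fun _ : Fin (k.choose 2) ⊕ (F ⊕ F) ↦ ℝ).symm (u, w)) ≤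
        maxMonoDet k w ^ (-τ) * C := by
    have hVm := (measurable_maxVandermonde_elim k (Fin (k.choose 2))).comp
      (measurable_prodMk_left (x := w (.inl j)))
    exact (lintegral_const_mul _ (hVm.pow_const (-τ))).trans_le
      (mul_le_mul_right (hCle (w (.inl j))) _)
  refine ne_top_of_le_ne_top ?_ (lintegral_mono hinner)
  rw [lintegral_mul_const _ ((measurable_maxMonoDet _ _).pow_const _)]
  exact ENNReal.mul_ne_top (lintegral_maxMonoDet_rpow_ne_top k hF hτ) hC

variable {F ι : Type*}

lemma maxMonoDet_rpow_mul_maxVandermonde_rpow_le_phaseWeight (hτ : 0 ≤ τ)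
    (eH : Fin k ⊕ Fin (k.choose 2) ≃ TriIndex k) (eF : TriIndex k ⊕ F ≃ ι) (j : F)
    (y : ι ⊕ ι → ℝ) :
    maxMonoDet k y ^ (-τ) * maxVandermonde k (fun i ↦ y (.inl i)) ^ (-τ) ≤
      phaseWeight k τ j fun r ↦ y (coordEquiv eH eF (.inr r)) := by
  refine mul_le_mul' (ennreal_rpow_neg_le_rpow_neg hτ ?_) (ennreal_rpow_neg_le_rpow_neg hτ ?_)
  · simp only [coordEquiv_inr_inr]
    exact maxMonoDet_comp_le k y fun f ↦ eF (.inr f)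
  · refine le_trans (le_of_eq ?_) (maxVandermonde_comp_le k (fun i ↦ y (.inl i))
      fun o : Option (Fin (k.choose 2)) ↦ o.elim (eF (.inr j)) fun x ↦ eF (.inl (eH (.inr x))))
    congr 1
    ext (_ | x) <;> rfl

/-- The constant of the exchange lemma for the monomials of degree less than `k`. -/
def exchangeConst (k : ℕ) : ℝ≥0∞ := (Fintype.card (TriIndex k) : ℝ≥0∞) ^ k

lemma exchangeConst_ne_top (k : ℕ) : exchangeConst k ≠ ⊤ :=
  ENNReal.pow_ne_top (ENNReal.natCast_ne_top _)

lemma TriIndex.exists_mono_eq_pow (k : ℕ) :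
    ∃ e : Fin k → TriIndex k, ∀ l (u v : ℝ), (e l).mono u v = u ^ (l : ℕ) := by
  cases k with
  | zero => exact ⟨Fin.elim0, fun l ↦ l.elim0⟩
  | succ n => exact ⟨Sum.inl, fun l u v ↦ TriIndex.mono_inl l u v⟩

lemma exists_maxMonoDet_maxVandermonde_le [Finite ι] {y : ι ⊕ ι → ℝ} (hT : maxMonoDet k y ≠ 0)
    (hV : maxVandermonde k (fun i ↦ y (.inl i)) ≠ 0) :
    ∃ (a : TriIndex k → ι) (σ : Fin k → TriIndex k),
      Function.Injective a ∧ Function.Injective σ ∧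
      maxMonoDet k y ≤ exchangeConst k * ‖(Matrix.of fun γ ↦ monoRow k y (a γ)).det‖ₑ ∧
      maxVandermonde k (fun i ↦ y (.inl i)) ≤
        ‖(Matrix.vandermonde fun l ↦ y (.inl (a (σ l)))).det‖ₑ := by
  obtain ⟨e, he⟩ := TriIndex.exists_mono_eq_pow k
  have hvand (b : Fin k → ι) : (Matrix.of fun l l' ↦ monoRow k y (b l) (e l')) =
      Matrix.vandermonde fun l ↦ y (.inl (b l)) := by
    ext l l'
    exact he l' _ _
  have ha₀ : ∃ a₀ : TriIndex k → ι, (Matrix.of fun γ ↦ monoRow k y (a₀ γ)).det ≠ 0 := by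
    by_contra! h
    exact hT (by simp [maxMonoDet, h])
  have hb₀ : ∃ b₀ : Fin k → ι, (Matrix.vandermonde fun l ↦ y (.inl (b₀ l))).det ≠ 0 := by
    by_contra! h
    exact hV (by simp [maxVandermonde, h])
  simp only [← hvand] at hb₀
  obtain ⟨a, σ, hmono, hvdm, ha, hσ⟩ := exists_maximal_det_comp (monoRow k y) e ha₀ hb₀
  simp only [hvand] at hvdm hσ
  refine ⟨a, σ, fun γ γ' h ↦ ?_, fun l l' h ↦ ?_, iSup_le fun a' ↦ ?_, iSup_le fun b' ↦ ?_⟩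
  · by_contra hne
    exact ha (Matrix.det_zero_of_row_eq hne (by ext; simp [h]))
  · by_contra hne
    exact hσ (Matrix.det_zero_of_row_eq hne (by ext; simp [h, Matrix.vandermonde_apply]))
  · have := ENNReal.ofReal_le_ofReal (hmono a')
    rw [ENNReal.ofReal_mul (by positivity), ENNReal.ofReal_pow (by positivity),
      ENNReal.ofReal_natCast, Fintype.card_fin] at this
    simpa only [Real.enorm_eq_ofReal_abs, exchangeConst] using this
  · simpa only [Real.enorm_eq_ofReal_abs] using ENNReal.ofReal_le_ofReal (hvdm b')

lemma exists_rpow_le_phaseJacobian_mul_phaseWeight [Fintype ι] {m : ℕ}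
    (hm : Fintype.card (TriIndex k) + m = Fintype.card ι) {ε : ι → ℝ} (hε : ∀ i, |ε i| = 1)
    (hτ : 0 ≤ τ) (j : Fin m) {y : ι ⊕ ι → ℝ}
    (hy : maxMonoDet k y * maxVandermonde k (fun i ↦ y (.inl i)) ≠ 0) :
    ∃ (eH : Fin k ⊕ Fin (k.choose 2) ≃ TriIndex k) (eF : TriIndex k ⊕ Fin m ≃ ι),
      (maxMonoDet k y * maxVandermonde k (fun i ↦ y (.inl i))) ^ (1 - τ) ≤
      exchangeConst k * (phaseJacobian k ε (fun m ↦ coordEquiv eH eF (.inl m)) y *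
        phaseWeight k τ j fun r ↦ y (coordEquiv eH eF (.inr r))) := by
  obtain ⟨hT, hV⟩ := mul_ne_zero_iff.1 hy
  obtain ⟨a, σ, ha, hσ, hTle, hVle⟩ := exists_maxMonoDet_maxVandermonde_le hT hV
  have hTtop := ne_top_of_le_ne_top (ENNReal.mul_ne_top (exchangeConst_ne_top k) enorm_ne_top) hTle
  have hVtop := ne_top_of_le_ne_top enorm_ne_top hVle
  have hcard : Fintype.card (Fin k) + k.choose 2 = Fintype.card (TriIndex k) := by
    rw [TriIndex.card_eq_choose, Fintype.card_fin, Nat.choose_succ_succ' k 1, Nat.choose_one_right]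
  obtain ⟨eH, heH⟩ := exists_equiv_sum_of_injective hσ hcard
  obtain ⟨eF, heF⟩ := exists_equiv_sum_of_injective ha hm
  refine ⟨eH, eF, ?_⟩
  rw [sub_eq_add_neg, ENNReal.rpow_add 1 (-τ) hy (ENNReal.mul_ne_top hTtop hVtop),
    ENNReal.rpow_one, ENNReal.mul_rpow_of_ne_top hTtop hVtop, ← mul_assoc (exchangeConst k)]
  refine mul_le_mul' ((mul_le_mul' hTle hVle).trans ?_)
    (maxMonoDet_rpow_mul_maxVandermonde_rpow_le_phaseWeight hτ eH eF j y)
  rw [mul_assoc, mul_comm ‖_‖ₑ]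
  refine mul_le_mul_right (enorm_det_mul_enorm_det_le_phaseJacobian hε y a (fun l ↦ a (σ l))
    (fun l ↦ ?_) fun t ↦ ?_) _
  · rw [coordEquiv_inl_inl, heF, heH]
  · rw [coordEquiv_inl_inr, heF]

lemma rpow_le_sum_phaseJacobian_mul_phaseWeight [Fintype ι] [DecidableEq ι] {m : ℕ}
    (hm : Fintype.card (TriIndex k) + m = Fintype.card ι) {ε : ι → ℝ} (hε : ∀ i, |ε i| = 1)
    (hτ0 : 0 ≤ τ) (hτ : τ < 1) (j : Fin m) {y : ι ⊕ ι → ℝ} (hy : y ∈ Icc 0 1) :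
    (maxMonoDet k y * maxVandermonde k (fun i ↦ y (.inl i))) ^ (1 - τ) ≤
      ∑ s : (Fin k ⊕ Fin (k.choose 2) ≃ TriIndex k) × (TriIndex k ⊕ Fin m ≃ ι),
        exchangeConst k * (phaseJacobian k ε (fun m ↦ coordEquiv s.1 s.2 (.inl m)) y *
          (Icc 0 1).indicator (phaseWeight k τ j) fun r ↦ y (coordEquiv s.1 s.2 (.inr r))) := by
  by_cases h0 : maxMonoDet k y * maxVandermonde k (fun i ↦ y (.inl i)) = 0
  · rw [h0, ENNReal.zero_rpow_of_pos (sub_pos.2 hτ)]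
    exact zero_le
  obtain ⟨eH, eF, hle⟩ := exists_rpow_le_phaseJacobian_mul_phaseWeight hm hε hτ0 j h0
  refine (hle.trans_eq ?_).trans
    (Finset.single_le_sum (fun _ _ ↦ zero_le) (Finset.mem_univ (eH, eF)))
  have hmem : (fun r ↦ y (coordEquiv eH eF (.inr r))) ∈ Icc 0 1 := ⟨fun _ ↦ hy.1 _, fun _ ↦ hy.2 _⟩
  rw [indicator_of_mem hmem]

lemma exists_lintegral_comp_phasePoly_le {ι : Type*} [Fintype ι]
    (hι : Fintype.card (TriIndex k) + critExponent k ≤ Fintype.card ι) {ε : ι → ℝ}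
    (hε : ∀ i, |ε i| = 1) (hτ0 : 0 ≤ τ) (hτ : τ < 1) :
    ∃ C : ℝ≥0∞, C ≠ ⊤ ∧ ∀ h : (Fin k ⊕ TriIndex k → ℝ) → ℝ≥0∞, Measurable h →
      ∫⁻ y in Icc (0 : ι ⊕ ι → ℝ) 1,
        (maxMonoDet k y * maxVandermonde k (fun i ↦ y (.inl i))) ^ (1 - τ) *
        h (fun m ↦ MvPolynomial.eval y (phasePoly k ε m)) ≤ C * ∫⁻ z, h z := by
  classical
  obtain ⟨m, hm⟩ := Nat.exists_eq_add_of_le (le_self_add.trans hι)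
  have hmcrit : critExponent k ≤ m := by omega
  set j : Fin m := ⟨0, by have := succ_le_critExponent k; omega⟩
  choose K hK using fun s : (Fin k ⊕ Fin (k.choose 2) ≃ TriIndex k) × (TriIndex k ⊕ Fin m ≃ ι) ↦
    exists_lintegral_det_pderiv_mul_le (coordEquiv s.1 s.2) (phasePoly k ε)
  set w := (Icc 0 1).indicator (phaseWeight k τ j)
  have hw : Measurable w := (measurable_phaseWeight j).indicator measurableSet_Icc
  have hwtop : ∫⁻ z, w z ≠ ⊤ := by
    rw [lintegral_indicator measurableSet_Icc]
    exact lintegral_phaseWeight_ne_top (by simpa using hmcrit) hτ0 hτ j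
  refine ⟨∑ s, exchangeConst k * (K s * ∫⁻ z, w z), ENNReal.sum_ne_top.2 fun s _ ↦
    ENNReal.mul_ne_top (exchangeConst_ne_top k) (ENNReal.mul_ne_top (ENNReal.natCast_ne_top _)
      hwtop), fun h hh ↦ ?_⟩
  set J := fun (s : (Fin k ⊕ Fin (k.choose 2) ≃ TriIndex k) × (TriIndex k ⊕ Fin m ≃ ι))
    (y : ι ⊕ ι → ℝ) ↦ phaseJacobian k ε (fun m ↦ coordEquiv s.1 s.2 (.inl m)) y *
      (h (fun m ↦ MvPolynomial.eval y (phasePoly k ε m)) *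
        w fun r ↦ y (coordEquiv s.1 s.2 (.inr r))) with hJ
  have hJm (s) : Measurable (J s) :=
    (continuous_phaseJacobian ε _).measurable.mul <| (hh.comp (measurable_pi_lambda _ fun m ↦
      (MvPolynomial.continuous_eval _).measurable)).mul (hw.comp (by fun_prop))
  calc _ ≤ ∫⁻ y in Icc (0 : ι ⊕ ι → ℝ) 1, ∑ s, exchangeConst k * J s y := by
        refine setLIntegral_mono' measurableSet_Icc fun y hy ↦ (mul_le_mul_left
          (rpow_le_sum_phaseJacobian_mul_phaseWeight hm.symm hε hτ0 hτ j hy) _).trans_eq ?_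
        rw [Finset.sum_mul]
        exact Finset.sum_congr rfl fun s _ ↦ by simp only [hJ, w]; ring
    _ ≤ ∫⁻ y, ∑ s, exchangeConst k * J s y := setLIntegral_le_lintegral _ _
    _ = ∑ s, exchangeConst k * ∫⁻ y, J s y := by
        rw [lintegral_finsetSum _ fun s _ ↦ (hJm s).const_mul _]
        exact Finset.sum_congr rfl fun s _ ↦ lintegral_const_mul _ (hJm s)
    _ ≤ ∑ s, exchangeConst k * (K s * ∫⁻ z, w z) * ∫⁻ z, h z := Finset.sum_le_sum fun s _ ↦
        (mul_le_mul_right (hK s h _ hh hw) _).trans_eq (by ring)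
    _ = _ := (Finset.sum_mul ..).symm

end Weight

/-! ### Oscillatory integrals and Plancherel's inequality -/

lemma integral_gaussian_mul_cexp {b : ℝ} (hb : 0 < b) (z : ℝ) :
    ∫ t : ℝ, (rexp (-(π * b) * t ^ 2) : ℂ) * Complex.exp (2 * π * Complex.I * (t * z : ℝ)) =
      ((√(1 / b) * rexp (-(π / b) * z ^ 2) : ℝ) : ℂ) := by
  have hbc : (b : ℂ) ≠ 0 := by exact_mod_cast hb.ne'
  have hpc : (π : ℂ) ≠ 0 := by exact_mod_cast pi_ne_zero
  calc ∫ t : ℝ, (rexp (-(π * b) * t ^ 2) : ℂ) * Complex.exp (2 * π * Complex.I * (t * z : ℝ))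
      = ∫ t : ℝ, Complex.exp (Complex.I * (2 * π * z : ℂ) * t) *
          Complex.exp (-((π * b : ℝ) : ℂ) * t ^ 2) := by
        congr with t
        rw [mul_comm]
        push_cast
        congr 2
        ring
    _ = _ := fourierIntegral_gaussian (by simpa using mul_pos pi_pos hb) (2 * π * z : ℂ)
    _ = _ := by
        push_cast
        rw [Real.sqrt_eq_rpow, Complex.ofReal_cpow (by positivity)]
        congr 2
        · push_cast
          field_simp
        · push_cast
          rfl
        · field_simp
          ring

/-- The Gaussian function `exp (-π b |x|²)` on a finite product of real lines, by which an integral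
over the whole space is regularised. -/
def gaussianWeight {I : Type*} [Fintype I] (b : ℝ) (x : I → ℝ) : ℝ :=
  ∏ i, rexp (-(π * b) * x i ^ 2)

section GaussianWeight

variable {I : Type*} [Fintype I]

lemma gaussianWeight_nonneg (b : ℝ) (x : I → ℝ) : 0 ≤ gaussianWeight b x :=
  Finset.prod_nonneg fun _ _ ↦ (exp_pos _).le

lemma continuous_gaussianWeight (b : ℝ) : Continuous (gaussianWeight (I := I) b) := by
  unfold gaussianWeight
  fun_prop

lemma tendsto_gaussianWeight_zero (x : I → ℝ) :
    Filter.Tendsto (fun b ↦ gaussianWeight b x) (nhds 0) (nhds 1) := by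
  have hc : Continuous fun b ↦ gaussianWeight b x := by
    unfold gaussianWeight
    fun_prop
  simpa [gaussianWeight] using hc.tendsto 0

lemma integrable_gaussianWeight {b : ℝ} (hb : 0 < b) :
    Integrable (gaussianWeight (I := I) b) :=
  Integrable.fintype_prod fun _ ↦ integrable_exp_neg_mul_sq (mul_pos pi_pos hb)

lemma integral_gaussianWeight (b : ℝ) :
    ∫ x, gaussianWeight (I := I) b x = √(1 / b) ^ Fintype.card I := by
  unfold gaussianWeight
  rw [integral_fintype_prod_volume_eq_pow (fun t : ℝ ↦ rexp (-(π * b) * t ^ 2)), integral_gaussian,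
    div_mul_eq_div_div, div_self pi_ne_zero]

lemma integral_gaussianWeight_mul_cexp {b : ℝ} (hb : 0 < b) (z : I → ℝ) :
    ∫ x, (gaussianWeight b x : ℂ) * Complex.exp (2 * π * Complex.I * (∑ i, x i * z i : ℝ)) =
      ((√(1 / b) ^ Fintype.card I * gaussianWeight (1 / b) z : ℝ) : ℂ) := by
  calc _ = ∫ x : I → ℝ, ∏ i, (rexp (-(π * b) * x i ^ 2) : ℂ) *
        Complex.exp (2 * π * Complex.I * (x i * z i : ℝ)) := by
        congr with x
        rw [Finset.prod_mul_distrib, ← Complex.exp_sum]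
        unfold gaussianWeight
        push_cast
        rw [Finset.mul_sum]
    _ = _ := integral_fintype_prod_volume_eq_prod fun i (t : ℝ) ↦
        (rexp (-(π * b) * t ^ 2) : ℂ) * Complex.exp (2 * π * Complex.I * (t * z i : ℝ))
    _ = _ := by
        simp_rw [integral_gaussian_mul_cexp hb]
        rw [← Complex.ofReal_prod, Finset.prod_mul_distrib, gaussianWeight]
        simp [div_eq_mul_inv]

lemma lintegral_ofReal_gaussianWeight {b : ℝ} (hb : 0 < b) :
    ∫⁻ z, ENNReal.ofReal (√(1 / b) ^ Fintype.card I * gaussianWeight (I := I) (1 / b) z) = 1 := by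
  rw [← ofReal_integral_eq_lintegral_ofReal
    ((integrable_gaussianWeight (by positivity)).const_mul _)
    (ae_of_all _ fun z ↦ mul_nonneg (by positivity) (gaussianWeight_nonneg _ _)),
    integral_const_mul, integral_gaussianWeight, ← mul_pow, ← Real.sqrt_mul (by positivity),
    one_div_one_div, one_div_mul_cancel hb.ne']
  simp

end GaussianWeight

lemma norm_cexp_two_pi_I_mul (r : ℝ) : ‖Complex.exp (2 * π * Complex.I * r)‖ = 1 := by
  rw [show (2 * π * Complex.I * r : ℂ) = ((2 * π * r : ℝ) : ℂ) * Complex.I by push_cast; ring,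
    Complex.norm_exp_ofReal_mul_I]

lemma measurable_cexp_two_pi_I_mul {X : Type*} [MeasurableSpace X] {g : X → ℝ} (hg : Measurable g) :
    Measurable fun x ↦ Complex.exp (2 * π * Complex.I * g x) := by
  fun_prop

/-- The oscillatory integral `∫ F(ζ) e(x · Φ(ζ)) dμ(ζ)` with phase functions `Φ` and
amplitude `F`. -/
def oscillatoryIntegral {X I : Type*} [MeasurableSpace X] [Fintype I] (μ : Measure X)
    (Φ : X → I → ℝ) (F : X → ℂ) (x : I → ℝ) : ℂ :=
  ∫ ζ, F ζ * Complex.exp (2 * π * Complex.I * (∑ i, x i * Φ ζ i : ℝ)) ∂μ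

section OscillatoryIntegral

variable {X : Type*} [MeasurableSpace X] {I : Type*} [Fintype I] {Φ : X → I → ℝ} {F : X → ℂ}

lemma stronglyMeasurable_oscillatoryIntegral (μ : Measure X) [SFinite μ] (hΦ : Measurable Φ)
    (hF : Measurable F) : StronglyMeasurable (oscillatoryIntegral μ Φ F) := by
  unfold oscillatoryIntegral
  refine StronglyMeasurable.integral_prod_right (Measurable.stronglyMeasurable ?_)
  exact (hF.comp measurable_snd).mul (measurable_cexp_two_pi_I_mul (by fun_prop))

lemma enorm_oscillatoryIntegral_le (μ : Measure X) (Φ : X → I → ℝ) (hF1 : ∀ ζ, ‖F ζ‖ ≤ 1)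
    (x : I → ℝ) : ‖oscillatoryIntegral μ Φ F x‖ₑ ≤ μ univ := by
  refine (enorm_integral_le_lintegral_enorm _).trans ((lintegral_mono fun ζ ↦ ?_).trans_eq
    lintegral_one)
  rw [← ofReal_norm, norm_mul, norm_cexp_two_pi_I_mul, mul_one]
  exact ENNReal.ofReal_le_one.2 (hF1 ζ)

lemma sq_norm_oscillatoryIntegral (μ : Measure X) [SFinite μ] (Φ : X → I → ℝ) (F : X → ℂ)
    (x : I → ℝ) : ((‖oscillatoryIntegral μ Φ F x‖ ^ 2 : ℝ) : ℂ) =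
      oscillatoryIntegral (μ.prod μ) (fun p i ↦ Φ p.1 i - Φ p.2 i)
        (fun p ↦ F p.1 * (starRingEnd ℂ) (F p.2)) x := by
  push_cast
  rw [← Complex.mul_conj', oscillatoryIntegral, ← integral_conj, ← integral_prod_mul]
  refine integral_congr_ae (ae_of_all _ fun p ↦ ?_)
  simp only [map_mul, ← Complex.exp_conj, map_ofNat, Complex.conj_ofReal, Complex.conj_I]
  rw [mul_mul_mul_comm, ← Complex.exp_add]
  congr 2
  push_cast
  simp only [mul_sub, Finset.sum_sub_distrib]
  ring

lemma integral_gaussianWeight_mul_oscillatoryIntegral {μ : Measure X} [SFinite μ]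
    (hΦ : Measurable Φ) (hF : Integrable F μ) {b : ℝ} (hb : 0 < b) :
    ∫ x, (gaussianWeight b x : ℂ) * oscillatoryIntegral μ Φ F x =
      ∫ ζ, F ζ * ((√(1 / b) ^ Fintype.card I * gaussianWeight (1 / b) (Φ ζ) : ℝ) : ℂ) ∂μ := by
  have hint : Integrable (fun q : (I → ℝ) × X ↦ (gaussianWeight b q.1 : ℂ) * F q.2 *
      Complex.exp (2 * π * Complex.I * (∑ i, q.1 i * Φ q.2 i : ℝ))) (volume.prod μ) := by
    refine ((integrable_gaussianWeight hb).ofReal.mul_prod hF).mul_bdd (c := 1)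
      (measurable_cexp_two_pi_I_mul (by fun_prop)).aestronglyMeasurable (ae_of_all _ fun q ↦ ?_)
    rw [norm_cexp_two_pi_I_mul]
  calc ∫ x, (gaussianWeight b x : ℂ) * oscillatoryIntegral μ Φ F x
      = ∫ x : I → ℝ, ∫ ζ, (gaussianWeight b x : ℂ) * F ζ *
          Complex.exp (2 * π * Complex.I * (∑ i, x i * Φ ζ i : ℝ)) ∂μ := by
        simp_rw [oscillatoryIntegral, ← integral_const_mul, mul_assoc]
    _ = ∫ ζ, (∫ x : I → ℝ, (gaussianWeight b x : ℂ) * F ζ *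
          Complex.exp (2 * π * Complex.I * (∑ i, x i * Φ ζ i : ℝ))) ∂μ :=
        integral_integral_swap hint
    _ = _ := by simp_rw [← integral_gaussianWeight_mul_cexp hb, ← integral_const_mul,
        mul_left_comm (F _), mul_assoc]

lemma enorm_integral_gaussianWeight_mul_oscillatoryIntegral_le {μ : Measure X} [IsFiniteMeasure μ]
    (hΦ : Measurable Φ) (hF : Measurable F) (hF1 : ∀ ζ, ‖F ζ‖ ≤ 1) {A : ℝ≥0∞}
    (hA : ∀ h : (I → ℝ) → ℝ≥0∞, Measurable h → ∫⁻ ζ, h (Φ ζ) ∂μ ≤ A * ∫⁻ z, h z)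
    {b : ℝ} (hb : 0 < b) :
    ‖∫ x, (gaussianWeight b x : ℂ) * oscillatoryIntegral μ Φ F x‖ₑ ≤ A := by
  have hFint : Integrable F μ := .of_bound hF.aestronglyMeasurable 1 (ae_of_all _ hF1)
  set H : (I → ℝ) → ℝ≥0∞ := fun z ↦
    ENNReal.ofReal (√(1 / b) ^ Fintype.card I * gaussianWeight (1 / b) z)
  have hH : Measurable H :=
    ((continuous_gaussianWeight _).measurable.const_mul _).ennreal_ofReal
  rw [integral_gaussianWeight_mul_oscillatoryIntegral hΦ hFint hb]
  calc _ ≤ ∫⁻ ζ, H (Φ ζ) ∂μ := by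
        refine (enorm_integral_le_lintegral_enorm _).trans (lintegral_mono fun ζ ↦ ?_)
        rw [← ofReal_norm, norm_mul, Complex.norm_real, norm_of_nonneg
          (mul_nonneg (by positivity) (gaussianWeight_nonneg _ _))]
        exact ENNReal.ofReal_le_ofReal (mul_le_of_le_one_left
          (mul_nonneg (by positivity) (gaussianWeight_nonneg _ _)) (hF1 ζ))
    _ ≤ A * ∫⁻ z, H z := hA H hH
    _ = A := by rw [lintegral_ofReal_gaussianWeight hb, mul_one]

lemma lintegral_gaussianWeight_mul_sq_enorm_oscillatoryIntegral_le {μ : Measure X}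
    [IsFiniteMeasure μ] (hΦ : Measurable Φ) (hF : Measurable F) (hF1 : ∀ ζ, ‖F ζ‖ ≤ 1) {A : ℝ≥0∞}
    (hA : ∀ h : (I → ℝ) → ℝ≥0∞, Measurable h →
      ∫⁻ p, h (fun i ↦ Φ p.1 i - Φ p.2 i) ∂(μ.prod μ) ≤ A * ∫⁻ z, h z) {b : ℝ} (hb : 0 < b) :
    ∫⁻ x, ENNReal.ofReal (gaussianWeight b x) * ‖oscillatoryIntegral μ Φ F x‖ₑ ^ 2 ≤ A := by
  have hosc := stronglyMeasurable_oscillatoryIntegral μ hΦ hF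
  have hint : Integrable fun x ↦ gaussianWeight b x * ‖oscillatoryIntegral μ Φ F x‖ ^ 2 := by
    refine (integrable_gaussianWeight hb).mul_bdd (c := μ.real univ ^ 2)
      (hosc.norm.pow 2).aestronglyMeasurable (ae_of_all _ fun x ↦ ?_)
    rw [norm_pow, norm_norm]
    refine pow_le_pow_left₀ (norm_nonneg _) ?_ 2
    rw [← toReal_enorm]
    exact ENNReal.toReal_mono (measure_ne_top μ _) (enorm_oscillatoryIntegral_le μ Φ hF1 x)
  have hnonneg (x : I → ℝ) : 0 ≤ gaussianWeight b x * ‖oscillatoryIntegral μ Φ F x‖ ^ 2 :=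
    mul_nonneg (gaussianWeight_nonneg _ _) (by positivity)
  have hΦ2 : Measurable fun (p : X × X) i ↦ Φ p.1 i - Φ p.2 i := by fun_prop
  have hF2 : Measurable fun p : X × X ↦ F p.1 * (starRingEnd ℂ) (F p.2) :=
    (hF.comp measurable_fst).mul (Complex.continuous_conj.measurable.comp (hF.comp measurable_snd))
  have hF2norm (p : X × X) : ‖F p.1 * (starRingEnd ℂ) (F p.2)‖ ≤ 1 := by
    rw [norm_mul, RCLike.norm_conj]
    exact mul_le_one₀ (hF1 _) (norm_nonneg _) (hF1 _)
  calc _ = ∫⁻ x, ENNReal.ofReal (gaussianWeight b x * ‖oscillatoryIntegral μ Φ F x‖ ^ 2) := by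
        refine lintegral_congr fun x ↦ ?_
        rw [ENNReal.ofReal_mul (gaussianWeight_nonneg _ _), ENNReal.ofReal_pow (norm_nonneg _),
          ofReal_norm]
    _ = ENNReal.ofReal (∫ x, gaussianWeight b x * ‖oscillatoryIntegral μ Φ F x‖ ^ 2) :=
        (ofReal_integral_eq_lintegral_ofReal hint (ae_of_all _ hnonneg)).symm
    _ = ‖((∫ x, gaussianWeight b x * ‖oscillatoryIntegral μ Φ F x‖ ^ 2 : ℝ) : ℂ)‖ₑ := by
        rw [← ofReal_norm, Complex.norm_real, norm_of_nonneg (integral_nonneg hnonneg)]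
    _ ≤ A := by
        rw [← integral_complex_ofReal]
        simp_rw [Complex.ofReal_mul, sq_norm_oscillatoryIntegral]
        exact enorm_integral_gaussianWeight_mul_oscillatoryIntegral_le hΦ2 hF2 hF2norm hA hb

-- Fatou's lemma removes the Gaussian regularisation.
lemma lintegral_sq_enorm_oscillatoryIntegral_le {μ : Measure X} [IsFiniteMeasure μ]
    (hΦ : Measurable Φ) (hF : Measurable F) (hF1 : ∀ ζ, ‖F ζ‖ ≤ 1) {A : ℝ≥0∞}
    (hA : ∀ h : (I → ℝ) → ℝ≥0∞, Measurable h →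
      ∫⁻ p, h (fun i ↦ Φ p.1 i - Φ p.2 i) ∂(μ.prod μ) ≤ A * ∫⁻ z, h z) :
    ∫⁻ x, ‖oscillatoryIntegral μ Φ F x‖ₑ ^ 2 ≤ A := by
  have hosc := stronglyMeasurable_oscillatoryIntegral μ hΦ hF
  set g : ℕ → (I → ℝ) → ℝ≥0∞ := fun n x ↦
    ENNReal.ofReal (gaussianWeight (1 / ((n : ℝ) + 1)) x) * ‖oscillatoryIntegral μ Φ F x‖ₑ ^ 2
  have hlim (x : I → ℝ) :
      Filter.Tendsto (g · x) Filter.atTop (nhds (‖oscillatoryIntegral μ Φ F x‖ₑ ^ 2)) := by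
    have hone := (tendsto_gaussianWeight_zero x).comp tendsto_one_div_add_atTop_nhds_zero_nat
    simpa [g] using ENNReal.Tendsto.mul_const (b := ‖oscillatoryIntegral μ Φ F x‖ₑ ^ 2)
      (ENNReal.tendsto_ofReal hone) (.inl (by simp))
  calc ∫⁻ x, ‖oscillatoryIntegral μ Φ F x‖ₑ ^ 2
      = ∫⁻ x, Filter.liminf (g · x) Filter.atTop :=
        lintegral_congr fun x ↦ (hlim x).liminf_eq.symm
    _ ≤ Filter.liminf (fun n ↦ ∫⁻ x, g n x) Filter.atTop :=
        lintegral_liminf_le fun n ↦ (continuous_gaussianWeight _).measurable.ennreal_ofReal.mul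
          (hosc.measurable.enorm.pow_const 2)
    _ ≤ A := Filter.liminf_le_of_le (by isBoundedDefault) fun a ha ↦
        ha.exists.elim fun n hn ↦ hn.trans <|
          lintegral_gaussianWeight_mul_sq_enorm_oscillatoryIntegral_le hΦ hF hF1 hA (by positivity)

lemma enorm_oscillatoryIntegral_le_add_measure_diff {μ : Measure X} (hΦ : Measurable Φ)
    (hF : Measurable F) (hF1 : ∀ ζ, ‖F ζ‖ ≤ 1) {S T : Set X} (hST : S ⊆ T) (hS : MeasurableSet S)
    (hT : MeasurableSet T) (hμT : μ T ≠ ⊤) (x : I → ℝ) :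
    ‖oscillatoryIntegral (μ.restrict T) Φ F x‖ₑ ≤
      ‖oscillatoryIntegral (μ.restrict S) Φ F x‖ₑ + μ (T \ S) := by
  have hint : IntegrableOn (fun ζ ↦ F ζ *
      Complex.exp (2 * π * Complex.I * (∑ i, x i * Φ ζ i : ℝ))) T μ := by
    refine Measure.integrableOn_of_bounded hμT
      (hF.mul (measurable_cexp_two_pi_I_mul (by fun_prop))).aestronglyMeasurable
      (M := 1) (ae_of_all _ fun ζ ↦ ?_)
    rw [norm_mul, norm_cexp_two_pi_I_mul, mul_one]
    exact hF1 ζ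
  have hsplit : oscillatoryIntegral (μ.restrict T) Φ F x =
      oscillatoryIntegral (μ.restrict S) Φ F x +
        oscillatoryIntegral (μ.restrict (T \ S)) Φ F x := by
    unfold oscillatoryIntegral
    rw [← setIntegral_union disjoint_sdiff_right (hT.diff hS) (hint.mono_set hST)
      (hint.mono_set sdiff_subset), union_sdiff_cancel hST]
  rw [hsplit]
  refine (enorm_add_le _ _).trans (add_le_add_right ?_ _)
  simpa using enorm_oscillatoryIntegral_le (μ.restrict (T \ S)) Φ hF1 x

lemma oscillatoryIntegral_pow_card (μ : Measure X) [SigmaFinite μ] (Φ : X → I → ℝ) (F : X → ℂ)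
    (x : I → ℝ) (J : Type*) [Fintype J] :
    oscillatoryIntegral μ Φ F x ^ Fintype.card J =
      oscillatoryIntegral (Measure.pi fun _ : J ↦ μ) (fun ζ i ↦ ∑ j, Φ (ζ j) i)
        (fun ζ ↦ ∏ j, F (ζ j)) x := by
  rw [oscillatoryIntegral, ← integral_fintype_prod_eq_pow, oscillatoryIntegral]
  refine integral_congr_ae (ae_of_all _ fun ζ ↦ ?_)
  simp only [Finset.prod_mul_distrib, ← Complex.exp_sum, ← Finset.mul_sum]
  rw [← Complex.ofReal_sum, Finset.sum_comm]
  simp only [Finset.mul_sum]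

end OscillatoryIntegral

/-! ### The nondegenerate configurations -/

/-- The configurations of points in the unit cube, indexed by `F`, whose weight is at least `κ`. -/
def nondegenerateSet (k : ℕ) (F : Type*) (κ : ℝ) : Set (F ⊕ F → ℝ) :=
  Icc 0 1 ∩ {ζ | ENNReal.ofReal κ ≤ maxMonoDet k ζ * maxVandermonde k fun j ↦ ζ (.inl j)}

/-- The map `φ_k`: the monomials of degree between `1` and `k`, with the multi-indices listed by
`Fin k ⊕ TriIndex k`. -/
def momentMap (k : ℕ) (ξ : Fin 2 → ℝ) (m : Fin k ⊕ TriIndex k) : ℝ :=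
  ξ 0 ^ (phaseExp k m).1 * ξ 1 ^ (phaseExp k m).2

/-- The sum of the values of `momentMap k` over a family of points of the plane. -/
def phaseSum (k : ℕ) {F : Type*} [Fintype F] (ζ : F ⊕ F → ℝ) (m : Fin k ⊕ TriIndex k) : ℝ :=
  ∑ j, ζ (.inl j) ^ (phaseExp k m).1 * ζ (.inr j) ^ (phaseExp k m).2

section Nondegenerate

variable {k : ℕ} {F : Type*}

lemma measurableSet_nondegenerateSet [Finite F] (κ : ℝ) :
    MeasurableSet (nondegenerateSet k F κ) :=
  have := Fintype.ofFinite F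
  measurableSet_Icc.inter <| measurableSet_le measurable_const <| (measurable_maxMonoDet k F).mul <|
    (measurable_maxVandermonde k F).comp (measurable_pi_lambda _ fun _ ↦ measurable_pi_apply _)

lemma le_weight_of_mem_nondegenerateSet {κ : ℝ} {y : (F ⊕ F) ⊕ (F ⊕ F) → ℝ}
    (hy : (fun a : F ⊕ F ↦ y (a.map .inl .inl)) ∈ nondegenerateSet k F κ) :
    ENNReal.ofReal κ ≤ maxMonoDet k y * maxVandermonde k fun i ↦ y (.inl i) :=
  hy.2.trans (mul_le_mul' (maxMonoDet_comp_le k y Sum.inl)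
    (maxVandermonde_comp_le k (fun i ↦ y (.inl i)) Sum.inl))

lemma mem_Icc_of_comp_map_mem_Icc {y : (F ⊕ F) ⊕ (F ⊕ F) → ℝ}
    (hl : (fun a : F ⊕ F ↦ y (a.map .inl .inl)) ∈ Icc (0 : F ⊕ F → ℝ) 1)
    (hr : (fun a : F ⊕ F ↦ y (a.map .inr .inr)) ∈ Icc (0 : F ⊕ F → ℝ) 1) :
    y ∈ Icc (0 : (F ⊕ F) ⊕ (F ⊕ F) → ℝ) 1 := by
  constructor
  · rintro ((j | j) | (j | j))
    exacts [hl.1 (.inl j), hr.1 (.inl j), hl.1 (.inr j), hr.1 (.inr j)]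
  · rintro ((j | j) | (j | j))
    exacts [hl.2 (.inl j), hr.2 (.inl j), hl.2 (.inr j), hr.2 (.inr j)]

variable [Fintype F]

lemma exists_volume_diff_nondegenerateSet_le
    (hF : Fintype.card (TriIndex k) ≤ Fintype.card F) :
    ∃ c > 0, ∃ C : ℝ≥0∞, C ≠ ⊤ ∧ ∀ κ : ℝ, 0 < κ →
      volume (Icc 0 1 \ nondegenerateSet k F κ) ≤ C * ENNReal.ofReal κ ^ (c : ℝ) := by
  obtain ⟨a⟩ := Function.Embedding.nonempty_of_card_le hF
  obtain ⟨b⟩ : Nonempty (Fin k ↪ F) := Function.Embedding.nonempty_of_card_le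
    (by simpa using (TriIndex.le_card k).trans hF)
  set P : MvPolynomial (F ⊕ F) ℝ := monoDetPoly (fun γ ↦ .inl (a γ)) fun γ ↦ .inr (a γ)
  set Q : MvPolynomial (F ⊕ F) ℝ :=
    (Matrix.vandermonde fun l ↦ MvPolynomial.X (.inl (b l))).det
  have hQ : Q ≠ 0 := Matrix.det_vandermonde_ne_zero_iff.2 fun l l' h ↦
    b.injective (Sum.inl_injective (MvPolynomial.X_injective h))
  have hQeval (y : F ⊕ F → ℝ) :
      ‖MvPolynomial.eval y Q‖ₑ ≤ maxVandermonde k fun j ↦ y (.inl j) := by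
    have hdet : MvPolynomial.eval y Q = (Matrix.vandermonde fun l ↦ y (.inl (b l))).det := by
      rw [RingHom.map_det]
      congr 1
      ext i j
      simp [Matrix.vandermonde]
    rw [hdet]
    exact le_iSup (fun b : Fin k → F ↦ ‖(Matrix.vandermonde fun l ↦ y (.inl (b l))).det‖ₑ) b
  obtain ⟨c, hc, C, hC, hsub⟩ := exists_volume_sublevel_mvPolynomial_le
    (mul_ne_zero (monoDetPoly_embedding_ne_zero a) hQ)
  refine ⟨c, hc, C, hC, fun κ hκ ↦ (measure_mono ?_).trans (hsub κ hκ)⟩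
  rintro y ⟨hy, hyn⟩
  refine ⟨?_, hy⟩
  by_contra hlt
  rw [mem_ofPred_eq, not_le] at hlt
  refine hyn ⟨hy, (ENNReal.ofReal_le_ofReal hlt.le).trans ?_⟩
  rw [map_mul, ← Real.enorm_eq_ofReal_abs, enorm_mul]
  exact mul_le_mul' (enorm_eval_monoDetPoly_le_maxMonoDet y a) (hQeval y)

lemma continuous_phaseSum : Continuous (phaseSum k (F := F)) := by
  unfold phaseSum
  fun_prop

lemma eval_phasePoly_eq_phaseSum_sub (y : (F ⊕ F) ⊕ (F ⊕ F) → ℝ) (m : Fin k ⊕ TriIndex k) :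
    MvPolynomial.eval y (phasePoly k (Sum.elim (fun _ : F ↦ 1) fun _ : F ↦ -1) m) =
      phaseSum k (fun a : F ⊕ F ↦ y (a.map .inl .inl)) m -
      phaseSum k (fun a : F ⊕ F ↦ y (a.map .inr .inr)) m := by
  simp [phasePoly, phaseSum, Fintype.sum_sum_type, sub_eq_add_neg]

lemma measurePreserving_sumSumSumComm (F : Type*) [Fintype F] :
    MeasurePreserving fun y : (F ⊕ F) ⊕ (F ⊕ F) → ℝ ↦
      ((fun a ↦ y (a.map .inl .inl), fun a ↦ y (a.map .inr .inr)) :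
        (F ⊕ F → ℝ) × (F ⊕ F → ℝ)) := by
  convert measurePreserving_pi_comp_sum (Equiv.sumSumSumComm F F F F) using 1
  ext y (a | a) <;> rfl

lemma one_le_ofReal_rpow_neg_mul_rpow {κ : ℝ} (hκ : 0 < κ) {η : ℝ} (hη : 0 ≤ η) {w : ℝ≥0∞}
    (hw : ENNReal.ofReal κ ≤ w) : 1 ≤ ENNReal.ofReal κ ^ (-η) * w ^ η := by
  have hκ0 : ENNReal.ofReal κ ^ η ≠ 0 :=
    (ENNReal.rpow_pos (ENNReal.ofReal_pos.2 hκ) ENNReal.ofReal_ne_top).ne'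
  have hκtop : ENNReal.ofReal κ ^ η ≠ ⊤ :=
    ENNReal.rpow_ne_top_of_nonneg hη ENNReal.ofReal_ne_top
  rw [ENNReal.rpow_neg, ← ENNReal.inv_mul_cancel hκ0 hκtop]
  exact mul_le_mul_right (ENNReal.rpow_le_rpow hw hη) _

lemma exists_lintegral_phaseSum_sub_le
    (hF : Fintype.card (TriIndex k) + critExponent k ≤ 2 * Fintype.card F) {η : ℝ} (hη : 0 < η)
    (hη1 : η ≤ 1) :
    ∃ C : ℝ≥0∞, C ≠ ⊤ ∧ ∀ κ : ℝ, 0 < κ → ∀ h : (Fin k ⊕ TriIndex k → ℝ) → ℝ≥0∞, Measurable h →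
      ∫⁻ p, h (fun m ↦ phaseSum k p.1 m - phaseSum k p.2 m)
        ∂((volume.restrict (nondegenerateSet k F κ)).prod
          (volume.restrict (nondegenerateSet k F κ))) ≤
        C * ENNReal.ofReal κ ^ (-η) * ∫⁻ z, h z := by
  obtain ⟨C, hC, hphase⟩ := exists_lintegral_comp_phasePoly_le (k := k) (τ := 1 - η)
    (ε := Sum.elim (fun _ : F ↦ 1) fun _ : F ↦ -1) (by rwa [Fintype.card_sum, ← two_mul])
    (by rintro (i | i) <;> simp) (by linarith) (by linarith)
  refine ⟨C, hC, fun κ hκ h hh ↦ ?_⟩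
  set S := nondegenerateSet k F κ
  have hS : MeasurableSet S := measurableSet_nondegenerateSet κ
  have hg : Measurable fun p : (F ⊕ F → ℝ) × (F ⊕ F → ℝ) ↦
      h (fun m ↦ phaseSum k p.1 m - phaseSum k p.2 m) :=
    hh.comp ((continuous_phaseSum.comp continuous_fst).sub
      (continuous_phaseSum.comp continuous_snd)).measurable
  set H : ((F ⊕ F) ⊕ (F ⊕ F) → ℝ) → ℝ≥0∞ := fun y ↦
    (maxMonoDet k y * maxVandermonde k fun i ↦ y (.inl i)) ^ (1 - (1 - η)) *
      h fun m ↦ MvPolynomial.eval y (phasePoly k (Sum.elim (fun _ : F ↦ 1) fun _ : F ↦ -1) m)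
    with hH
  rw [Measure.prod_restrict, ← Measure.volume_eq_prod, ← lintegral_indicator (hS.prod hS),
    ← (measurePreserving_sumSumSumComm F).lintegral_comp (hg.indicator (hS.prod hS))]
  calc _ ≤ ∫⁻ y, (Icc 0 1).indicator (fun y ↦ ENNReal.ofReal κ ^ (-η) * H y) y := by
        refine lintegral_mono fun y ↦ indicator_apply_le' (fun hy ↦ ?_) fun _ ↦ zero_le
        rw [indicator_of_mem (mem_Icc_of_comp_map_mem_Icc hy.1.1 hy.2.1)]
        simp only [hH, eval_phasePoly_eq_phaseSum_sub]
        rw [← mul_assoc, sub_sub_cancel]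
        exact le_mul_of_one_le_left' (one_le_ofReal_rpow_neg_mul_rpow hκ hη.le
          (le_weight_of_mem_nondegenerateSet hy.1))
    _ = ENNReal.ofReal κ ^ (-η) * ∫⁻ y in Icc 0 1, H y := by
        rw [lintegral_indicator measurableSet_Icc, lintegral_const_mul']
        exact ENNReal.rpow_ne_top_of_nonneg' (ENNReal.ofReal_pos.2 hκ) ENNReal.ofReal_ne_top
    _ ≤ ENNReal.ofReal κ ^ (-η) * (C * ∫⁻ z, h z) := mul_le_mul_right (hphase h hh) _
    _ = _ := by ring

lemma exists_lintegral_sq_enorm_oscillatoryIntegral_nondegenerateSet_le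
    (hF : Fintype.card (TriIndex k) + critExponent k ≤ 2 * Fintype.card F) {η : ℝ} (hη : 0 < η)
    (hη1 : η ≤ 1) :
    ∃ C : ℝ≥0∞, C ≠ ⊤ ∧ ∀ κ : ℝ, 0 < κ →
      ∀ g : (F ⊕ F → ℝ) → ℂ, Measurable g → (∀ ζ, ‖g ζ‖ ≤ 1) →
        ∫⁻ x, ‖oscillatoryIntegral (volume.restrict (nondegenerateSet k F κ)) (phaseSum k) g x‖ₑ ^ 2
          ≤ C * ENNReal.ofReal κ ^ (-η) := by
  obtain ⟨C, hC, hdiff⟩ := exists_lintegral_phaseSum_sub_le hF hη hη1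
  refine ⟨C, hC, fun κ hκ g hg hg1 ↦ ?_⟩
  have : IsFiniteMeasure (volume.restrict (nondegenerateSet k F κ)) :=
    isFiniteMeasure_restrict.2 (measure_ne_top_of_subset inter_subset_left
      isCompact_Icc.measure_lt_top.ne)
  exact lintegral_sq_enorm_oscillatoryIntegral_le continuous_phaseSum.measurable hg hg1 (hdiff κ hκ)

end Nondegenerate

/-! ### Integrability from approximation in mean square -/

section Layering

variable {X : Type*} {a : X → ℝ≥0∞} {δ η : ℝ}

lemma exists_inv_two_pow_lt_le {t : ℝ≥0∞} (ht0 : t ≠ 0) (ht1 : t ≤ 1) :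
    ∃ j : ℕ, 2⁻¹ ^ (j + 1) < t ∧ t ≤ 2⁻¹ ^ j := by
  classical
  have hex := ENNReal.exists_inv_two_pow_lt ht0
  obtain ⟨j, hj⟩ := Nat.exists_eq_succ_of_ne_zero fun h0 : Nat.find hex = 0 ↦
    (Nat.find_spec hex).not_ge (by rwa [h0, pow_zero])
  have hlt := Nat.find_spec hex
  rw [hj] at hlt
  exact ⟨j, hlt, not_lt.1 (Nat.find_min hex (hj ▸ j.lt_succ_self))⟩

lemma rpow_le_tsum_of_forall_dyadic_approx {t : ℝ≥0∞} (ht1 : t ≤ 1) (hδ : 0 < δ) {J : ℕ → ℝ≥0∞}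
    (hJ : ∀ j, t ≤ J j + 2⁻¹ ^ (j + 2)) :
    t ^ (2 + δ) ≤ ∑' j, 4 * (2⁻¹ ^ j) ^ δ * J j ^ 2 := by
  rcases eq_or_ne t 0 with rfl | ht0
  · rw [ENNReal.zero_rpow_of_pos (by linarith)]
    exact zero_le
  have httop : t ≠ ⊤ := ne_top_of_le_ne_top ENNReal.one_ne_top ht1
  obtain ⟨j, hjt, htj⟩ := exists_inv_two_pow_lt_le ht0 ht1
  have hhalf : t / 2 ≤ J j := by
    have hsplit : t / 2 + t / 2 ≤ J j + t / 2 := by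
      rw [ENNReal.add_halves]
      refine (hJ j).trans (add_le_add_right ?_ _)
      rw [pow_succ, div_eq_mul_inv]
      exact mul_le_mul_left hjt.le _
    exact (ENNReal.add_le_add_iff_right (ENNReal.div_ne_top httop two_ne_zero)).1 hsplit
  calc t ^ (2 + δ) = t ^ 2 * t ^ δ := by
        rw [ENNReal.rpow_add_of_nonneg _ _ zero_le_two hδ.le, ENNReal.rpow_two]
    _ ≤ (2 * J j) ^ 2 * (2⁻¹ ^ j) ^ δ := by
        gcongr
        rw [mul_comm]
        exact ENNReal.div_le_iff_le_mul (by simp) (by simp) |>.1 hhalf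
    _ = 4 * (2⁻¹ ^ j) ^ δ * J j ^ 2 := by ring
    _ ≤ _ := ENNReal.le_tsum j

variable [MeasurableSpace X] {μ : Measure X}

lemma lintegral_rpow_le_of_forall_dyadic_approx (ha : ∀ x, a x ≤ 1) (hδ : 0 < δ)
    {J : ℕ → X → ℝ≥0∞} (hJ : ∀ j, Measurable (J j)) (haJ : ∀ j x, a x ≤ J j x + 2⁻¹ ^ (j + 2))
    {D : ℝ≥0∞} (hJD : ∀ j, ∫⁻ x, J j x ^ 2 ∂μ ≤ D * (2⁻¹ ^ j) ^ (-η)) :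
    ∫⁻ x, a x ^ (2 + δ) ∂μ ≤ 4 * D * (1 - 2⁻¹ ^ (δ - η))⁻¹ := by
  have hgeom (j : ℕ) : ((2⁻¹ : ℝ≥0∞) ^ j) ^ δ * (2⁻¹ ^ j) ^ (-η) = (2⁻¹ ^ (δ - η)) ^ j := by
    rw [← ENNReal.rpow_add _ _ (by simp) (by simp), ← sub_eq_add_neg, ← ENNReal.rpow_natCast,
      ← ENNReal.rpow_natCast, ← ENNReal.rpow_mul, ← ENNReal.rpow_mul, mul_comm]
  calc ∫⁻ x, a x ^ (2 + δ) ∂μ ≤ ∫⁻ x, ∑' j, 4 * (2⁻¹ ^ j) ^ δ * J j x ^ 2 ∂μ :=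
        lintegral_mono fun x ↦ rpow_le_tsum_of_forall_dyadic_approx (ha x) hδ (haJ · x)
    _ = ∑' j, 4 * (2⁻¹ ^ j) ^ δ * ∫⁻ x, J j x ^ 2 ∂μ := by
        rw [lintegral_tsum fun j ↦ (((hJ j).pow_const 2).const_mul _).aemeasurable]
        exact tsum_congr fun j ↦ lintegral_const_mul _ ((hJ j).pow_const 2)
    _ ≤ ∑' j, 4 * D * (2⁻¹ ^ (δ - η)) ^ j := ENNReal.tsum_le_tsum fun j ↦ by
        refine (mul_le_mul_right (hJD j) _).trans_eq ?_
        rw [← hgeom]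
        ring
    _ = 4 * D * (1 - 2⁻¹ ^ (δ - η))⁻¹ := by rw [ENNReal.tsum_mul_left, ENNReal.tsum_geometric]

/- The level `κ` is chosen at each dyadic scale so that the error `C * κ ^ c` is a small multiple of
that scale; the resulting series is geometric with ratio `2⁻¹ ^ (δ - η / c)`. -/
lemma exists_lintegral_rpow_le_of_forall_approx (μ : Measure X) {C D : ℝ≥0∞} (hC : C ≠ ⊤)
    (hD : D ≠ ⊤) {c : ℝ} (hc : 0 < c) (hδ : 0 < δ) (hη : η < δ * c) :
    ∃ B : ℝ≥0∞, B ≠ ⊤ ∧ ∀ (a : X → ℝ≥0∞) (J : ℝ → X → ℝ≥0∞), (∀ x, a x ≤ 1) →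
      (∀ κ, Measurable (J κ)) →
      (∀ κ, 0 < κ → ∀ x, a x ≤ J κ x + C * ENNReal.ofReal κ ^ c) →
      (∀ κ, 0 < κ → ∫⁻ x, J κ x ^ 2 ∂μ ≤ D * ENNReal.ofReal κ ^ (-η)) →
      ∫⁻ x, a x ^ (2 + δ) ∂μ ≤ B := by
  set q : ℝ≥0∞ := 4⁻¹ * (C + 1)⁻¹
  have hq0 : q ≠ 0 := mul_ne_zero (by simp) (by simp [hC])
  have hqtop : q ≠ ⊤ := ENNReal.mul_ne_top (by simp) (by simp)
  have hCq : C * q ≤ 4⁻¹ := by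
    rw [mul_left_comm]
    refine mul_le_of_le_one_right' ?_
    rw [← div_eq_mul_inv]
    exact ENNReal.div_le_of_le_mul (by rw [one_mul]; exact le_self_add)
  have hscale0 (j : ℕ) : 2⁻¹ ^ j * q ≠ 0 := mul_ne_zero (pow_ne_zero _ (by simp)) hq0
  have hscaletop (j : ℕ) : 2⁻¹ ^ j * q ≠ ⊤ := ENNReal.mul_ne_top (by simp) hqtop
  set κ : ℕ → ℝ := fun j ↦ ((2⁻¹ ^ j * q) ^ (1 / c)).toReal
  have hκtop (j) : (2⁻¹ ^ j * q) ^ (1 / c) ≠ ⊤ :=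
    ENNReal.rpow_ne_top_of_nonneg (by positivity) (hscaletop j)
  have hκ0 (j) : 0 < κ j :=
    ENNReal.toReal_pos (ENNReal.rpow_pos (pos_of_ne_zero (hscale0 j)) (hscaletop j)).ne' (hκtop j)
  have hκrpow (j) (r : ℝ) : ENNReal.ofReal (κ j) ^ r = (2⁻¹ ^ j * q) ^ (r / c) := by
    rw [ENNReal.ofReal_toReal (hκtop j), ← ENNReal.rpow_mul, one_div_mul_eq_div]
  refine ⟨4 * (D * q ^ (-η / c)) * (1 - 2⁻¹ ^ (δ - η / c))⁻¹, ?_, fun a J ha hJ haJ hJD ↦ ?_⟩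
  · have hratio : (2⁻¹ : ℝ≥0∞) ^ (δ - η / c) < 1 :=
      ENNReal.rpow_lt_one (by simp) (sub_pos.2 ((div_lt_iff₀ hc).2 hη))
    have hqrpow := ENNReal.rpow_ne_top_of_ne_zero hq0 hqtop (y := -η / c)
    exact ENNReal.mul_ne_top (by finiteness) (ENNReal.inv_ne_top.2 (tsub_pos_of_lt hratio).ne')
  · refine lintegral_rpow_le_of_forall_dyadic_approx ha hδ (fun j ↦ hJ (κ j)) (fun j x ↦ ?_)
      fun j ↦ ?_
    · refine (haJ (κ j) (hκ0 j) x).trans (add_le_add_right ?_ _)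
      rw [hκrpow, div_self hc.ne', ENNReal.rpow_one, mul_left_comm, pow_add]
      refine mul_le_mul_right (hCq.trans_eq ?_) _
      rw [← ENNReal.inv_pow]
      norm_num
    · refine (hJD (κ j) (hκ0 j)).trans_eq ?_
      rw [hκrpow, ENNReal.mul_rpow_of_ne_top (by simp) hqtop, neg_div]
      ring

end Layering

/-! ### Bounds for normalised functions -/

section Extension

variable {k : ℕ} {F : Type*}

/-- The regrouping of the coordinates `F ⊕ F` into a family of points of the plane, each given as a
function on `Fin 2`. -/
def planePtsEquiv (F : Type*) : (F ⊕ F → ℝ) ≃ᵐ (F → Fin 2 → ℝ) :=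
  (ptsEquiv F).trans (MeasurableEquiv.piCongrRight fun _ ↦ MeasurableEquiv.finTwoArrow.symm)

lemma planePtsEquiv_apply (ζ : F ⊕ F → ℝ) (j : F) :
    planePtsEquiv F ζ j = ![ζ (.inl j), ζ (.inr j)] := by
  ext i
  fin_cases i <;> rfl

lemma planePtsEquiv_preimage_pi_Icc :
    planePtsEquiv F ⁻¹' (univ.pi fun _ ↦ Icc 0 1) = Icc 0 1 := by
  ext ζ
  simp only [mem_preimage, mem_univ_pi, planePtsEquiv_apply, mem_Icc, Pi.le_def,
    Fin.forall_fin_two, Sum.forall, Pi.zero_apply, Pi.one_apply, Matrix.cons_val_zero,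
    Matrix.cons_val_one]
  grind

variable [Fintype F]

lemma measurePreserving_planePtsEquiv :
    MeasurePreserving (planePtsEquiv F) (volume.restrict (Icc 0 1))
      (Measure.pi fun _ ↦ volume.restrict (Icc 0 1)) := by
  have hvol : MeasurePreserving (planePtsEquiv F) :=
    (volume_preserving_pi fun _ : F ↦ (volume_preserving_finTwoArrow ℝ).symm).comp
      (measurePreserving_ptsEquiv F)
  rw [← planePtsEquiv_preimage_pi_Icc, ← Measure.restrict_pi_pi]
  exact hvol.restrict_preimage_emb (planePtsEquiv F).measurableEmbedding _

lemma oscillatoryIntegral_momentMap_pow_card (f : (Fin 2 → ℝ) → ℂ) (x : Fin k ⊕ TriIndex k → ℝ) :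
    oscillatoryIntegral (volume.restrict (Icc 0 1)) (momentMap k) f x ^ Fintype.card F =
      oscillatoryIntegral (volume.restrict (Icc 0 1)) (phaseSum k)
        (fun ζ ↦ ∏ j, f (planePtsEquiv F ζ j)) x := by
  rw [oscillatoryIntegral_pow_card _ _ _ _ F, oscillatoryIntegral, oscillatoryIntegral,
    ← measurePreserving_planePtsEquiv.integral_comp (planePtsEquiv F).measurableEmbedding]
  simp [momentMap, phaseSum, planePtsEquiv_apply]

lemma exists_lintegral_enorm_oscillatoryIntegral_phaseSum_rpow_le
    (hF : Fintype.card (TriIndex k) + critExponent k ≤ 2 * Fintype.card F) {δ : ℝ} (hδ : 0 < δ) :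
    ∃ B : ℝ≥0∞, B ≠ ⊤ ∧ ∀ g : (F ⊕ F → ℝ) → ℂ, Measurable g → (∀ ζ, ‖g ζ‖ ≤ 1) →
      ∫⁻ x, ‖oscillatoryIntegral (volume.restrict (Icc 0 1)) (phaseSum k) g x‖ₑ ^ (2 + δ) ≤ B := by
  have hF' : Fintype.card (TriIndex k) ≤ Fintype.card F := by
    have := card_triIndex_le_critExponent k
    omega
  obtain ⟨c, hc, C, hC, hvol⟩ := exists_volume_diff_nondegenerateSet_le hF'
  have hδc : 0 < δ * c := mul_pos hδ hc
  obtain ⟨D, hD, hsq⟩ := exists_lintegral_sq_enorm_oscillatoryIntegral_nondegenerateSet_le hF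
    (η := min 1 (δ * c / 2)) (by positivity) (min_le_left _ _)
  obtain ⟨B, hB, hlayer⟩ := exists_lintegral_rpow_le_of_forall_approx
    (volume : Measure (Fin k ⊕ TriIndex k → ℝ)) hC hD hc hδ
    ((min_le_right _ _).trans_lt (half_lt_self hδc))
  have hcube : volume (Icc (0 : F ⊕ F → ℝ) 1) = 1 := by simp [Real.volume_Icc_pi]
  refine ⟨B, hB, fun g hg hg1 ↦ hlayer _ (fun κ x ↦
    ‖oscillatoryIntegral (volume.restrict (nondegenerateSet k F κ)) (phaseSum k) g x‖ₑ)
    (fun x ↦ ?_) (fun κ ↦ ?_) (fun κ hκ x ↦ ?_) fun κ hκ ↦ hsq κ hκ g hg hg1⟩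
  · refine (enorm_oscillatoryIntegral_le _ _ hg1 x).trans_eq ?_
    rw [Measure.restrict_apply_univ, hcube]
  · exact (stronglyMeasurable_oscillatoryIntegral _ continuous_phaseSum.measurable hg).enorm
  · exact (enorm_oscillatoryIntegral_le_add_measure_diff continuous_phaseSum.measurable hg hg1
      inter_subset_left (measurableSet_nondegenerateSet κ) measurableSet_Icc (by simp [hcube])
      x).trans (add_le_add_right (hvol κ hκ) _)

lemma exists_lintegral_enorm_oscillatoryIntegral_momentMap_rpow_le {s : ℕ}
    (hs : Fintype.card (TriIndex k) + critExponent k ≤ 2 * s) {p : ℝ} (hp : 2 * s < p) :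
    ∃ B : ℝ≥0∞, B ≠ ⊤ ∧ ∀ f : (Fin 2 → ℝ) → ℂ, Measurable f → (∀ ξ, ‖f ξ‖ ≤ 1) →
      ∫⁻ x, ‖oscillatoryIntegral (volume.restrict (Icc 0 1)) (momentMap k) f x‖ₑ ^ p ≤ B := by
  have hs0 : (0 : ℝ) < s := by
    have := succ_le_critExponent k
    exact_mod_cast (by omega : 0 < s)
  have hexp : s * (2 + (p / s - 2)) = p := by
    field_simp
    ring
  obtain ⟨B, hB, hpow⟩ := exists_lintegral_enorm_oscillatoryIntegral_phaseSum_rpow_le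
    (F := Fin s) (by rwa [Fintype.card_fin]) (sub_pos.2 ((lt_div_iff₀ hs0).2 hp))
  refine ⟨B, hB, fun f hf hf1 ↦ ?_⟩
  have hprod := hpow (fun ζ ↦ ∏ j, f (planePtsEquiv (Fin s) ζ j))
    (Finset.measurable_prod _ fun j _ ↦ hf.comp (by fun_prop)) fun ζ ↦ by
      rw [norm_prod]
      exact Finset.prod_le_one (fun _ _ ↦ norm_nonneg _) fun _ _ ↦ hf1 _
  simpa only [← oscillatoryIntegral_momentMap_pow_card, enorm_pow, Fintype.card_fin,
    ← ENNReal.rpow_natCast, ← ENNReal.rpow_mul, hexp] using hprod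

end Extension

/-! ### Multi-indices -/

section Multiindex

lemma TriIndex.exp_injective : ∀ n, Function.Injective (TriIndex.exp (n := n))
  | 0 => fun t ↦ t.elim
  | n + 1 => by
    rintro (i | t) (i' | t') h
    · exact congrArg Sum.inl (Fin.ext (congrArg Prod.fst h))
    · exact absurd (congrArg Prod.snd h) (Nat.succ_ne_zero _).symm
    · exact absurd (congrArg Prod.snd h) (Nat.succ_ne_zero _)
    · obtain ⟨hfst, hsnd⟩ := Prod.mk.inj h
      exact congrArg Sum.inr (exp_injective n (Prod.ext hfst (Nat.succ_injective hsnd)))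

lemma TriIndex.exists_exp_eq : ∀ {n i j : ℕ}, i + j < n → ∃ t : TriIndex n, t.exp = (i, j)
  | n + 1, i, 0, h => ⟨.inl ⟨i, h⟩, rfl⟩
  | n + 1, i, j + 1, h => by
    obtain ⟨t, ht⟩ := exists_exp_eq (n := n) (i := i) (j := j) (by omega)
    exact ⟨.inr t, by rw [exp, ht]⟩

variable {k : ℕ}

lemma phaseExp_injective (k : ℕ) : Function.Injective (phaseExp k) := by
  have hinl : Function.Injective fun i : Fin k ↦ ((i : ℕ) + 1, 0) := fun i i' h ↦
    Fin.ext (Nat.succ_injective (congrArg Prod.fst h))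
  have hinr : Function.Injective fun t : TriIndex k ↦ (t.exp.1, t.exp.2 + 1) := fun t t' h ↦
    TriIndex.exp_injective k
      (Prod.ext (Prod.mk.inj h).1 (Nat.succ_injective (Prod.mk.inj h).2))
  exact hinl.sumElim hinr fun i t h ↦ Nat.succ_ne_zero _ (congrArg Prod.snd h).symm

lemma phaseExp_mem (m : Fin k ⊕ TriIndex k) :
    1 ≤ (phaseExp k m).1 + (phaseExp k m).2 ∧ (phaseExp k m).1 + (phaseExp k m).2 ≤ k := by
  rcases m with i | t
  · simp only [phaseExp, Sum.elim_inl]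
    omega
  · have := t.exp_add_lt
    simp only [phaseExp, Sum.elim_inr]
    omega

lemma exists_phaseExp_eq {i j : ℕ} (hpos : 1 ≤ i + j) (hle : i + j ≤ k) :
    ∃ m, phaseExp k m = (i, j) := by
  cases j with
  | zero => exact ⟨.inl ⟨i - 1, by omega⟩, Prod.ext (Nat.sub_add_cancel hpos) rfl⟩
  | succ j =>
    obtain ⟨t, ht⟩ := TriIndex.exists_exp_eq (n := k) (i := i) (j := j) (by omega)
    exact ⟨.inr t, by simp [phaseExp, ht]⟩

/-- The two indexings of the monomials of degree between `1` and `k` agree. -/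
def idxEquiv (k : ℕ) : Fin k ⊕ TriIndex k ≃ Idx k :=
  Equiv.ofBijective (fun m ↦ ⟨(⟨(phaseExp k m).1, by have := phaseExp_mem m; omega⟩,
    ⟨(phaseExp k m).2, by have := phaseExp_mem m; omega⟩), phaseExp_mem m⟩) <| by
    refine ⟨fun m m' h ↦ phaseExp_injective k (Prod.ext ?_ ?_), fun β ↦ ?_⟩
    · exact congrArg (fun β : Idx k ↦ (β.1.1 : ℕ)) h
    · exact congrArg (fun β : Idx k ↦ (β.1.2 : ℕ)) h
    · obtain ⟨m, hm⟩ := exists_phaseExp_eq β.2.1 β.2.2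
      exact ⟨m, Subtype.ext (Prod.ext (Fin.ext (congrArg Prod.fst hm))
        (Fin.ext (congrArg Prod.snd hm)))⟩

lemma Pphase_piCongrLeft_idxEquiv (x : Fin k ⊕ TriIndex k → ℝ) (ξ : Fin 2 → ℝ) :
    Pphase k (MeasurableEquiv.piCongrLeft (fun _ ↦ ℝ) (idxEquiv k) x) ξ =
      ∑ m, x m * momentMap k ξ m := by
  rw [Pphase, ← (idxEquiv k).sum_comp]
  refine Finset.sum_congr rfl fun m _ ↦ ?_
  rw [mul_assoc]
  exact congrArg (· * _) (Equiv.piCongrLeft_apply_apply (fun _ ↦ ℝ) (idxEquiv k) x m)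

lemma lintegral_enorm_Eext_rpow (f : (Fin 2 → ℝ) → ℂ) (p : ℝ) :
    ∫⁻ x, ‖Eext k f x‖ₑ ^ p =
      ∫⁻ x, ‖oscillatoryIntegral (volume.restrict (Icc 0 1)) (momentMap k) f x‖ₑ ^ p := by
  rw [← (volume_measurePreserving_piCongrLeft (fun _ ↦ ℝ) (idxEquiv k)).lintegral_comp_emb
    (MeasurableEquiv.measurableEmbedding _)]
  simp only [Eext, Pphase_piCongrLeft_idxEquiv, oscillatoryIntegral]

lemma card_triIndex_add_critExponent (k : ℕ) :
    Fintype.card (TriIndex k) + critExponent k = (k + 2).choose 3 + 2 := by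
  rw [TriIndex.card_eq_choose, critExponent, Nat.choose_succ_succ' (k + 1) 2, add_assoc]

lemma cast_choose_three (k : ℕ) : ((k + 2).choose 3 : ℝ) = k * (k + 1) * (k + 2) / 6 := by
  have hchoose : k * ((k + 1) * (k + 2)) = 6 * (k + 2).choose 3 := by
    simpa [Nat.descFactorial, Nat.factorial]
      using Nat.descFactorial_eq_factorial_mul_choose (k + 2) 3
  rw [eq_div_iff (by norm_num), mul_assoc (k : ℝ), mul_comm]
  exact_mod_cast hchoose.symm

end Multiindex

/-! ### Normalisation -/

lemma exists_ae_eq_const_mul_of_eLpNorm_top {X : Type*} [MeasurableSpace X] {μ : Measure X}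
    {f : X → ℂ} (hf : Measurable f) (hfin : eLpNorm f ⊤ μ ≠ ⊤) :
    ∃ g : X → ℂ, Measurable g ∧ (∀ x, ‖g x‖ ≤ 1) ∧
      ∀ᵐ x ∂μ, f x = ((eLpNorm f ⊤ μ).toReal : ℂ) * g x := by
  set r := (eLpNorm f ⊤ μ).toReal with hr
  have hr0 : 0 ≤ r := ENNReal.toReal_nonneg
  refine ⟨fun x ↦ if ‖f x‖ ≤ r then f x / r else 0, Measurable.ite
    (measurableSet_le hf.norm measurable_const) (hf.div_const _) measurable_const, fun x ↦ ?_, ?_⟩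
  · dsimp only
    split_ifs with hx
    · rw [norm_div, Complex.norm_real, norm_of_nonneg hr0]
      exact div_le_one_of_le₀ hx hr0
    · simp
  · filter_upwards [ae_le_eLpNormEssSup (f := f) (μ := μ)] with x hx
    have hle : ‖f x‖ ≤ r := by
      rw [hr, eLpNorm_exponent_top, ← toReal_enorm]
      exact ENNReal.toReal_mono (by rwa [← eLpNorm_exponent_top]) hx
    rw [if_pos hle]
    rcases eq_or_ne r 0 with h0 | h0
    · rw [h0] at hle ⊢
      simp [norm_le_zero_iff.1 hle]
    · rw [mul_div_cancel₀ _ (Complex.ofReal_ne_zero.2 h0)]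

lemma Eext_congr_const_mul {k : ℕ} {f g : (Fin 2 → ℝ) → ℂ} {c : ℂ}
    (h : ∀ᵐ ξ ∂volume.restrict (Icc (0 : Fin 2 → ℝ) 1), f ξ = c * g ξ) :
    Eext k f = c • Eext k g := by
  ext x
  simp only [Eext, Pi.smul_apply, smul_eq_mul]
  rw [← integral_const_mul]
  refine integral_congr_ae ?_
  filter_upwards [h] with ξ hξ
  rw [hξ, mul_assoc]

lemma eLpNorm_Eext_le_of_forall_norm_le_one {k : ℕ} {q C : ℝ≥0∞} (hC : C ≠ 0)
    (h : ∀ f : (Fin 2 → ℝ) → ℂ, Measurable f → (∀ ξ, ‖f ξ‖ ≤ 1) → eLpNorm (Eext k f) q volume ≤ C)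
    {f : (Fin 2 → ℝ) → ℂ} (hf : Measurable f) :
    eLpNorm (Eext k f) q volume ≤ C * eLpNorm f ⊤ (volume.restrict (Icc 0 1)) := by
  by_cases htop : eLpNorm f ⊤ (volume.restrict (Icc 0 1)) = ⊤
  · rw [htop, ENNReal.mul_top hC]
    exact le_top
  obtain ⟨g, hg, hg1, hfg⟩ := exists_ae_eq_const_mul_of_eLpNorm_top hf htop
  rw [Eext_congr_const_mul hfg, eLpNorm_const_smul, mul_comm]
  refine mul_le_mul' (h g hg hg1) (le_of_eq ?_)
  rw [← ofReal_norm, Complex.norm_real, norm_of_nonneg ENNReal.toReal_nonneg,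
    ENNReal.ofReal_toReal htop]

lemma exists_eLpNorm_Eext_le {k s : ℕ} (hs : (k + 2).choose 3 + 2 ≤ 2 * s) {p : ℝ}
    (hp : 2 * s < p) :
    ∃ C : ℝ≥0∞, C ≠ ⊤ ∧ ∀ f : (Fin 2 → ℝ) → ℂ, Measurable f → (∀ ξ, ‖f ξ‖ ≤ 1) →
      eLpNorm (Eext k f) (ENNReal.ofReal p) volume ≤ C := by
  have hp0 : 0 < p := (by positivity : (0 : ℝ) ≤ 2 * s).trans_lt hp
  obtain ⟨B, hB, hosc⟩ := exists_lintegral_enorm_oscillatoryIntegral_momentMap_rpow_le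
    ((card_triIndex_add_critExponent k).trans_le hs) hp
  refine ⟨B ^ (1 / p), ENNReal.rpow_ne_top_of_nonneg (by positivity) hB, fun f hf hf1 ↦ ?_⟩
  rw [eLpNorm_eq_lintegral_rpow_enorm_toReal (by simpa using hp0) ENNReal.ofReal_ne_top,
    ENNReal.toReal_ofReal hp0.le, lintegral_enorm_Eext_rpow]
  exact ENNReal.rpow_le_rpow (hosc f hf hf1) (by positivity)

/-- **Corollary 1.4**, positive part: for every `k ≥ 2` and every real `p > p̄_k`,
where `p̄_k` is the smallest even integer `≥ q_k = k(k+1)(k+2)/6 + 2`, one has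
`‖E_k f‖_{L^p(ℝ^N)} ≤ C(k,p) ‖f‖_{L^∞([0,1]²)}` for every `f ∈ L^∞([0,1]²)`. -/
theorem extension_estimate (k : ℕ) (hk : 2 ≤ k)
    (pbar : ℕ) (hpbarEven : Even pbar)
    (hpbarGe : (k : ℝ) * (k + 1) * (k + 2) / 6 + 2 ≤ (pbar : ℝ))
    (hpbarMin : ∀ m : ℕ, Even m → (k : ℝ) * (k + 1) * (k + 2) / 6 + 2 ≤ (m : ℝ) → pbar ≤ m) :
    ∀ p : ℝ, (pbar : ℝ) < p →
      ∃ C : ℝ≥0∞, C < ⊤ ∧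
        ∀ f : (Fin 2 → ℝ) → ℂ, Measurable f →
          eLpNorm (Eext k f) (ENNReal.ofReal p) volume ≤
            C * eLpNorm f ⊤ (volume.restrict (Icc (0 : Fin 2 → ℝ) 1)) := by
  intro p hp
  obtain ⟨s, rfl⟩ := hpbarEven.exists_two_nsmul
  rw [← cast_choose_three] at hpbarGe
  obtain ⟨C, hC, hnorm⟩ := exists_eLpNorm_Eext_le (by exact_mod_cast hpbarGe) (by exact_mod_cast hp)
  exact ⟨C + 1, by finiteness, fun f hf ↦ eLpNorm_Eext_le_of_forall_norm_le_one (by simp)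
    (fun g hg hg1 ↦ (hnorm g hg hg1).trans le_self_add) hf⟩
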